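/- arXiv:1011.1544 — 4 statements merged into one kernel-verified Lean document; each statement's English description precedes it below -/
import Mathlib

section
/- Let U ⊆ ℝ^m be a connected and simply connected open set, n ≥ 1, and let A_1,…,A_m : U → ℝ^{n×n} be smooth matrix-valued maps such that A_k(q) is skew-symmetric for every q ∈ U and k, and such that ∂_k A_l − ∂_l A_k = A_l A_k − A_k A_l holds on U for all k, l ∈ {1,…,m} (the flatness/integrability condition). Then for every p_0 ∈ U and every F_0 ∈ SO(n) there exists a unique smooth map F : U → SO(n) with F(p_0) = F_0 and ∂_k F = F A_k on U for all k = 1,…,m. -/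
open scoped Matrix

noncomputable section

/-- Partial derivative of a scalar function in the `k`-th coordinate direction. -/
def pdr {m : ℕ} (k : Fin m) (g : (Fin m → ℝ) → ℝ) : (Fin m → ℝ) → ℝ :=
  fun q => fderiv ℝ g q (Pi.single k 1)

/-- Entrywise partial derivative of a matrix-valued map. -/
def pdM {m N : ℕ} (k : Fin m) (A : (Fin m → ℝ) → Matrix (Fin N) (Fin N) ℝ) :
    (Fin m → ℝ) → Matrix (Fin N) (Fin N) ℝ :=
  fun q => Matrix.of fun i j => pdr k (fun x => A x i j) q

section LocalFrame
open Set Metric Filter Topology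
open scoped NNReal

variable {E 𝔸 : Type*} [NormedAddCommGroup E] [NormedSpace ℝ E]
  [NormedRing 𝔸] [NormedAlgebra ℝ 𝔸]

/-- Linear ODE on the unit interval with small coefficient. -/
lemma exists_linear_ode [CompleteSpace 𝔸] (a : ℝ → 𝔸) (ha : ContinuousOn a (Icc 0 1))
    (hb : ∀ t ∈ Icc (0:ℝ) 1, ‖a t‖ ≤ 1 / 2) :
    ∃ f : ℝ → 𝔸, f 0 = 1 ∧ ∀ t ∈ Icc (0:ℝ) 1, HasDerivWithinAt f (f t * a t) (Icc 0 1) t := by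
  have h : IsPicardLindelof (fun t (x : 𝔸) => x * a t) (⟨0, by simp⟩ : Icc (0:ℝ) 1) (1 : 𝔸)
      ‖(1:𝔸)‖₊ 0 ‖(1:𝔸)‖₊ 1 := by
    constructor
    · intro t ht
      refine LipschitzOnWith.of_dist_le_mul fun x _ y _ => ?_
      rw [dist_eq_norm, dist_eq_norm, ← sub_mul]
      refine (norm_mul_le _ _).trans ?_
      rw [mul_comm]
      exact mul_le_mul_of_nonneg_right ((hb t ht).trans (by norm_num)) (norm_nonneg _)
    · intro x _
      exact continuousOn_const.mul ha
    · intro t ht x hx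
      rw [mem_closedBall, dist_eq_norm] at hx
      have h1 : ‖x‖ ≤ ‖x - 1‖ + ‖(1:𝔸)‖ := by simpa using norm_add_le (x - 1) 1
      simp only [coe_nnnorm] at hx ⊢
      calc ‖x * a t‖ ≤ ‖x‖ * ‖a t‖ := norm_mul_le _ _
        _ ≤ (‖(1:𝔸)‖ + ‖(1:𝔸)‖) * (1/2) := by
          gcongr
          · linarith
          · exact hb t ht
        _ = ‖(1:𝔸)‖ := by ring
    · simp
  exact h.exists_eq_forall_mem_Icc_hasDerivWithinAt₀

lemma algebra_identity (a b oh S : 𝔸) (t : ℝ) (f dyh dhy W : 𝔸)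
    (hflat : dyh - dhy = oh * a - a * oh)
    (hW : W = a + oh + t • dhy + S) (hb : b = W - a) :
    (f * a) * (1 + t • oh) + f * (oh + t • dyh) - (f * (1 + t • oh)) * W
      = - (f * (S + t • (oh * b))) := by
  have h : dyh = dhy + (oh * a - a * oh) := by rw [← hflat]; abel
  subst hb
  rw [h]
  nth_rewrite 1 [show f * (1 + t • oh) * W = f * W + f * (t • (oh * W)) by
    simp [mul_add, add_mul, mul_assoc]]
  nth_rewrite 1 [hW]
  simp only [mul_add, mul_sub, smul_add, smul_sub, mul_one, mul_smul_comm, mul_assoc]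
  abel

/-- Local frames by radial integration. -/
lemma exists_local_frame_quant [CompleteSpace 𝔸] (q : E) (r K : ℝ) (hr : 0 < r) (hr1 : r ≤ 1) (hK : 0 ≤ K)
    (hKr : K * r ≤ 1 / 2) (ω : E → E →L[ℝ] 𝔸) (Ω : E → E →L[ℝ] E →L[ℝ] 𝔸)
    (hω : ∀ z ∈ ball q r, HasFDerivAt ω (Ω z) z)
    (hb : ∀ z ∈ ball q r, ‖ω z‖ ≤ K) (hb' : ∀ z ∈ ball q r, ‖Ω z‖ ≤ K)
    (hlip : ∀ z ∈ ball q r, ∀ z' ∈ ball q r, ‖ω z' - ω z‖ ≤ K * ‖z' - z‖)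
    (hrem : ∀ z ∈ ball q r, ∀ z' ∈ ball q r,
      ‖ω z' - ω z - Ω z (z' - z)‖ ≤ K * ‖z' - z‖ ^ 2)
    (hflat : ∀ z ∈ ball q r, ∀ u v, Ω z u v - Ω z v u = ω z v * ω z u - ω z u * ω z v) :
    ∃ F : E → 𝔸, F q = 1 ∧
      ∀ x ∈ ball q r, HasFDerivAt F ((ContinuousLinearMap.mul ℝ 𝔸 (F x)).comp (ω x)) x := by
  have hmem : ∀ x ∈ ball q r, ∀ t ∈ Icc (0:ℝ) 1, q + t • (x - q) ∈ ball q r := by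
    intro x hx t ht
    rw [mem_ball_iff_norm] at hx ⊢
    rw [add_sub_cancel_left, norm_smul, Real.norm_of_nonneg ht.1]
    nlinarith [norm_nonneg (x - q), ht.2]
  have hc : ∀ x : E, Continuous fun t : ℝ => q + t • (x - q) := fun x => by fun_prop
  have hωc : ContinuousOn ω (ball q r) := fun z hz => (hω z hz).continuousAt.continuousWithinAt
  have hcoef : ∀ x ∈ ball q r, ∀ t ∈ Icc (0:ℝ) 1, ‖ω (q + t • (x - q)) (x - q)‖ ≤ 1 / 2 := by
    intro x hx t ht
    have h1 := (ω (q + t • (x - q))).le_opNorm (x - q)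
    have h2 := hb _ (hmem x hx t ht)
    have h3 : ‖x - q‖ ≤ r := (mem_ball_iff_norm.1 hx).le
    calc _ ≤ _ := h1
      _ ≤ K * r := by gcongr
      _ ≤ _ := hKr
  have hsol : ∀ x : E, ∃ f : ℝ → 𝔸, x ∈ ball q r → f 0 = 1 ∧ ∀ t ∈ Icc (0:ℝ) 1,
      HasDerivWithinAt f (f t * ω (q + t • (x - q)) (x - q)) (Icc 0 1) t := by
    intro x
    by_cases hx : x ∈ ball q r
    · obtain ⟨f, hf⟩ := exists_linear_ode (fun t => ω (q + t • (x - q)) (x - q))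
        ((hωc.comp (hc x).continuousOn (fun t ht => hmem x hx t ht)).clm_apply continuousOn_const)
        (hcoef x hx)
      exact ⟨f, fun _ => hf⟩
    · exact ⟨0, fun h => absurd h hx⟩
  choose f hf using hsol
  have hfc : ∀ x ∈ ball q r, ContinuousOn (f x) (Icc 0 1) :=
    fun x hx t ht => ((hf x hx).2 t ht).continuousWithinAt
  have hIci : ∀ {g : ℝ → 𝔸} {g' : 𝔸} {t : ℝ}, t ∈ Ico (0:ℝ) 1 →
      HasDerivWithinAt g g' (Icc 0 1) t → HasDerivWithinAt g g' (Ici t) t := by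
    intro g g' t ht h
    exact h.mono_of_mem_nhdsWithin (mem_of_superset (Icc_mem_nhdsGE ht.2)
      (Icc_subset_Icc_left ht.1))
  have hq : q ∈ ball q r := mem_ball_self hr
  refine ⟨fun x => f x 1, ?_, ?_⟩
  · -- at the centre the coefficient vanishes
    have h0 : ∀ t ∈ Icc (0:ℝ) 1, ‖f q t - f q 0‖ ≤ 0 * (t - 0) := by
      refine norm_image_sub_le_of_norm_deriv_le_segment' (f' := fun _ => 0) (fun t ht => ?_) (by simp)
      simpa using (hf q hq).2 t ht
    have := h0 1 (by simp)
    rw [zero_mul, norm_le_zero_iff, sub_eq_zero, (hf q hq).1] at this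
    exact this
  intro x hx
  obtain ⟨B, hB⟩ := isCompact_Icc.exists_bound_of_continuousOn (hfc x hx)
  have hB0 : 0 ≤ B := (norm_nonneg _).trans (hB 0 (by simp))
  set C : ℝ := B * (3 * K + 2 * K ^ 2) with hC
  have hC0 : 0 ≤ C := by positivity
  -- main estimate
  have key : ∀ h : E, x + h ∈ ball q r → ‖h‖ ≤ 1 →
      ‖f (x + h) 1 - f x 1 - f x 1 * ω x h‖ ≤ C * (Real.exp 1 - 1) * ‖h‖ ^ 2 := by
    intro h hxh hh
    set y := x - q with hy
    have hy1 : ‖y‖ ≤ 1 := (mem_ball_iff_norm.1 hx).le.trans hr1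
    set c : ℝ → E := fun t => q + t • y with hcdef
    have hcmem : ∀ t ∈ Icc (0:ℝ) 1, c t ∈ ball q r := hmem x hx
    have hc' : ∀ t : ℝ, q + t • (x + h - q) = c t + t • h := by
      intro t; simp only [hcdef, hy]; module
    have hyh : x + h - q = y + h := by rw [hy]; abel
    let φ : ℝ → 𝔸 := fun t => f x t * (1 + t • ω (c t) h)
    let φ' : ℝ → 𝔸 := fun t => (f x t * ω (c t) y) * (1 + t • ω (c t) h) +
      f x t * (ω (c t) h + t • Ω (c t) y h)
    have hφ : ∀ t ∈ Icc (0:ℝ) 1, HasDerivWithinAt φ (φ' t) (Icc 0 1) t := by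
      intro t ht
      have h1 := (hf x hx).2 t ht
      have hcd : HasDerivAt c y t := by
        have := ((hasDerivAt_id t).smul_const y).const_add q
        rw [one_smul] at this
        exact this
      have h2 : HasDerivAt (fun t => ω (c t)) (Ω (c t) y) t :=
        (hω _ (hcmem t ht)).comp_hasDerivAt t hcd
      have h3 : HasDerivAt (fun t => ω (c t) h) (Ω (c t) y h) t := by
        simpa using h2.clm_apply (hasDerivAt_const t h)
      have h4 : HasDerivAt (fun t : ℝ => 1 + t • ω (c t) h) (ω (c t) h + t • Ω (c t) y h) t := by
        have := ((hasDerivAt_id t).smul h3).const_add (1 : 𝔸)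
        refine this.congr_deriv ?_
        simp [add_comm]
      exact h1.mul h4.hasDerivWithinAt
    let v : ℝ → 𝔸 → 𝔸 := fun t g => g * ω (q + t • (x + h - q)) (x + h - q)
    have hmain := dist_le_of_approx_trajectories_ODE_of_mem (v := v) (s := fun _ => univ)
      (K := 1) (f := φ) (f' := φ') (g := f (x + h))
      (g' := fun t => v t (f (x + h) t)) (a := 0) (b := 1) (εf := C * ‖h‖ ^ 2) (εg := 0) (δ := 0)
      ?_ (fun t ht => (hφ t ht).continuousWithinAt)
      (fun t ht => hIci ht (hφ t (Ico_subset_Icc_self ht))) ?_ (fun _ _ => mem_univ _)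
      (hfc _ hxh) (fun t ht => hIci ht ((hf _ hxh).2 t (Ico_subset_Icc_self ht)))
      (fun _ _ => by simp) (fun _ _ => mem_univ _) ?_ 1 (by simp)
    · rw [gronwallBound_of_K_ne_0 (by simp)] at hmain
      rw [dist_comm, dist_eq_norm] at hmain
      have e1 : φ 1 = f x 1 + f x 1 * ω x h := by
        simp [φ, hcdef, hy, mul_add]
      rw [e1, ← sub_sub] at hmain
      refine hmain.trans (le_of_eq ?_)
      simp
      ring
    · intro t ht
      refine LipschitzOnWith.of_dist_le_mul fun a _ b _ => ?_
      simp only [v]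
      rw [dist_eq_norm, dist_eq_norm, ← sub_mul]
      refine (norm_mul_le _ _).trans ?_
      rw [mul_comm]
      exact mul_le_mul_of_nonneg_right
        ((hcoef _ hxh t (Ico_subset_Icc_self ht)).trans (by norm_num)) (norm_nonneg _)
    · intro t ht'
      have ht := Ico_subset_Icc_self ht'
      have hz := hcmem t ht
      have hz' : c t + t • h ∈ ball q r := by rw [← hc']; exact hmem _ hxh t ht
      have hth : ‖t • h‖ ≤ ‖h‖ := by
        rw [norm_smul, Real.norm_of_nonneg ht.1]
        exact mul_le_of_le_one_left (norm_nonneg _) ht.2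
      set R : E →L[ℝ] 𝔸 := ω (c t + t • h) - ω (c t) - Ω (c t) (t • h) with hR
      have hRb : ‖R‖ ≤ K * ‖h‖ ^ 2 := by
        have := hrem _ hz _ hz'
        rw [add_sub_cancel_left] at this
        refine this.trans ?_
        gcongr
      have hLb : ‖ω (c t + t • h) - ω (c t)‖ ≤ K * ‖h‖ := by
        have := hlip _ hz _ hz'
        rw [add_sub_cancel_left] at this
        refine this.trans ?_
        gcongr
      set S : 𝔸 := t • Ω (c t) h h + R (y + h) with hS
      have hSb : ‖S‖ ≤ 3 * K * ‖h‖ ^ 2 := by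
        have s1 : ‖t • Ω (c t) h h‖ ≤ K * ‖h‖ ^ 2 := by
          rw [norm_smul, Real.norm_of_nonneg ht.1]
          have := (Ω (c t)).le_opNorm₂ h h
          have h2 := hb' _ hz
          calc t * ‖Ω (c t) h h‖ ≤ 1 * (‖Ω (c t)‖ * ‖h‖ * ‖h‖) := by
                gcongr; exact ht.2
            _ ≤ 1 * (K * ‖h‖ * ‖h‖) := by gcongr
            _ = _ := by ring
        have s2 : ‖R (y + h)‖ ≤ K * ‖h‖ ^ 2 * 2 := by
          refine (R.le_opNorm _).trans ?_
          gcongr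
          exact (norm_add_le _ _).trans (by linarith)
        exact (norm_add_le _ _).trans (by linarith)
      set b : 𝔸 := ω (c t + t • h) (y + h) - ω (c t) y with hbdef
      have hbb : ‖b‖ ≤ 2 * K * ‖h‖ := by
        have e : b = ω (c t + t • h) h + (ω (c t + t • h) - ω (c t)) y := by
          simp [hbdef]; abel
        have s1 : ‖ω (c t + t • h) h‖ ≤ K * ‖h‖ :=
          (ContinuousLinearMap.le_opNorm _ _).trans (by gcongr; exact hb _ hz')
        have s2 : ‖(ω (c t + t • h) - ω (c t)) y‖ ≤ K * ‖h‖ * 1 :=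
          (ContinuousLinearMap.le_opNorm _ _).trans (by gcongr)
        rw [e]
        exact (norm_add_le _ _).trans (by linarith)
      have hohb : ‖ω (c t) h‖ ≤ K * ‖h‖ :=
        (ContinuousLinearMap.le_opNorm _ _).trans (by gcongr; exact hb _ hz)
      have hid : φ' t - v t (φ t) = -(f x t * (S + t • (ω (c t) h * b))) := by
        simp only [φ', v, φ]
        rw [hc', hyh]
        refine algebra_identity (ω (c t) y) b (ω (c t) h) S t (f x t) (Ω (c t) y h) (Ω (c t) h y) _
          (hflat _ hz y h) ?_ rfl
        simp [hS, hR]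
        abel
      rw [dist_eq_norm, hid, norm_neg]
      calc ‖f x t * (S + t • (ω (c t) h * b))‖
          ≤ ‖f x t‖ * ‖S + t • (ω (c t) h * b)‖ := norm_mul_le _ _
        _ ≤ B * (3 * K * ‖h‖ ^ 2 + 1 * ((K * ‖h‖) * (2 * K * ‖h‖))) := by
          gcongr
          · exact hB t ht
          · refine (norm_add_le _ _).trans ?_
            gcongr
            rw [norm_smul, Real.norm_of_nonneg ht.1]
            gcongr
            · exact ht.2
            · exact (norm_mul_le _ _).trans (by gcongr)
        _ = C * ‖h‖ ^ 2 := by rw [hC]; ring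
    · simp [φ, (hf x hx).1, (hf _ hxh).1]
  rw [hasFDerivAt_iff_isLittleO_nhds_zero]
  refine Asymptotics.IsBigO.trans_isLittleO (g := fun h : E => ‖h‖ ^ 2) ?_ ?_
  · refine Asymptotics.IsBigO.of_bound (C * (Real.exp 1 - 1)) ?_
    have e1 : ∀ᶠ h : E in 𝓝 0, x + h ∈ ball q r := by
      have : Tendsto (fun h : E => x + h) (𝓝 0) (𝓝 x) := by
        have := (continuous_const_add x).tendsto (0 : E)
        rwa [add_zero] at this
      exact this (isOpen_ball.mem_nhds hx)
    have e2 : ∀ᶠ h : E in 𝓝 0, ‖h‖ ≤ 1 := by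
      filter_upwards [closedBall_mem_nhds (0:E) one_pos] with h hh
      simpa using hh
    filter_upwards [e1, e2] with h h1 h2
    simpa using key h h1 h2
  · simpa using (Asymptotics.isLittleO_norm_pow_id (E' := E) one_lt_two)

/-- Local frames. -/
lemma exists_local_frame [CompleteSpace 𝔸] (U : Set E) (hU : IsOpen U) (q : E) (hq : q ∈ U)
    (ω : E → E →L[ℝ] 𝔸) (hω : ContDiffOn ℝ 2 ω U)
    (hflat : ∀ z ∈ U, ∀ u v, fderiv ℝ ω z u v - fderiv ℝ ω z v u = ω z v * ω z u - ω z u * ω z v) :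
    ∃ r > 0, ball q r ⊆ U ∧ ∃ F : E → 𝔸, F q = 1 ∧
      ∀ x ∈ ball q r, HasFDerivAt F ((ContinuousLinearMap.mul ℝ 𝔸 (F x)).comp (ω x)) x := by
  have hqU := hU.mem_nhds hq
  have hΩ : ContDiffAt ℝ 1 (fderiv ℝ ω) q :=
    ((hω.contDiffAt hqU).fderiv_right (m := 1) (by norm_num))
  obtain ⟨L, s, hs, hL⟩ := hΩ.exists_lipschitzOnWith
  have c1 := Filter.Tendsto.eventually_lt_const (lt_add_one ‖ω q‖)
    ((hω.contDiffAt hqU).continuousAt.norm)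
  obtain ⟨r₀, hr₀, hball⟩ := Metric.mem_nhds_iff.1 (inter_mem (inter_mem hqU hs) c1)
  set K : ℝ := (‖ω q‖ + 1) + (‖fderiv ℝ ω q‖ + 1) + L with hK
  have hKpos : 0 < K := by positivity
  have hK1 : ‖ω q‖ + 1 ≤ K := by rw [hK]; linarith [norm_nonneg (fderiv ℝ ω q), L.2]
  have hK2 : ‖fderiv ℝ ω q‖ + 1 ≤ K := by rw [hK]; linarith [norm_nonneg (ω q), L.2]
  have hK3 : (L:ℝ) ≤ K := by rw [hK]; linarith [norm_nonneg (ω q), norm_nonneg (fderiv ℝ ω q)]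
  set r := min r₀ (min 1 (1 / (2 * K))) with hr
  have hrpos : 0 < r := by positivity
  have hsub : ball q r ⊆ ball q r₀ := ball_subset_ball (min_le_left _ _)
  have hsubU : ball q r ⊆ U := fun z hz => (hball (hsub hz)).1.1
  have hder : ∀ z ∈ ball q r, HasFDerivAt ω (fderiv ℝ ω z) z := fun z hz =>
    ((hω.contDiffAt (hU.mem_nhds (hsubU hz))).differentiableAt (by norm_num)).hasFDerivAt
  have hb' : ∀ z ∈ ball q r, ‖fderiv ℝ ω z‖ ≤ K := by
    intro z hz
    have h1 := hL.norm_sub_le (hball (hsub hz)).1.2 (mem_of_mem_nhds hs)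
    have h2 : ‖z - q‖ ≤ 1 := by
      rw [← dist_eq_norm]
      exact (le_of_lt hz).trans ((min_le_right _ _).trans (min_le_left _ _))
    have h3 : (L:ℝ) * ‖z - q‖ ≤ L := mul_le_of_le_one_right L.2 h2
    have h4 := norm_le_norm_add_norm_sub' (fderiv ℝ ω z) (fderiv ℝ ω q)
    rw [hK]
    linarith [norm_nonneg (ω q)]
  refine ⟨r, hrpos, hsubU, exists_local_frame_quant q r K hrpos
    ((min_le_right _ _).trans (min_le_left _ _)) hKpos.le ?_ ω (fderiv ℝ ω) hder
    (fun z hz => (le_of_lt (hball (hsub hz)).2).trans hK1) hb' ?_ ?_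
    (fun z hz => hflat z (hsubU hz))⟩
  · have : r ≤ 1 / (2 * K) := (min_le_right _ _).trans (min_le_right _ _)
    calc K * r ≤ K * (1 / (2 * K)) := by gcongr
      _ = 1 / 2 := by field_simp
  · intro z hz z' hz'
    exact (convex_ball q r).norm_image_sub_le_of_norm_hasFDerivWithin_le
      (fun w hw => (hder w hw).hasFDerivWithinAt) hb' hz hz'
  · intro z hz z' hz'
    have hseg : segment ℝ z z' ⊆ ball q r := (convex_ball q r).segment_subset hz hz'
    have := (convex_segment z z').norm_image_sub_le_of_norm_hasFDerivWithin_le'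
      (f := ω) (f' := fderiv ℝ ω) (φ := fderiv ℝ ω z) (C := K * ‖z' - z‖)
      (fun w hw => (hder w (hseg hw)).hasFDerivWithinAt) ?_ (left_mem_segment ℝ z z')
      (right_mem_segment ℝ z z')
    · refine this.trans (le_of_eq (by ring))
    · intro w hw
      have h1 := hL.norm_sub_le (hball (hsub (hseg hw))).1.2 (hball (hsub hz)).1.2
      refine h1.trans ?_
      gcongr
      obtain ⟨t, ht, rfl⟩ := (segment_eq_image' ℝ z z').subset hw
      rw [add_sub_cancel_left, norm_smul, Real.norm_of_nonneg ht.1]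
      exact mul_le_of_le_one_left (norm_nonneg _) ht.2

end LocalFrame

section Frames
open Set Metric Filter Topology

variable {m n : ℕ}

/-- `F` solves `dF = F A` at `q`, entrywise. -/
def SolAt (A : Fin m → (Fin m → ℝ) → Matrix (Fin n) (Fin n) ℝ)
    (F : (Fin m → ℝ) → Matrix (Fin n) (Fin n) ℝ) (q : Fin m → ℝ) : Prop :=
  ∀ i j, HasFDerivAt (fun x => F x i j)
    (∑ k, (F q * A k q) i j • (ContinuousLinearMap.proj k : (Fin m → ℝ) →L[ℝ] ℝ)) q

lemma clm_eq_sum_proj (L : (Fin m → ℝ) →L[ℝ] ℝ) :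
    L = ∑ k, L (Pi.single k 1) • (ContinuousLinearMap.proj k : (Fin m → ℝ) →L[ℝ] ℝ) := by
  ext v
  conv_lhs => rw [pi_eq_sum_univ' v]
  simp [mul_comm]

lemma SolAt.of_pdM {A : Fin m → (Fin m → ℝ) → Matrix (Fin n) (Fin n) ℝ}
    {F : (Fin m → ℝ) → Matrix (Fin n) (Fin n) ℝ} {q : Fin m → ℝ}
    (hF : ∀ i j, DifferentiableAt ℝ (fun x => F x i j) q) (h : ∀ k, pdM k F q = F q * A k q) :
    SolAt A F q := by
  intro i j
  refine (hF i j).hasFDerivAt.congr_fderiv ?_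
  rw [clm_eq_sum_proj (fderiv ℝ (fun x => F x i j) q)]
  refine Finset.sum_congr rfl fun k _ => ?_
  rw [← h k]
  rfl

lemma SolAt.pdM_eq {A : Fin m → (Fin m → ℝ) → Matrix (Fin n) (Fin n) ℝ}
    {F : (Fin m → ℝ) → Matrix (Fin n) (Fin n) ℝ} {q : Fin m → ℝ}
    (h : SolAt A F q) (k : Fin m) : pdM k F q = F q * A k q := by
  ext i j
  simp only [pdM, pdr, Matrix.of_apply]
  rw [(h i j).fderiv]
  simp [Pi.single_apply]

lemma SolAt.const_mul {A : Fin m → (Fin m → ℝ) → Matrix (Fin n) (Fin n) ℝ}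
    {F : (Fin m → ℝ) → Matrix (Fin n) (Fin n) ℝ} {q : Fin m → ℝ}
    (h : SolAt A F q) (C : Matrix (Fin n) (Fin n) ℝ) : SolAt A (fun x => C * F x) q := by
  intro i j
  have h1 : HasFDerivAt (fun x => ∑ l, C i l * F x l j) _ q :=
    HasFDerivAt.fun_sum fun l _ => (h l j).const_mul (C i l)
  have e0 : (fun x => (C * F x) i j) = fun x => ∑ l, C i l * F x l j :=
    funext fun x => Matrix.mul_apply
  rw [e0]
  refine h1.congr_fderiv ?_
  ext v
  simp only [sum_apply, smul_apply, smul_eq_mul,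
    ContinuousLinearMap.proj_apply, Finset.mul_sum]
  rw [Finset.sum_comm]
  refine Finset.sum_congr rfl fun k _ => ?_
  rw [Matrix.mul_assoc, Matrix.mul_apply, Finset.sum_mul]
  exact Finset.sum_congr rfl fun l _ => by ring

lemma sol_mul_transpose_const {A : Fin m → (Fin m → ℝ) → Matrix (Fin n) (Fin n) ℝ}
    {F G : (Fin m → ℝ) → Matrix (Fin n) (Fin n) ℝ} {V : Set (Fin m → ℝ)} (hV : IsOpen V)
    (hVc : IsPreconnected V) (hskew : ∀ k, ∀ q ∈ V, (A k q)ᵀ = -(A k q))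
    (hF : ∀ q ∈ V, SolAt A F q) (hG : ∀ q ∈ V, SolAt A G q) {x y : Fin m → ℝ}
    (hx : x ∈ V) (hy : y ∈ V) : F x * (G x)ᵀ = F y * (G y)ᵀ := by
  ext i j
  have hd : ∀ q ∈ V, HasFDerivAt (fun x => (F x * (G x)ᵀ) i j) (0 : (Fin m → ℝ) →L[ℝ] ℝ) q := by
    intro q hq
    have h1 : HasFDerivAt (fun x => ∑ l, F x i l * G x j l) _ q :=
      HasFDerivAt.fun_sum fun l _ => (hF q hq i l).mul (hG q hq j l)
    simp only [Matrix.mul_apply, Matrix.transpose_apply]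
    refine h1.congr_fderiv ?_
    rw [clm_eq_sum_proj (∑ l, _)]
    refine Finset.sum_eq_zero fun k _ => ?_
    have h2 : F q * (G q * A k q)ᵀ + (F q * A k q) * (G q)ᵀ = 0 := by
      rw [Matrix.transpose_mul, hskew k q hq]
      simp [Matrix.mul_assoc]
    have h3 := congrFun (congrFun h2 i) j
    rw [Matrix.add_apply, Matrix.mul_apply, Matrix.mul_apply, ← Finset.sum_add_distrib] at h3
    convert zero_smul ℝ _
    rw [sum_apply]
    refine Eq.trans (Finset.sum_congr rfl fun l _ => ?_) h3
    simp [Pi.single_apply, mul_comm]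
  exact hV.is_const_of_fderiv_eq_zero (𝕜 := ℝ) hVc
    (fun q hq => (hd q hq).differentiableAt.differentiableWithinAt)
    (fun q hq => (hd q hq).fderiv) hx hy

lemma sol_contDiffOn {A : Fin m → (Fin m → ℝ) → Matrix (Fin n) (Fin n) ℝ}
    {F : (Fin m → ℝ) → Matrix (Fin n) (Fin n) ℝ} {U : Set (Fin m → ℝ)} (hU : IsOpen U)
    (hA : ∀ k i j, ContDiffOn ℝ (⊤ : ℕ∞) (fun q => A k q i j) U)
    (hF : ∀ q ∈ U, SolAt A F q) (i j : Fin n) :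
    ContDiffOn ℝ (⊤ : ℕ∞) (fun q => F q i j) U := by
  rw [contDiffOn_infty]
  intro N
  induction N generalizing i j with
  | zero =>
    rw [Nat.cast_zero, contDiffOn_zero]
    exact fun q hq => (hF q hq i j).continuousAt.continuousWithinAt
  | succ N ih =>
    rw [Nat.cast_add, Nat.cast_one, contDiffOn_succ_iff_fderiv_of_isOpen hU]
    refine ⟨fun q hq => (hF q hq i j).differentiableAt.differentiableWithinAt, by simp, ?_⟩
    refine ContDiffOn.congr (f := fun q => ∑ k, (F q * A k q) i j •
      (ContinuousLinearMap.proj k : (Fin m → ℝ) →L[ℝ] ℝ)) ?_ (fun q hq => (hF q hq i j).fderiv)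
    refine ContDiffOn.sum fun k _ => ContDiffOn.fun_smul ?_ contDiffOn_const
    simp only [Matrix.mul_apply]
    exact ContDiffOn.sum fun l _ => (ih i l).mul ((hA k l j).of_le (by exact_mod_cast le_top))

lemma exists_local_sol_aux {𝔸 : Type*} [NormedRing 𝔸] [NormedAlgebra ℝ 𝔸] [CompleteSpace 𝔸]
    [FiniteDimensional ℝ 𝔸] (ε : 𝔸 ≃ₐ[ℝ] Matrix (Fin n) (Fin n) ℝ)
    {A : Fin m → (Fin m → ℝ) → Matrix (Fin n) (Fin n) ℝ}
    {U : Set (Fin m → ℝ)} (hU : IsOpen U)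
    (hA : ∀ k i j, ContDiffOn ℝ (⊤ : ℕ∞) (fun q => A k q i j) U)
    (hflat : ∀ k l, ∀ q ∈ U,
      pdM k (A l) q - pdM l (A k) q = A l q * A k q - A k q * A l q)
    (q : Fin m → ℝ) (hq : q ∈ U) :
    ∃ r > 0, ball q r ⊆ U ∧ ∃ F : (Fin m → ℝ) → Matrix (Fin n) (Fin n) ℝ, F q = 1 ∧
      ∀ x ∈ ball q r, SolAt A F x := by
  let T : Fin m → Fin n → Fin n → ((Fin m → ℝ) →L[ℝ] 𝔸) := fun k i j =>
    (ContinuousLinearMap.proj k : (Fin m → ℝ) →L[ℝ] ℝ).smulRight (ε.symm (Matrix.single i j 1))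
  let ω : (Fin m → ℝ) → ((Fin m → ℝ) →L[ℝ] 𝔸) := fun x =>
    ∑ k, ∑ i, ∑ j, A k x i j • T k i j
  have hsumT : ∀ (c : Fin m → Matrix (Fin n) (Fin n) ℝ) (v : Fin m → ℝ),
      (∑ k, ∑ i, ∑ j, c k i j • T k i j) v = ε.symm (∑ k, v k • c k) := by
    intro c v
    simp only [sum_apply, map_sum]
    refine Finset.sum_congr rfl fun k _ => ?_
    conv_rhs => rw [Matrix.matrix_eq_sum_single (c k)]
    simp only [Finset.smul_sum, map_sum]
    refine Finset.sum_congr rfl fun i _ => Finset.sum_congr rfl fun j _ => ?_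
    have e1 : Matrix.single i j (c k i j) = c k i j • Matrix.single i j (1:ℝ) := by simp
    rw [e1, map_smul, map_smul, smul_apply, ContinuousLinearMap.smulRight_apply, smul_comm]
    rfl
  have hωv : ∀ x v, ω x v = ε.symm (∑ k, v k • A k x) := fun x v => hsumT (fun k => A k x) v
  have hω : ContDiffOn ℝ 2 ω U := by
    refine ContDiffOn.sum fun k _ => ContDiffOn.sum fun i _ => ContDiffOn.sum fun j _ => ?_
    have h0 : ContDiffOn ℝ 2 (fun x => A k x i j) U := by
      exact_mod_cast contDiffOn_infty.1 (hA k i j) 2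
    exact h0.fun_smul contDiffOn_const
  have hdω : ∀ x ∈ U, ∀ u v, fderiv ℝ ω x u v =
      ε.symm (∑ k, ∑ l, (v k * u l) • pdM l (A k) x) := by
    intro x hx u v
    have h1 : HasFDerivAt ω (∑ k, ∑ i, ∑ j,
        (fderiv ℝ (fun x => A k x i j) x).smulRight (T k i j)) x := by
      refine HasFDerivAt.fun_sum fun k _ => HasFDerivAt.fun_sum fun i _ =>
        HasFDerivAt.fun_sum fun j _ => ?_
      have h0 : HasFDerivAt (fun x => A k x i j) (fderiv ℝ (fun x => A k x i j) x) x :=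
        (((hA k i j).contDiffAt (hU.mem_nhds hx)).differentiableAt (by simp)).hasFDerivAt
      exact h0.smul_const (T k i j)
    rw [h1.fderiv]
    have h2 : (∑ k, ∑ i, ∑ j, (fderiv ℝ (fun x => A k x i j) x).smulRight (T k i j)) u
        = ∑ k, ∑ i, ∑ j, (∑ l, u l • pdM l (A k) x) i j • T k i j := by
      simp only [sum_apply]
      refine Finset.sum_congr rfl fun k _ => Finset.sum_congr rfl fun i _ =>
        Finset.sum_congr rfl fun j _ => ?_
      rw [ContinuousLinearMap.smulRight_apply]
      congr 1
      rw [clm_eq_sum_proj (fderiv ℝ (fun x => A k x i j) x)]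
      simp [Matrix.sum_apply, pdM, pdr, mul_comm]
    rw [h2, hsumT (fun k => ∑ l, u l • pdM l (A k) x)]
    simp only [Finset.smul_sum, smul_smul]
  obtain ⟨r, hr, hrU, F, hF1, hF⟩ := exists_local_frame U hU q hq ω hω (by
    intro z hz u v
    rw [hdω z hz, hdω z hz, hωv, hωv, ← map_mul, ← map_mul, ← map_sub, ← map_sub]
    congr 1
    rw [Finset.sum_comm (f := fun k l => (u k * v l) • _)]
    simp only [Finset.sum_mul_sum]
    rw [Finset.sum_comm (f := fun i j => u i • A i z * v j • A j z)]
    rw [← Finset.sum_sub_distrib, ← Finset.sum_sub_distrib]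
    refine Finset.sum_congr rfl fun k _ => ?_
    rw [← Finset.sum_sub_distrib, ← Finset.sum_sub_distrib]
    refine Finset.sum_congr rfl fun l _ => ?_
    rw [mul_comm (u l), ← smul_sub, hflat l k z hz]
    simp only [smul_sub, smul_mul_assoc, mul_smul_comm, smul_smul]
    rw [mul_comm (u l)])
  refine ⟨r, hr, hrU, fun x => ε (F x), by simp [hF1], fun x hx i j => ?_⟩
  let e : 𝔸 →L[ℝ] ℝ :=
    LinearMap.toContinuousLinearMap ((Matrix.entryLinearMap ℝ ℝ i j).comp ε.toLinearMap)
  have h := e.hasFDerivAt.comp x (hF x hx)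
  refine HasFDerivAt.congr_fderiv (f := fun x => ε (F x) i j) h ?_
  ext v
  change (ε (F x * ω x v)) i j = _
  rw [hωv, map_mul, AlgEquiv.apply_symm_apply]
  simp [Finset.mul_sum, Matrix.sum_apply, mul_comm]

lemma exists_local_sol {A : Fin m → (Fin m → ℝ) → Matrix (Fin n) (Fin n) ℝ}
    {U : Set (Fin m → ℝ)} (hU : IsOpen U)
    (hA : ∀ k i j, ContDiffOn ℝ (⊤ : ℕ∞) (fun q => A k q i j) U)
    (hflat : ∀ k l, ∀ q ∈ U,
      pdM k (A l) q - pdM l (A k) q = A l q * A k q - A k q * A l q)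
    (q : Fin m → ℝ) (hq : q ∈ U) :
    ∃ r > 0, ball q r ⊆ U ∧ ∃ F : (Fin m → ℝ) → Matrix (Fin n) (Fin n) ℝ, F q = 1 ∧
      ∀ x ∈ ball q r, SolAt A F x := by
  let ε : (EuclideanSpace ℝ (Fin n) →L[ℝ] EuclideanSpace ℝ (Fin n)) ≃ₐ[ℝ]
      Matrix (Fin n) (Fin n) ℝ :=
    (Matrix.toEuclideanCLM (n := Fin n) (𝕜 := ℝ)).toAlgEquiv.symm
  haveI : FiniteDimensional ℝ (EuclideanSpace ℝ (Fin n) →L[ℝ] EuclideanSpace ℝ (Fin n)) :=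
    ε.symm.toLinearEquiv.finiteDimensional
  exact exists_local_sol_aux ε hU hA hflat q hq

/-- Matrices with the discrete topology. -/
def DMat (n : ℕ) := Matrix (Fin n) (Fin n) ℝ

instance (n : ℕ) : TopologicalSpace (DMat n) := ⊥
instance (n : ℕ) : DiscreteTopology (DMat n) := ⟨rfl⟩

/-- Right multiplication on `DMat`. -/
def DMat.rmul (C : DMat n) (M : Matrix (Fin n) (Fin n) ℝ) : DMat n :=
  HMul.hMul (α := Matrix (Fin n) (Fin n) ℝ) (β := Matrix (Fin n) (Fin n) ℝ) C M

lemma DMat.rmul_one (C : DMat n) : C.rmul 1 = C := Matrix.mul_one (M := _) 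

lemma DMat.rmul_rmul (C : DMat n) (M N : Matrix (Fin n) (Fin n) ℝ) :
    (C.rmul M).rmul N = C.rmul (M * N) := Matrix.mul_assoc _ _ _

/-- The flat bundle. -/
def flatCore (U : Set (Fin m → ℝ)) (r : U → ℝ)
    (Φ : U → (Fin m → ℝ) → Matrix (Fin n) (Fin n) ℝ)
    (hr : ∀ i, 0 < r i)
    (horth : ∀ i : U, ∀ x ∈ ball (i : Fin m → ℝ) (r i), Φ i x * (Φ i x)ᵀ = 1)
    (hconst : ∀ i j : U, ∃ M, ∀ x ∈ ball (i : Fin m → ℝ) (r i) ∩ ball (j : Fin m → ℝ) (r j),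
      Φ i x * (Φ j x)ᵀ = M) :
    FiberBundleCore U U (DMat n) where
  baseSet i := {x | (x : Fin m → ℝ) ∈ ball (i : Fin m → ℝ) (r i)}
  isOpen_baseSet i := isOpen_ball.preimage continuous_subtype_val
  indexAt := id
  mem_baseSet_at x := mem_ball_self (hr x)
  coordChange i j x C := C.rmul (Φ i x * (Φ j x)ᵀ)
  coordChange_self i x hx C := by
    rw [horth i x hx, DMat.rmul_one]
  continuousOn_coordChange i j := by
    obtain ⟨M, hM⟩ := hconst i j
    have hg : Continuous fun C : DMat n => C.rmul M := continuous_of_discreteTopology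
    have hc : Continuous fun p : U × DMat n => p.2.rmul M := hg.comp continuous_snd
    refine hc.continuousOn.congr fun p hp => ?_
    simp only
    rw [hM _ hp.1]
  coordChange_comp i j k x hx C := by
    rw [DMat.rmul_rmul]
    congr 1
    rw [Matrix.mul_assoc, ← Matrix.mul_assoc (Φ j x)ᵀ,
      mul_eq_one_comm.1 (horth j x hx.1.2), Matrix.one_mul]

lemma exists_global_sol {A : Fin m → (Fin m → ℝ) → Matrix (Fin n) (Fin n) ℝ}
    {U : Set (Fin m → ℝ)} (hU : IsOpen U) [SimplyConnectedSpace U]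
    (hA : ∀ k i j, ContDiffOn ℝ (⊤ : ℕ∞) (fun q => A k q i j) U)
    (hskew : ∀ k, ∀ q ∈ U, (A k q)ᵀ = -(A k q))
    (hflat : ∀ k l, ∀ q ∈ U,
      pdM k (A l) q - pdM l (A k) q = A l q * A k q - A k q * A l q)
    (p₀ : Fin m → ℝ) (hp₀ : p₀ ∈ U) (F₀ : Matrix (Fin n) (Fin n) ℝ) :
    ∃ F : (Fin m → ℝ) → Matrix (Fin n) (Fin n) ℝ, F p₀ = F₀ ∧ ∀ x ∈ U, SolAt A F x := by
  have hloc := fun q : U => exists_local_sol hU hA hflat q.1 q.2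
  choose r hr hrU Φ hΦ1 hΦ using hloc
  have hcc : ∀ i j : U, ∀ x ∈ ball (i : Fin m → ℝ) (r i) ∩ ball (j : Fin m → ℝ) (r j),
      ∀ y ∈ ball (i : Fin m → ℝ) (r i) ∩ ball (j : Fin m → ℝ) (r j),
      Φ i x * (Φ j x)ᵀ = Φ i y * (Φ j y)ᵀ := by
    intro i j x hx y hy
    exact sol_mul_transpose_const (A := A) (isOpen_ball.inter isOpen_ball)
      ((convex_ball _ _).inter (convex_ball _ _)).isPreconnected
      (fun k q hq => hskew k q (hrU i hq.1)) (fun q hq => hΦ i q hq.1)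
      (fun q hq => hΦ j q hq.2) hx hy
  have horth : ∀ i : U, ∀ x ∈ ball (i : Fin m → ℝ) (r i), Φ i x * (Φ i x)ᵀ = 1 := by
    intro i x hx
    have hi : (i : Fin m → ℝ) ∈ ball (i : Fin m → ℝ) (r i) := mem_ball_self (hr i)
    rw [hcc i i x ⟨hx, hx⟩ i ⟨hi, hi⟩, hΦ1]
    simp
  have hconst : ∀ i j : U, ∃ M, ∀ x ∈ ball (i : Fin m → ℝ) (r i) ∩ ball (j : Fin m → ℝ) (r j),
      Φ i x * (Φ j x)ᵀ = M := by
    intro i j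
    rcases (ball (i : Fin m → ℝ) (r i) ∩ ball (j : Fin m → ℝ) (r j)).eq_empty_or_nonempty with
      h | ⟨y, hy⟩
    · exact ⟨0, fun x hx => by rw [h] at hx; exact hx.elim⟩
    · exact ⟨_, fun x hx => hcc i j x hx y hy⟩
  let Z := flatCore U r Φ hr horth hconst
  have hcov : IsCoveringMap (Bundle.TotalSpace.proj : Bundle.TotalSpace (DMat n) Z.Fiber → U) :=
    FiberBundle.isCoveringMap
  haveI : LocallyPathConnectedSpace U := hU.locallyPathConnectedSpace
  obtain ⟨s, ⟨hs0, hs⟩, -⟩ := hcov.existsUnique_continuousMap_lifts (ContinuousMap.id U)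
    (⟨p₀, hp₀⟩ : U) (⟨⟨p₀, hp₀⟩, F₀⟩ : Bundle.TotalSpace (DMat n) Z.Fiber) rfl
  have hproj : ∀ x : U, (s x).1 = x := fun x => congrFun hs x
  classical
  let G : U → Matrix (Fin n) (Fin n) ℝ := fun x => (s x).2
  let F : (Fin m → ℝ) → Matrix (Fin n) (Fin n) ℝ := fun x => if h : x ∈ U then G ⟨x, h⟩ else 0
  have hFG : ∀ x : U, F x = G x := fun x => by simp [F, x.2]
  refine ⟨F, ?_, ?_⟩
  · rw [hFG ⟨p₀, hp₀⟩]
    simp only [G]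
    rw [hs0]
  intro x hx
  let i : U := ⟨x, hx⟩
  have htriv : ∀ y : U, (y : Fin m → ℝ) ∈ ball x (r i) →
      (Z.localTriv i (s y)).2 = DMat.rmul (n := n) (G y) (Φ i y)ᵀ := by
    intro y hy
    rw [FiberBundleCore.localTriv_apply]
    change DMat.rmul (n := n) (G y) (Φ ((s y).1) (s y).1 * (Φ i (s y).1)ᵀ) = _
    rw [hproj, hΦ1, Matrix.one_mul]
  have hcont : ContinuousAt (fun y : U => (Z.localTriv i (s y)).2) i := by
    have h1 : ContinuousAt (Z.localTriv i) (s i) := by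
      refine (Z.localTriv i).toOpenPartialHomeomorph.continuousAt ?_
      rw [FiberBundleCore.mem_localTriv_source]
      change (s i).1 ∈ _
      rw [hproj]
      exact mem_ball_self (hr i)
    exact continuousAt_snd.comp (ContinuousAt.comp (f := s) h1 s.continuous.continuousAt)
  have hev : ∀ᶠ y : U in 𝓝 i, (Z.localTriv i (s y)).2 = (Z.localTriv i (s i)).2 := by
    have := hcont.eventually (IsOpen.mem_nhds (isOpen_discrete {(Z.localTriv i (s i)).2}) rfl)
    exact this
  set C : Matrix (Fin n) (Fin n) ℝ := (Z.localTriv i (s i)).2 with hC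
  have hball : ∀ᶠ y : U in 𝓝 i, (y : Fin m → ℝ) ∈ ball x (r i) :=
    continuous_subtype_val.continuousAt.eventually (ball_mem_nhds x (hr i))
  have hev2 : ∀ᶠ y : U in 𝓝 i, F y = C * Φ i y := by
    filter_upwards [hev, hball] with y h1 h2
    rw [htriv y h2] at h1
    have h3 : G y * (Φ i y)ᵀ = C := h1
    rw [hFG, ← h3, Matrix.mul_assoc, mul_eq_one_comm.1 (horth i y h2), Matrix.mul_one]
  have hev3 : ∀ᶠ y in 𝓝 x, F y = C * Φ i y := by
    have hmap : map ((↑) : U → (Fin m → ℝ)) (𝓝 i) = 𝓝 x := hU.isOpenEmbedding_subtypeVal.map_nhds_eq i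
    rw [← hmap]
    exact hev2
  have hsol := (hΦ i x (mem_ball_self (hr i))).const_mul C
  intro a b
  have e0 : F x = C * Φ i x := hev3.self_of_nhds
  rw [e0]
  refine (hsol a b).congr_of_eventuallyEq ?_
  filter_upwards [hev3] with y hy
  rw [hy]

end Frames

theorem exists_unique_frame_flat_connection {m n : ℕ} (hn : 1 ≤ n)
    (U : Set (Fin m → ℝ)) (hU : IsOpen U)
    (hconn : IsConnected U) (hsc : SimplyConnectedSpace U)
    (A : Fin m → (Fin m → ℝ) → Matrix (Fin n) (Fin n) ℝ)
    (hA : ∀ k i j, ContDiffOn ℝ (⊤ : ℕ∞) (fun q => A k q i j) U)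
    (hskew : ∀ k, ∀ q ∈ U, (A k q)ᵀ = -(A k q))
    (hflat : ∀ k l, ∀ q ∈ U,
      pdM k (A l) q - pdM l (A k) q = A l q * A k q - A k q * A l q)
    (p₀ : Fin m → ℝ) (hp₀ : p₀ ∈ U)
    (F₀ : Matrix (Fin n) (Fin n) ℝ) (hF₀ : F₀ᵀ * F₀ = 1 ∧ F₀.det = 1) :
    ∃ F : (Fin m → ℝ) → Matrix (Fin n) (Fin n) ℝ,
      (∀ i j, ContDiffOn ℝ (⊤ : ℕ∞) (fun q => F q i j) U) ∧
      F p₀ = F₀ ∧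
      (∀ q ∈ U, (F q)ᵀ * F q = 1 ∧ (F q).det = 1) ∧
      (∀ k, ∀ q ∈ U, pdM k F q = F q * A k q) ∧
      (∀ G : (Fin m → ℝ) → Matrix (Fin n) (Fin n) ℝ,
        (∀ i j, ContDiffOn ℝ (⊤ : ℕ∞) (fun q => G q i j) U) →
        G p₀ = F₀ →
        (∀ q ∈ U, (G q)ᵀ * G q = 1 ∧ (G q).det = 1) →
        (∀ k, ∀ q ∈ U, pdM k G q = G q * A k q) →
        Set.EqOn F G U) := by
  obtain ⟨F, hF0, hF⟩ := exists_global_sol hU hA hskew hflat p₀ hp₀ F₀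
  have hsm := sol_contDiffOn hU hA hF
  have hF₀' : F₀ * F₀ᵀ = 1 := mul_eq_one_comm.1 hF₀.1
  have horth : ∀ q ∈ U, F q * (F q)ᵀ = 1 := by
    intro q hq
    rw [sol_mul_transpose_const hU hconn.isPreconnected hskew hF hF hq hp₀, hF0, hF₀']
  have hdet : ∀ q ∈ U, (F q).det = 1 := by
    have hFc : ContinuousOn F U :=
      continuousOn_pi.2 fun i => continuousOn_pi.2 fun j => (hsm i j).continuousOn
    have hc : ContinuousOn (fun q => (F q).det) U :=
      (Continuous.matrix_det continuous_id).comp_continuousOn hFc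
    intro q hq
    refine hconn.isPreconnected.eq_of_sq_eq (g := fun _ => (1:ℝ)) hc continuousOn_const ?_
      (by simp) hp₀ ?_ hq
    · intro x hx
      have := congrArg Matrix.det (horth x hx)
      rw [Matrix.det_mul, Matrix.det_transpose, Matrix.det_one] at this
      simp [sq, this]
    · change (F p₀).det = 1
      rw [hF0, hF₀.2]
  refine ⟨F, hsm, hF0, fun q hq => ⟨mul_eq_one_comm.1 (horth q hq), hdet q hq⟩,
    fun k q hq => (hF q hq).pdM_eq k, ?_⟩
  intro G hGs hG0 hGo hG q hq
  have hGsol : ∀ q ∈ U, SolAt A G q := fun q hq => SolAt.of_pdM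
    (fun i j => ((hGs i j).contDiffAt (hU.mem_nhds hq)).differentiableAt (by simp))
    (fun k => hG k q hq)
  have h := sol_mul_transpose_const hU hconn.isPreconnected hskew hF hGsol hq hp₀
  rw [hF0, hG0, hF₀'] at h
  calc F q = F q * ((G q)ᵀ * G q) := by rw [(hGo q hq).1, Matrix.mul_one]
    _ = G q := by rw [← Matrix.mul_assoc, h, Matrix.one_mul]
end
end

section
/- Let U ⊆ ℝ^m be a connected and simply connected open set. Let P_1,…,P_m : U → ℝ^{m×m} be smooth with each P_k(q) skew-symmetric, and let g_1,…,g_m, h_1,…,h_m : U → ℝ^m be smooth (column-vector valued). Assume for all k, l ∈ {1,…,m} on U: (i) ∂_k g_l − ∂_l g_k = P_l g_k − P_k g_l; (ii) ∂_k h_l − ∂_l h_k = P_l h_k − P_k h_l; (iii) ⟨g_k, h_l⟩ = ⟨g_l, h_k⟩; (iv) ∂_k P_l − ∂_l P_k = P_l P_k − P_k P_l + h_k h_lᵀ − h_l h_kᵀ. Define Ã_k : U → ℝ^{(m+1)×(m+1)} as the block matrix with upper-left m×m block P_k, with −h_k as the first m entries of the last column, with h_kᵀ as the first m entries of the last row,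 and (m+1, m+1)-entry 0, and set ĝ_k := (g_k, 0) ∈ ℝ^{m+1}. Then there exist smooth maps F : U → SO(m+1) and f : U → ℝ^{m+1} satisfying ∂_k F = F Ã_k and ∂_k f = F ĝ_k on U for all k. Moreover, setting ν := (last column of F), the pair (f, ν) is a frontal in ℝ^{m+1} (‖ν‖ = 1 and ⟨∂_k f, ν⟩ = 0) whose fundamental data realize the prescribed one: ⟨∂_k f, ∂_l f⟩ = ⟨g_k, g_l⟩, ⟨∂_k f, ∂_l ν⟩ = −⟨g_k, h_l⟩, and ⟨∂_k ν, ∂_l ν⟩ = ⟨h_k, h_l⟩ on U. -/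
open scoped Matrix

noncomputable section

/-- Partial derivative of a vector-valued map in the `k`-th coordinate direction. -/
def pd {m N : ℕ} (k : Fin m) (f : (Fin m → ℝ) → (Fin N → ℝ)) :
    (Fin m → ℝ) → (Fin N → ℝ) :=
  fun q => fderiv ℝ f q (Pi.single k 1)

/-- The block matrix `Ã` with upper-left `m×m` block `P`, last column `(-h, 0)ᵀ`
and last row `(hᵀ, 0)`. -/
def tildeA {m : ℕ} (P : Matrix (Fin m) (Fin m) ℝ) (h : Fin m → ℝ) :
    Matrix (Fin (m + 1)) (Fin (m + 1)) ℝ :=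
  Matrix.of fun i j =>
    if hi : (i : ℕ) < m then
      (if hj : (j : ℕ) < m then P ⟨i, hi⟩ ⟨j, hj⟩ else -h ⟨i, hi⟩)
    else
      (if hj : (j : ℕ) < m then h ⟨j, hj⟩ else 0)

/-- `ĝ = (g, 0) ∈ ℝ^{m+1}`. -/
def hatg {m : ℕ} (g : Fin m → ℝ) : Fin (m + 1) → ℝ :=
  fun i => if hi : (i : ℕ) < m then g ⟨i, hi⟩ else 0

section Helpers
open Metric Set Filter Topology MeasureTheory Interval

set_option linter.unusedSectionVars false

section L
variable {E V : Type*} [NormedAddCommGroup E] [NormedSpace ℝ E] [FiniteDimensional ℝ E]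
  [NormedAddCommGroup V] [NormedSpace ℝ V] [FiniteDimensional ℝ V]

lemma param_deriv {s : Set E} (hs : IsOpen s) {k : E → ℝ → V} {k' : E → ℝ → E →L[ℝ] V}
    (hk : ContinuousOn (Function.uncurry k) (s ×ˢ Icc (0:ℝ) 1))
    (hk' : ContinuousOn (Function.uncurry k') (s ×ˢ Icc (0:ℝ) 1))
    (hd : ∀ x ∈ s, ∀ t ∈ Icc (0:ℝ) 1, HasFDerivAt (fun x => k x t) (k' x t) x) :
    (∀ x ∈ s, HasFDerivAt (fun x => ∫ t in (0:ℝ)..1, k x t) (∫ t in (0:ℝ)..1, k' x t) x) ∧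
      ContinuousOn (fun x => ∫ t in (0:ℝ)..1, k' x t) s := by
  have : ProperSpace E := FiniteDimensional.proper ℝ E
  have hI : Ι (0:ℝ) 1 ⊆ Icc 0 1 := by
    rw [uIoc_of_le zero_le_one]; exact Ioc_subset_Icc_self
  have hkt : ∀ x ∈ s, ContinuousOn (k x) (Icc 0 1) := fun x hx =>
    hk.comp (f := fun t => (x, t)) (by fun_prop) (fun t ht => ⟨hx, ht⟩)
  have hkt' : ∀ x ∈ s, ContinuousOn (k' x) (Icc 0 1) := fun x hx =>
    hk'.comp (f := fun t => (x, t)) (by fun_prop) (fun t ht => ⟨hx, ht⟩)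
  have hmeas : ∀ x ∈ s, AEStronglyMeasurable (k x) (volume.restrict (Ι (0:ℝ) 1)) := fun x hx =>
    ((hkt x hx).mono hI).aestronglyMeasurable measurableSet_uIoc
  have hmeas' : ∀ x ∈ s, AEStronglyMeasurable (k' x) (volume.restrict (Ι (0:ℝ) 1)) :=
    fun x hx => ((hkt' x hx).mono hI).aestronglyMeasurable measurableSet_uIoc
  have hbd : ∀ x ∈ s, ∃ ε > 0, ∃ M, closedBall x ε ⊆ s ∧
      ∀ y ∈ closedBall x ε, ∀ t ∈ Icc (0:ℝ) 1, ‖k' y t‖ ≤ M := by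
    intro x hx
    obtain ⟨ε, hε, hsub⟩ := nhds_basis_closedBall.mem_iff.1 (hs.mem_nhds hx)
    obtain ⟨M, hM⟩ := ((isCompact_closedBall x ε).prod (isCompact_Icc (a := (0:ℝ)) (b := 1))).exists_bound_of_continuousOn
      (hk'.mono (prod_mono hsub le_rfl))
    exact ⟨ε, hε, M, hsub, fun y hy t ht => hM (y, t) ⟨hy, ht⟩⟩
  constructor
  · intro x hx
    obtain ⟨ε, hε, M, hsub, hM⟩ := hbd x hx
    refine intervalIntegral.hasFDerivAt_integral_of_dominated_of_fderiv_le (bound := fun _ => M)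
      (closedBall_mem_nhds x hε) ?_ ?_ (hmeas' x hx) ?_ (by simp) ?_
    · filter_upwards [hs.mem_nhds hx] with y hy using hmeas y hy
    · exact ContinuousOn.intervalIntegrable (by rw [uIcc_of_le zero_le_one]; exact hkt x hx)
    · exact Eventually.of_forall fun t ht y hy => hM y hy t (hI ht)
    · exact Eventually.of_forall fun t ht y hy => hd y (hsub hy) t (hI ht)
  · intro x hx
    obtain ⟨ε, hε, M, hsub, hM⟩ := hbd x hx
    refine ContinuousAt.continuousWithinAt ?_
    refine intervalIntegral.continuousAt_of_dominated_interval (bound := fun _ => M) ?_ ?_ (by simp) ?_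
    · filter_upwards [hs.mem_nhds hx] with y hy using hmeas' y hy
    · filter_upwards [closedBall_mem_nhds x hε] with y hy
      exact Eventually.of_forall fun t ht => hM y hy t (hI ht)
    · refine Eventually.of_forall fun t ht => ?_
      have : ContinuousOn (fun y => k' y t) s :=
        hk'.comp (f := fun y => (y, t)) (by fun_prop) (fun y hy => ⟨hy, hI ht⟩)
      exact this.continuousAt (hs.mem_nhds hx)

lemma ray_mem {c x : E} {r : ℝ} (hx : x ∈ ball c r) {t : ℝ} (ht : t ∈ Icc (0:ℝ) 1) :
    c + t • (x - c) ∈ ball c r := by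
  rw [mem_ball_iff_norm] at *
  rw [add_sub_cancel_left, norm_smul, Real.norm_of_nonneg ht.1]
  calc t * ‖x - c‖ ≤ 1 * ‖x - c‖ := by gcongr; exact ht.2
    _ < r := by simpa using hx

lemma ray_deriv {η : E → E →L[ℝ] V} {c : E} {r : ℝ} (hη : ContDiffOn ℝ 1 η (ball c r)) :
    ContDiffOn ℝ 1 (fun x => ∫ t in (0:ℝ)..1, η (c + t • (x - c)) (x - c)) (ball c r) ∧
    ∀ x ∈ ball c r, ∀ w,
      fderiv ℝ (fun x => ∫ t in (0:ℝ)..1, η (c + t • (x - c)) (x - c)) x w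
      = η x w + ∫ t in (0:ℝ)..1, t • (fderiv ℝ η (c + t • (x - c)) w (x - c)
          - fderiv ℝ η (c + t • (x - c)) (x - c) w) := by
  have hc1 : ContinuousOn (fun p : E × ℝ => η (c + p.2 • (p.1 - c))) (ball c r ×ˢ Icc (0:ℝ) 1) :=
    hη.continuousOn.comp (f := fun p : E × ℝ => c + p.2 • (p.1 - c)) (by fun_prop)
      (fun p hp => ray_mem hp.1 hp.2)
  have hη' : ContinuousOn (fderiv ℝ η) (ball c r) := hη.continuousOn_fderiv_of_isOpen isOpen_ball le_rfl
  have hc2 : ContinuousOn (fun p : E × ℝ => fderiv ℝ η (c + p.2 • (p.1 - c)))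
      (ball c r ×ˢ Icc (0:ℝ) 1) :=
    hη'.comp (f := fun p : E × ℝ => c + p.2 • (p.1 - c)) (by fun_prop)
      (fun p hp => ray_mem hp.1 hp.2)
  have hdη : ∀ x ∈ ball c r, HasFDerivAt η (fderiv ℝ η x) x := fun x hx =>
    ((hη.differentiableOn one_ne_zero).differentiableAt (isOpen_ball.mem_nhds hx)).hasFDerivAt
  let k' : E → ℝ → E →L[ℝ] V := fun x t => η (c + t • (x - c)) +
    t • (fderiv ℝ η (c + t • (x - c))).flip (x - c)
  have hk'c : ContinuousOn (Function.uncurry k') (ball c r ×ˢ Icc (0:ℝ) 1) := by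
    simp only [Function.uncurry_def, k']
    refine hc1.add ?_
    have hfl : ContinuousOn (fun p : E × ℝ => (fderiv ℝ η (c + p.2 • (p.1 - c))).flip)
        (ball c r ×ˢ Icc (0:ℝ) 1) :=
      (ContinuousLinearMap.flipₗᵢ ℝ E E V).continuous.comp_continuousOn hc2
    exact continuousOn_snd.smul (hfl.clm_apply (by fun_prop))
  obtain ⟨h1, h2⟩ := param_deriv (isOpen_ball (x := c) (ε := r))
    (k := fun x t => η (c + t • (x - c)) (x - c)) (k' := k') (by
      simp only [Function.uncurry_def]
      exact hc1.clm_apply (by fun_prop)) hk'c (by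
      intro x hx t ht
      have hin : HasFDerivAt (fun x : E => c + t • (x - c)) (t • ContinuousLinearMap.id ℝ E) x :=
        (((hasFDerivAt_id x).sub_const c).const_smul t).const_add c
      have := ((hdη _ (ray_mem hx ht)).comp x hin).clm_apply ((hasFDerivAt_id x).sub_const c)
      refine this.congr_fderiv ?_
      ext w; simp [k'])
  constructor
  · rw [show (1 : WithTop ℕ∞) = 0 + 1 by simp, contDiffOn_succ_iff_fderiv_of_isOpen isOpen_ball]
    refine ⟨fun x hx => (h1 x hx).differentiableAt.differentiableWithinAt, by simp, ?_⟩
    rw [contDiffOn_zero]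
    exact h2.congr fun x hx => (h1 x hx).fderiv
  · intro x hx w
    have hline : ContinuousOn (fun t : ℝ => (x, t)) (Icc 0 1) := by fun_prop
    have hmaps : MapsTo (fun t : ℝ => (x, t)) (Icc 0 1) (ball c r ×ˢ Icc (0:ℝ) 1) :=
      fun t ht => ⟨hx, ht⟩
    have c1 : ContinuousOn (fun t : ℝ => η (c + t • (x - c))) (Icc 0 1) := hc1.comp hline hmaps
    have c2 : ContinuousOn (fun t : ℝ => fderiv ℝ η (c + t • (x - c))) (Icc 0 1) :=
      hc2.comp hline hmaps
    have c3 : ContinuousOn (fun t : ℝ => η (c + t • (x - c)) w) (Icc 0 1) :=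
      c1.clm_apply continuousOn_const
    have c4 : ∀ a b : E, ContinuousOn (fun t : ℝ => fderiv ℝ η (c + t • (x - c)) a b) (Icc 0 1) := by
      intro a b
      have : ContinuousOn (fun t : ℝ => fderiv ℝ η (c + t • (x - c)) a) (Icc 0 1) :=
        c2.clm_apply continuousOn_const
      exact this.clm_apply continuousOn_const
    have c5 : ContinuousOn (fun t : ℝ => η (c + t • (x - c)) w +
        t • fderiv ℝ η (c + t • (x - c)) (x - c) w) (Icc 0 1) :=
      c3.add (continuousOn_id.smul (c4 _ _))
    have c6 : ContinuousOn (fun t : ℝ => t • (fderiv ℝ η (c + t • (x - c)) w (x - c)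
          - fderiv ℝ η (c + t • (x - c)) (x - c) w)) (Icc 0 1) :=
      continuousOn_id.smul ((c4 _ _).sub (c4 _ _))
    have hu : uIcc (0:ℝ) 1 = Icc 0 1 := uIcc_of_le zero_le_one
    have ftc : ∫ t in (0:ℝ)..1, (η (c + t • (x - c)) w + t • fderiv ℝ η (c + t • (x - c)) (x - c) w)
        = η x w := by
      rw [intervalIntegral.integral_eq_sub_of_hasDerivAt (f := fun t : ℝ => t • η (c + t • (x - c)) w)]
      · simp
      · intro t ht
        rw [hu] at ht
        have hin : HasDerivAt (fun t : ℝ => c + t • (x - c)) (x - c) t := by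
          simpa using ((hasDerivAt_id t).smul_const (x - c)).const_add c
        have h2' : HasDerivAt (fun t : ℝ => η (c + t • (x - c)))
            (fderiv ℝ η (c + t • (x - c)) (x - c)) t :=
          (hdη _ (ray_mem hx ht)).comp_hasDerivAt t hin
        have h3 : HasDerivAt (fun t : ℝ => η (c + t • (x - c)) w)
            (fderiv ℝ η (c + t • (x - c)) (x - c) w) t := by
          simpa using h2'.clm_apply (hasDerivAt_const t w)
        have h4 := HasDerivAt.fun_smul (hasDerivAt_id t) h3
        refine h4.congr_deriv ?_
        simp [add_comm]
      · apply ContinuousOn.intervalIntegrable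
        rw [hu]
        exact c5
    rw [(h1 x hx).fderiv, ← ftc, ContinuousLinearMap.intervalIntegral_apply,
      ← intervalIntegral.integral_add]
    · congr 1; ext t; simp [k', smul_sub]
    · apply ContinuousOn.intervalIntegrable
      rw [hu]
      exact c5
    · apply ContinuousOn.intervalIntegrable
      rw [hu]
      exact c6
    · apply ContinuousOn.intervalIntegrable
      rw [hu]
      exact hk'c.comp hline hmaps

variable (E V) in
/-- Flipping arguments, as a continuous linear map. -/
noncomputable def flipL : (E →L[ℝ] V →L[ℝ] V) →L[ℝ] (V →L[ℝ] E →L[ℝ] V) :=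
  (ContinuousLinearMap.flipₗᵢ ℝ E V V).toContinuousLinearEquiv.toContinuousLinearMap

lemma flipL_apply (f : E →L[ℝ] V →L[ℝ] V) : flipL E V f = f.flip := rfl

lemma flipL_contDiff {n : WithTop ℕ∞} :
    ContDiff ℝ n (fun f : E →L[ℝ] V →L[ℝ] V => f.flip) :=
  ContinuousLinearMap.contDiff (𝕜 := ℝ) (E := E →L[ℝ] V →L[ℝ] V) (F := V →L[ℝ] E →L[ℝ] V) (flipL E V)

lemma flipL_hasFDerivAt (f : E →L[ℝ] V →L[ℝ] V) :
    HasFDerivAt (fun f : E →L[ℝ] V →L[ℝ] V => f.flip) (flipL E V) f := (flipL E V).hasFDerivAt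

/-- The `V`-valued one-form `x ↦ (u ↦ Ω x u (y x))`. -/
noncomputable def etaF (Ω : E → E →L[ℝ] V →L[ℝ] V) (y : E → V) (x : E) : E →L[ℝ] V :=
  (Ω x).flip (y x)

lemma etaF_contDiffOn {Ω : E → E →L[ℝ] V →L[ℝ] V} {y : E → V} {s : Set E} {n : WithTop ℕ∞}
    (hΩ : ContDiffOn ℝ n Ω s) (hy : ContDiffOn ℝ n y s) : ContDiffOn ℝ n (etaF Ω y) s := by
  have : ContDiffOn ℝ n (fun x => (Ω x).flip) s :=
    flipL_contDiff.comp_contDiffOn hΩ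
  exact this.clm_apply hy

lemma etaF_fderiv {Ω : E → E →L[ℝ] V →L[ℝ] V} {y : E → V} {x : E}
    (hη : DifferentiableAt ℝ (etaF Ω y) x)
    (hΩ : DifferentiableAt ℝ Ω x) (hy : DifferentiableAt ℝ y x) (w u : E) :
    fderiv ℝ (etaF Ω y) x w u = fderiv ℝ Ω x w u (y x) + Ω x u (fderiv ℝ y x w) := by
  have h1 := (hη.hasFDerivAt.clm_apply (hasFDerivAt_const u x)).fderiv
  have h2 := (hΩ.hasFDerivAt.clm_apply (hasFDerivAt_const u x))
  have h3 := (h2.clm_apply hy.hasFDerivAt).fderiv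
  have h4 : fderiv ℝ (fun x => etaF Ω y x u) x w = fderiv ℝ (fun x => Ω x u (y x)) x w := rfl
  rw [h1, h3] at h4
  simpa [add_comm] using h4

/-- The flatness condition. -/
def FlatOn (Ω : E → E →L[ℝ] V →L[ℝ] V) (s : Set E) : Prop :=
  ∀ x ∈ s, ∀ w u v, fderiv ℝ Ω x w u v - fderiv ℝ Ω x u w v
    = Ω x w (Ω x u v) - Ω x u (Ω x w v)

/-- One Picard step. -/
noncomputable def picStep (Ω : E → E →L[ℝ] V →L[ℝ] V) (c : E) (v : V) (y : E → V) (x : E) : V :=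
  v + ∫ t in (0:ℝ)..1, etaF Ω y (c + t • (x - c)) (x - c)

lemma picStep_step {Ω : E → E →L[ℝ] V →L[ℝ] V} {c : E} {r C a : ℝ} {v : V} {y : E → V}
    (hΩ : ContDiffOn ℝ 1 Ω (ball c r)) (hfl : FlatOn Ω (ball c r))
    (hC : ∀ x ∈ ball c r, ‖Ω x‖ ≤ C) (hCr : C * r ≤ 1/4) (hC0 : 0 ≤ C)
    (hy : ContDiffOn ℝ 1 y (ball c r))
    (he : ∀ x ∈ ball c r, ‖fderiv ℝ y x - etaF Ω y x‖ ≤ a) :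
    ContDiffOn ℝ 1 (picStep Ω c v y) (ball c r) ∧
    ∀ x ∈ ball c r, ‖fderiv ℝ (picStep Ω c v y) x - etaF Ω y x‖ ≤ a / 2 := by
  obtain ⟨h1, h2⟩ := ray_deriv (etaF_contDiffOn hΩ hy)
  refine ⟨contDiffOn_const.add h1, fun x hx => ?_⟩
  have ha : 0 ≤ a := (norm_nonneg _).trans (he x hx)
  refine ContinuousLinearMap.opNorm_le_bound _ (by positivity) fun w => ?_
  have hfd : fderiv ℝ (picStep Ω c v y) x =
      fderiv ℝ (fun x => ∫ t in (0:ℝ)..1, etaF Ω y (c + t • (x - c)) (x - c)) x := by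
    unfold picStep
    rw [fderiv_const_add]
  rw [sub_apply, hfd, h2 x hx w, add_sub_cancel_left]
  have key : ∀ t ∈ Ι (0:ℝ) 1, ‖t • (fderiv ℝ (etaF Ω y) (c + t • (x - c)) w (x - c)
          - fderiv ℝ (etaF Ω y) (c + t • (x - c)) (x - c) w)‖ ≤ a / 2 * ‖w‖ := by
    intro t ht
    rw [uIoc_of_le zero_le_one] at ht
    have hp : c + t • (x - c) ∈ ball c r := ray_mem hx ⟨ht.1.le, ht.2⟩
    set p := c + t • (x - c)
    have d1 := (hΩ.differentiableOn one_ne_zero).differentiableAt (isOpen_ball.mem_nhds hp)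
    have d2 := (hy.differentiableOn one_ne_zero).differentiableAt (isOpen_ball.mem_nhds hp)
    have d3 := ((etaF_contDiffOn hΩ hy).differentiableOn one_ne_zero).differentiableAt
      (isOpen_ball.mem_nhds hp)
    rw [etaF_fderiv d3 d1 d2, etaF_fderiv d3 d1 d2]
    set u := x - c
    have hu : ‖u‖ ≤ r := by rw [mem_ball_iff_norm] at hx; exact hx.le
    have e1 : fderiv ℝ Ω p w u (y p) + Ω p u (fderiv ℝ y p w) -
        (fderiv ℝ Ω p u w (y p) + Ω p w (fderiv ℝ y p u))
        = Ω p u ((fderiv ℝ y p - etaF Ω y p) w) - Ω p w ((fderiv ℝ y p - etaF Ω y p) u) := by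
      have := hfl p hp w u (y p)
      simp only [sub_apply, etaF, ContinuousLinearMap.flip_apply, map_sub]
      rw [add_sub_add_comm, this]; abel
    rw [e1, norm_smul, Real.norm_of_nonneg ht.1.le]
    set e := fderiv ℝ y p - etaF Ω y p
    have he' : ‖e‖ ≤ a := he p hp
    have b1 : ∀ u w : E, ‖Ω p u (e w)‖ ≤ C * ‖u‖ * (a * ‖w‖) := fun u w => by
      calc ‖Ω p u (e w)‖ ≤ ‖Ω p u‖ * ‖e w‖ := (Ω p u).le_opNorm _
        _ ≤ (C * ‖u‖) * (a * ‖w‖) := by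
          gcongr
          · exact ((Ω p).le_opNorm u).trans (by gcongr; exact hC p hp)
          · exact (e.le_opNorm w).trans (by gcongr)
    calc t * ‖Ω p u (e w) - Ω p w (e u)‖ ≤ 1 * (‖Ω p u (e w)‖ + ‖Ω p w (e u)‖) := by
          gcongr
          · exact ht.2
          · exact norm_sub_le _ _
      _ ≤ C * ‖u‖ * (a * ‖w‖) + C * ‖w‖ * (a * ‖u‖) := by
          rw [one_mul]; exact add_le_add (b1 _ _) (b1 _ _)
      _ = 2 * (C * ‖u‖) * (a * ‖w‖) := by ring
      _ ≤ 2 * (C * r) * (a * ‖w‖) := by gcongr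
      _ ≤ 2 * (1/4) * (a * ‖w‖) := by gcongr
      _ = a / 2 * ‖w‖ := by ring
  simpa using intervalIntegral.norm_integral_le_of_norm_le_const key

lemma picStep_sub {Ω : E → E →L[ℝ] V →L[ℝ] V} {c : E} {r C a : ℝ} {v : V} {y z : E → V}
    (hΩ : ContDiffOn ℝ 1 Ω (ball c r))
    (hC : ∀ x ∈ ball c r, ‖Ω x‖ ≤ C) (hCr : C * r ≤ 1/4) (hC0 : 0 ≤ C)
    (hy : ContDiffOn ℝ 1 y (ball c r)) (hz : ContDiffOn ℝ 1 z (ball c r))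
    (he : ∀ x ∈ ball c r, ‖y x - z x‖ ≤ a) :
    ∀ x ∈ ball c r, ‖picStep Ω c v y x - picStep Ω c v z x‖ ≤ a / 2 := by
  intro x hx
  have ha : 0 ≤ a := (norm_nonneg _).trans (he x hx)
  have hcont : ∀ y : E → V, ContDiffOn ℝ 1 y (ball c r) →
      IntervalIntegrable (fun t : ℝ => etaF Ω y (c + t • (x - c)) (x - c)) volume 0 1 := by
    intro y hy
    apply ContinuousOn.intervalIntegrable
    rw [uIcc_of_le zero_le_one]
    have : ContinuousOn (fun t : ℝ => etaF Ω y (c + t • (x - c))) (Icc 0 1) :=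
      (etaF_contDiffOn hΩ hy).continuousOn.comp (f := fun t : ℝ => c + t • (x - c)) (by fun_prop)
        (fun t ht => ray_mem hx ht)
    exact this.clm_apply continuousOn_const
  unfold picStep
  rw [add_sub_add_left_eq_sub, ← intervalIntegral.integral_sub (hcont y hy) (hcont z hz)]
  have key : ∀ t ∈ Ι (0:ℝ) 1, ‖etaF Ω y (c + t • (x - c)) (x - c) -
      etaF Ω z (c + t • (x - c)) (x - c)‖ ≤ a / 2 := by
    intro t ht
    rw [uIoc_of_le zero_le_one] at ht
    have hp : c + t • (x - c) ∈ ball c r := ray_mem hx ⟨ht.1.le, ht.2⟩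
    set p := c + t • (x - c)
    set u := x - c
    have hu : ‖u‖ ≤ r := by rw [mem_ball_iff_norm] at hx; exact hx.le
    simp only [etaF, ContinuousLinearMap.flip_apply]
    rw [← map_sub]
    calc ‖Ω p u (y p - z p)‖ ≤ ‖Ω p u‖ * ‖y p - z p‖ := (Ω p u).le_opNorm _
      _ ≤ (C * ‖u‖) * a := by
          gcongr
          · exact ((Ω p).le_opNorm u).trans (by gcongr; exact hC p hp)
          · exact he p hp
      _ ≤ (C * r) * a := by gcongr
      _ ≤ (1/4) * a := by gcongr
      _ ≤ a / 2 := by linarith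
  simpa using intervalIntegral.norm_integral_le_of_norm_le_const key

lemma local_exists {Ω : E → E →L[ℝ] V →L[ℝ] V} {c : E} {r C : ℝ}
    (hΩ : ContDiffOn ℝ 1 Ω (ball c r)) (hfl : FlatOn Ω (ball c r))
    (hC : ∀ x ∈ ball c r, ‖Ω x‖ ≤ C) (hCr : C * r ≤ 1/4) (hC0 : 0 ≤ C) (hr : 0 < r) (v : V) :
    ∃ y : E → V, y c = v ∧ ∀ x ∈ ball c r, HasFDerivAt y (etaF Ω y x) x := by
  let it : ℕ → E → V := fun n => (picStep Ω c v)^[n] (fun _ => v)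
  have hsucc : ∀ n, it (n+1) = picStep Ω c v (it n) := fun n => Function.iterate_succ_apply' _ _ _
  have hzero : it 0 = fun _ => v := rfl
  have hcd : ∀ n, ContDiffOn ℝ 1 (it n) (ball c r) := by
    intro n
    induction n with
    | zero => exact contDiffOn_const
    | succ n ih =>
      rw [hsucc]
      exact contDiffOn_const.add (ray_deriv (etaF_contDiffOn hΩ ih)).1
  have hetab : ∀ (y z : E → V), ∀ x ∈ ball c r, ‖etaF Ω y x - etaF Ω z x‖ ≤ C * ‖y x - z x‖ := by
    intro y z x hx
    unfold etaF
    rw [← map_sub]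
    refine ((Ω x).flip.le_opNorm _).trans ?_
    rw [ContinuousLinearMap.opNorm_flip]
    gcongr
    exact hC x hx
  have hd : ∀ n, ∀ x ∈ ball c r, ‖it (n+1) x - it n x‖ ≤ ‖v‖ * (1/2)^(n+1) := by
    intro n
    induction n with
    | zero =>
      intro x hx
      have := picStep_sub (v := v) (y := fun _ => v) (z := fun _ => 0) (a := ‖v‖) hΩ hC hCr hC0
        contDiffOn_const contDiffOn_const (by simp) x hx
      have h0 : picStep Ω c v (fun _ => 0) x = v := by simp [picStep, etaF]
      rw [h0] at this
      rw [hsucc, hzero]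
      refine this.trans (by simp; linarith)
    | succ n ih =>
      intro x hx
      have := picStep_sub (v := v) hΩ hC hCr hC0 (hcd (n+1)) (hcd n) ih x hx
      rw [hsucc (n+1)]
      nth_rw 2 [hsucc n]
      refine this.trans (le_of_eq (by ring))
  have hee : ∀ n : ℕ, ∀ x ∈ ball c r, ‖fderiv ℝ (it n) x - etaF Ω (it n) x‖ ≤
      C * ‖v‖ * ((n+1) * (1/2)^n) := by
    intro n
    induction n with
    | zero =>
      intro x hx
      have := hetab (fun _ => 0) (fun _ => v) x hx
      rw [hzero]
      simpa [etaF] using this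
    | succ n ih =>
      intro x hx
      have h1 := (picStep_step (v := v) hΩ hfl hC hCr hC0 (hcd n) ih).2 x hx
      have h2 := hetab (it n) (it (n+1)) x hx
      have h3 := hd n x hx
      rw [norm_sub_rev] at h3
      rw [← hsucc] at h1
      calc ‖fderiv ℝ (it (n+1)) x - etaF Ω (it (n+1)) x‖
          ≤ ‖fderiv ℝ (it (n+1)) x - etaF Ω (it n) x‖ + ‖etaF Ω (it n) x - etaF Ω (it (n+1)) x‖ :=
            norm_sub_le_norm_sub_add_norm_sub _ _ _
        _ ≤ C * ‖v‖ * ((n+1) * (1/2)^n) / 2 + C * (‖v‖ * (1/2)^(n+1)) := by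
            gcongr
            exact h2.trans (by gcongr)
        _ = _ := by push_cast; ring
  have hgeo : ∀ x ∈ ball c r, ∀ n, dist (it n x) (it (n+1) x) ≤ (‖v‖/2) * (1/2)^n := by
    intro x hx n
    rw [dist_comm, dist_eq_norm]
    exact (hd n x hx).trans (le_of_eq (by ring))
  have hlim : ∀ x, ∃ l, x ∈ ball c r → Tendsto (fun n => it n x) atTop (𝓝 l) := by
    intro x
    by_cases hx : x ∈ ball c r
    · obtain ⟨l, hl⟩ := cauchySeq_tendsto_of_complete
        (cauchySeq_of_le_geometric (1/2) (‖v‖/2) (by norm_num) (hgeo x hx))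
      exact ⟨l, fun _ => hl⟩
    · exact ⟨0, fun h => absurd h hx⟩
  choose y hy using hlim
  have hyn : ∀ n, ∀ x ∈ ball c r, ‖it n x - y x‖ ≤ ‖v‖ * (1/2)^n := by
    intro n x hx
    have := dist_le_of_le_geometric_of_tendsto (1/2) (‖v‖/2) (by norm_num) (hgeo x hx) (hy x hx) n
    rw [dist_eq_norm] at this
    exact this.trans (le_of_eq (by ring))
  refine ⟨y, ?_, fun x hx => ?_⟩
  · refine tendsto_nhds_unique (hy c (mem_ball_self hr)) ?_
    have : ∀ n, it n c = v := by
      intro n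
      cases n with
      | zero => rfl
      | succ n => rw [hsucc]; simp [picStep]
    simp [this]
  · refine hasFDerivAt_of_tendstoUniformlyOn (l := atTop) (f := it) (f' := fun n => fderiv ℝ (it n))
      (g' := etaF Ω y) isOpen_ball ?_ ?_ hy hx
    · rw [Metric.tendstoUniformlyOn_iff]
      intro ε hε
      have hb : Tendsto (fun n : ℕ => C * ‖v‖ * (((n:ℝ)+2) * (1/2)^n)) atTop (𝓝 0) := by
        have h1 := tendsto_self_mul_const_pow_of_lt_one (r := (1/2:ℝ)) (by norm_num) (by norm_num)
        have h2 := tendsto_pow_atTop_nhds_zero_of_lt_one (r := (1/2:ℝ)) (by norm_num) (by norm_num)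
        have := (h1.add (h2.const_mul 2)).const_mul (C * ‖v‖)
        simpa [add_mul] using this
      filter_upwards [hb.eventually_lt_const hε] with n hn x hx
      rw [dist_comm, dist_eq_norm]
      calc ‖fderiv ℝ (it n) x - etaF Ω y x‖
          ≤ ‖fderiv ℝ (it n) x - etaF Ω (it n) x‖ + ‖etaF Ω (it n) x - etaF Ω y x‖ :=
            norm_sub_le_norm_sub_add_norm_sub _ _ _
        _ ≤ C * ‖v‖ * ((n+1) * (1/2)^n) + C * (‖v‖ * (1/2)^n) := by
            gcongr
            · exact hee n x hx
            · exact (hetab _ _ x hx).trans (by gcongr; exact hyn n x hx)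
        _ = C * ‖v‖ * ((n+2) * (1/2)^n) := by ring
        _ < ε := hn
    · intro n x hx
      exact (((hcd n).differentiableOn one_ne_zero).differentiableAt
        (isOpen_ball.mem_nhds hx)).hasFDerivAt
end L

/-- The total space of the leaf topology. -/
structure LeafSp (U V : Type*) where
  /-- base point -/
  fst : U
  /-- value -/
  snd : V

theorem exists_global_section {U V : Type*} [TopologicalSpace U] [SimplyConnectedSpace U]
    [LocallyPathConnectedSpace U] (B : U → Set U) (hB : ∀ c, IsOpen (B c)) (hcB : ∀ c, c ∈ B c)
    (σ : U → V → U → V) (hbij : ∀ c, ∀ x ∈ B c, Function.Bijective (fun v => σ c v x))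
    (hopen : ∀ c v c' v', IsOpen {x | x ∈ B c ∩ B c' ∧ σ c v x = σ c' v' x}) (x0 : U) (v0 : V) :
    ∃ y : U → V, y x0 = v0 ∧ ∀ c, ∃ v, ∀ᶠ x in 𝓝 c, y x = σ c v x := by
  let tX : TopologicalSpace (LeafSp U V) :=
    { IsOpen := fun W => ∀ c v, IsOpen {x | x ∈ B c ∧ LeafSp.mk x (σ c v x) ∈ W}
      isOpen_univ := fun c v => by
        convert hB c using 1
        ext x
        exact ⟨fun h => h.1, fun h => ⟨h, trivial⟩⟩
      isOpen_inter := fun s t hs ht c v => by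
        convert (hs c v).inter (ht c v) using 1
        ext x
        constructor
        · rintro ⟨h1, h2, h3⟩; exact ⟨⟨h1, h2⟩, ⟨h1, h3⟩⟩
        · rintro ⟨⟨h1, h2⟩, ⟨_, h3⟩⟩; exact ⟨h1, h2, h3⟩
      isOpen_sUnion := fun S hS c v => by
        have : {x | x ∈ B c ∧ LeafSp.mk x (σ c v x) ∈ ⋃₀ S} = ⋃ s ∈ S, {x | x ∈ B c ∧ LeafSp.mk x (σ c v x) ∈ s} := by
          ext x; simp only [mem_iUnion]
          constructor
          · rintro ⟨h, s, hs, hx⟩; exact ⟨s, hs, h, hx⟩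
          · rintro ⟨s, hs, ⟨h, hx⟩⟩; exact ⟨h, s, hs, hx⟩
        rw [this]
        exact isOpen_biUnion fun s hs => hS s hs c v }
  let tV : TopologicalSpace V := ⊥
  have : DiscreteTopology V := ⟨rfl⟩
  have isop : ∀ W : Set (LeafSp U V), IsOpen W ↔ ∀ c v, IsOpen {x | x ∈ B c ∧ LeafSp.mk x (σ c v x) ∈ W} :=
    fun W => Iff.rfl
  let p : LeafSp U V → U := LeafSp.fst
  have pc : Continuous p := by
    refine ⟨fun O hO => ?_⟩
    rw [isop]
    intro c v
    exact (hB c).inter hO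
  -- plaques are open
  have plaque : ∀ c v, ∀ O : Set U, IsOpen O →
      IsOpen {z : LeafSp U V | z.fst ∈ B c ∧ z.fst ∈ O ∧ z.snd = σ c v z.fst} := by
    intro c v O hO
    rw [isop]
    intro c' v'
    convert (hopen c' v' c v).inter hO using 1
    ext x
    constructor
    · rintro ⟨h1, h2, h3, h4⟩; exact ⟨⟨⟨h1, h2⟩, h4⟩, h3⟩
    · rintro ⟨⟨⟨h1, h2⟩, h4⟩, h3⟩; exact ⟨h1, h2, h3, h4⟩
  choose! τ hτ using fun c x hx => (hbij c x hx).2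
  have hτ' : ∀ c, ∀ x ∈ B c, ∀ v, τ c x (σ c v x) = v := fun c x hx v =>
    (hbij c x hx).1 (hτ c x hx _)
  have hcov : IsCoveringMap p := by
    refine fun c => IsEvenlyCovered.to_isEvenlyCovered_preimage (I := V) ⟨inferInstance, B c, hcB c,
      hB c, (hB c).preimage pc, ?_⟩
    refine ⟨{ toFun := fun z => (⟨z.1.fst, z.2⟩, τ c z.1.fst z.1.snd)
              invFun := fun w => ⟨LeafSp.mk w.1.1 (σ c w.2 w.1.1), w.1.2⟩
              left_inv := ?_
              right_inv := ?_
              continuous_toFun := ?_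
              continuous_invFun := ?_ }, fun x => rfl⟩
    · rintro ⟨⟨x, v⟩, hx⟩
      exact Subtype.ext (congrArg (LeafSp.mk x) (hτ c x hx v))
    · rintro ⟨⟨x, hx⟩, v⟩
      exact Prod.ext rfl (hτ' c x hx v)
    · refine Continuous.prodMk ?_ ?_
      · exact Continuous.subtype_mk (pc.comp continuous_subtype_val) _
      · rw [continuous_discrete_rng]
        intro v
        convert (plaque c v univ isOpen_univ).preimage (continuous_subtype_val) using 1
        ext ⟨⟨x, u⟩, hx⟩
        constructor
        · intro h; rw [← (show _ = v from h)]; exact ⟨hx, trivial, (hτ c x hx u).symm⟩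
        · rintro ⟨_, _, h⟩
          have h' : u = σ c v x := h
          rw [h']; exact hτ' c x hx v
    · refine Continuous.subtype_mk ?_ _
      rw [continuous_prod_of_discrete_right]
      intro v
      refine ⟨fun W hW => ?_⟩
      have := ((isop W).1 hW c v).preimage (continuous_subtype_val (p := fun x => x ∈ B c))
      convert this using 1
      ext ⟨x, hx⟩
      exact ⟨fun h => ⟨hx, h⟩, fun h => h.2⟩
  obtain ⟨s, ⟨hs0, hs⟩, -⟩ := hcov.existsUnique_continuousMap_lifts (ContinuousMap.id U) x0
    (LeafSp.mk x0 v0) rfl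
  have hs1 : ∀ x, (s x).fst = x := fun x => congrFun hs x
  refine ⟨fun x => (s x).snd, by simp only [hs0], fun c => ⟨τ c c (s c).snd, ?_⟩⟩
  have hm : s c ∈ {z : LeafSp U V | z.fst ∈ B c ∧ z.fst ∈ univ ∧ z.snd = σ c (τ c c (s c).snd) z.fst} := by
    refine ⟨by rw [hs1]; exact hcB c, trivial, ?_⟩
    rw [hs1]
    exact (hτ c c (hcB c) _).symm
  have := s.continuous.continuousAt.preimage_mem_nhds ((plaque c _ univ isOpen_univ).mem_nhds hm)
  filter_upwards [this] with x hx
  have := hx.2.2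
  rwa [hs1] at this

set_option linter.unusedSectionVars false

section D
variable {E V : Type*} [NormedAddCommGroup E] [NormedSpace ℝ E] [FiniteDimensional ℝ E]
  [NormedAddCommGroup V] [NormedSpace ℝ V] [FiniteDimensional ℝ V]

lemma sol_unique {Ω : E → E →L[ℝ] V →L[ℝ] V} {s : Set E} (hs : Convex ℝ s) {C : ℝ}
    (hC : ∀ x ∈ s, ‖Ω x‖ ≤ C) {y z : E → V}
    (hy : ∀ x ∈ s, HasFDerivAt y (etaF Ω y x) x) (hz : ∀ x ∈ s, HasFDerivAt z (etaF Ω z x) x)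
    {a : E} (ha : a ∈ s) (hya : y a = z a) : ∀ x ∈ s, y x = z x := by
  intro x hx
  have hmem : ∀ t ∈ Icc (0:ℝ) 1, a + t • (x - a) ∈ s := fun t ht =>
    hs.add_smul_sub_mem ha hx ht
  have hder : ∀ t ∈ Icc (0:ℝ) 1, HasDerivAt (fun t : ℝ => y (a + t • (x - a)) - z (a + t • (x - a)))
      (Ω (a + t • (x - a)) (x - a) (y (a + t • (x - a)) - z (a + t • (x - a)))) t := by
    intro t ht
    have hl : HasDerivAt (fun t : ℝ => a + t • (x - a)) (x - a) t := by
      simpa using ((hasDerivAt_id t).smul_const (x - a)).const_add a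
    have h1 := (hy _ (hmem t ht)).comp_hasDerivAt t hl
    have h2 := (hz _ (hmem t ht)).comp_hasDerivAt t hl
    refine (h1.sub h2).congr_deriv ?_
    exact (map_sub ((Ω (a + t • (x - a))) (x - a)) _ _).symm
  have := eq_zero_of_abs_deriv_le_mul_abs_self_of_eq_zero_right
    (f := fun t : ℝ => y (a + t • (x - a)) - z (a + t • (x - a)))
    (f' := fun t => (Ω (a + t • (x - a)) (x - a) (y (a + t • (x - a)) - z (a + t • (x - a)))))
    (K := C * ‖x - a‖) (a := 0) (b := 1)
    (fun t ht => (hder t ht).continuousAt.continuousWithinAt)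
    (fun t ht => (hder t (Ico_subset_Icc_self ht)).hasDerivWithinAt)
    (by simp [hya])
    (fun t ht => by
      refine ((Ω (a + t • (x - a))) (x - a)).le_of_opNorm_le ?_ _
      exact (Ω (a + t • (x - a))).le_of_opNorm_le (hC _ (hmem t (Ico_subset_Icc_self ht))) _)
    1 (by simp)
  simpa [sub_eq_zero] using this

lemma local_data {Ω : E → E →L[ℝ] V →L[ℝ] V} {U : Set E} (hU : IsOpen U)
    (hΩ : ContDiffOn ℝ 1 Ω U) (hfl : FlatOn Ω U) {c : E} (hc : c ∈ U) :
    ∃ r C : ℝ, 0 < r ∧ ball c r ⊆ U ∧ (∀ x ∈ ball c r, ‖Ω x‖ ≤ C) ∧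
      ∀ x ∈ ball c r, ∀ v : V, ∃ y : E → V, y x = v ∧
        ∀ x ∈ ball c r, HasFDerivAt y (etaF Ω y x) x := by
  have hcn : ContinuousAt (fun x => ‖Ω x‖) c := by
    have hcont := (hΩ.contDiffAt (hU.mem_nhds hc)).continuousAt
    exact Tendsto.norm (E := E →L[ℝ] V →L[ℝ] V) hcont
  have h1 : ∀ᶠ x in 𝓝 c, ‖Ω x‖ < ‖Ω c‖ + 1 :=
    hcn.tendsto.eventually_lt_const (lt_add_one _)
  obtain ⟨R, hR, hRs⟩ := Metric.eventually_nhds_iff_ball.1 (h1.and (hU.mem_nhds hc))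
  set C := ‖Ω c‖ + 1 with hCdef
  have hCpos : 0 < C := by positivity
  set r := min (R/3) (1/(8*C)) with hr
  have hr0 : 0 < r := by positivity
  have hr1 : r ≤ R/3 := min_le_left _ _
  have hr2 : r ≤ 1/(8*C) := min_le_right _ _
  have hsub : ball c r ⊆ ball c R := ball_subset_ball (by linarith)
  refine ⟨r, C, hr0, fun x hx => (hRs x (hsub hx)).2, fun x hx => (hRs x (hsub hx)).1.le, ?_⟩
  intro x hx v
  have hb : ball x (2*r) ⊆ ball c R := by
    intro z hz
    have := dist_triangle z x c
    rw [mem_ball] at *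
    linarith
  obtain ⟨y, hy1, hy2⟩ := local_exists (Ω := Ω) (c := x) (r := 2*r) (C := C)
    (hΩ.mono fun z hz => (hRs z (hb hz)).2) (fun z hz => hfl z (hRs z (hb hz)).2)
    (fun z hz => (hRs z (hb hz)).1.le)
    (by
      rw [le_div_iff₀ (by positivity)] at hr2
      linarith) hCpos.le (by positivity) v
  refine ⟨y, hy1, fun z hz => hy2 z ?_⟩
  have := dist_triangle z c x
  rw [mem_ball] at *
  rw [dist_comm c x] at this
  linarith

lemma global_exists {Ω : E → E →L[ℝ] V →L[ℝ] V} {U : Set E} (hU : IsOpen U)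
    (hsc : SimplyConnectedSpace U)
    (hΩ : ContDiffOn ℝ 1 Ω U) (hfl : FlatOn Ω U) {x0 : E} (hx0 : x0 ∈ U) (v0 : V) :
    ∃ y : E → V, y x0 = v0 ∧ ∀ x ∈ U, HasFDerivAt y (etaF Ω y x) x := by
  have hlp : LocallyPathConnectedSpace U := hU.locallyPathConnectedSpace
  choose r C hr hrU hC hex using fun c : U => local_data hU hΩ hfl c.2
  choose σ hσ1 hσ2 using fun c : U => hex c c (mem_ball_self (hr c))
  have huniq : ∀ (c : U) {y z : E → V},
      (∀ x ∈ ball (c:E) (r c), HasFDerivAt y (etaF Ω y x) x) →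
      (∀ x ∈ ball (c:E) (r c), HasFDerivAt z (etaF Ω z x) x) →
      ∀ {a : E}, a ∈ ball (c:E) (r c) → y a = z a → ∀ x ∈ ball (c:E) (r c), y x = z x :=
    fun c y z hy hz a ha hya => sol_unique (convex_ball _ _) (hC c) hy hz ha hya
  have hcU : ∀ (c : U), IsOpen {x : U | (x:E) ∈ ball (c:E) (r c)} := fun c =>
    isOpen_ball.preimage continuous_subtype_val
  obtain ⟨y, hy0, hy⟩ := exists_global_section (U := U) (V := V)
    (fun c => {x : U | (x:E) ∈ ball (c:E) (r c)}) hcU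
    (fun c => mem_ball_self (hr c)) (fun c v x => σ c v x)
    (fun c x hx => by
      constructor
      · intro v w hvw
        have := huniq c (hσ2 c v) (hσ2 c w) hx hvw c (mem_ball_self (hr c))
        rwa [hσ1, hσ1] at this
      · intro w
        obtain ⟨z, hz1, hz2⟩ := hex c x hx w
        refine ⟨z c, ?_⟩
        have := huniq c (hσ2 c (z c)) hz2 (mem_ball_self (hr c)) (hσ1 c _) x hx
        exact this.trans hz1)
    (fun c v c' v' => by
      rw [isOpen_iff_mem_nhds]
      rintro x ⟨⟨hx1, hx2⟩, hx3⟩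
      filter_upwards [(hcU c).mem_nhds hx1, (hcU c').mem_nhds hx2] with z hz1 hz2
      refine ⟨⟨hz1, hz2⟩, ?_⟩
      exact sol_unique (s := ball (c:E) (r c) ∩ ball (c':E) (r c'))
        ((convex_ball _ _).inter (convex_ball _ _)) (fun x hx => hC c x hx.1)
        (fun x hx => hσ2 c v x hx.1) (fun x hx => hσ2 c' v' x hx.2) ⟨hx1, hx2⟩ hx3 z ⟨hz1, hz2⟩)
    ⟨x0, hx0⟩ v0
  classical
  refine ⟨fun x => if h : x ∈ U then y ⟨x, h⟩ else 0, by simp [hx0, hy0], ?_⟩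
  intro x hx
  obtain ⟨v, hv⟩ := hy ⟨x, hx⟩
  have hev : (fun x => if h : x ∈ U then y ⟨x, h⟩ else 0) =ᶠ[𝓝 x] σ ⟨x, hx⟩ v := by
    have h1 : ∀ᶠ z in 𝓝[U] x, ∀ h : z ∈ U, y ⟨z, h⟩ = σ ⟨x, hx⟩ v z := by
      rw [nhdsWithin_eq_map_subtype_coe hx, eventually_map]
      filter_upwards [hv] with z hz h
      exact hz
    rw [hU.nhdsWithin_eq hx] at h1
    filter_upwards [h1, hU.mem_nhds hx] with z hz hzU
    rw [dif_pos hzU]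
    exact hz hzU
  have h2 := hσ2 ⟨x, hx⟩ v x (mem_ball_self (hr _))
  have h3 := h2.congr_of_eventuallyEq hev
  convert h3 using 1
  exact congrArg (Ω x).flip hev.eq_of_nhds

lemma sol_smooth {Ω : E → E →L[ℝ] V →L[ℝ] V} {U : Set E} (hU : IsOpen U)
    (hΩ : ContDiffOn ℝ (⊤ : ℕ∞) Ω U) {y : E → V}
    (hy : ∀ x ∈ U, HasFDerivAt y (etaF Ω y x) x) : ContDiffOn ℝ (⊤ : ℕ∞) y U := by
  rw [contDiffOn_infty]
  intro n
  induction n with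
  | zero =>
    rw [Nat.cast_zero, contDiffOn_zero]
    exact fun x hx => (hy x hx).continuousAt.continuousWithinAt
  | succ n ih =>
    rw [Nat.cast_succ, contDiffOn_succ_iff_fderiv_of_isOpen hU]
    refine ⟨fun x hx => (hy x hx).differentiableAt.differentiableWithinAt, by simp, ?_⟩
    refine (etaF_contDiffOn ((contDiffOn_infty.1 hΩ) n) ih).congr ?_
    exact fun x hx => (hy x hx).fderiv

end D

lemma sum_smooth_gen {E W α : Type*} [NormedAddCommGroup E] [NormedSpace ℝ E]
    [NormedAddCommGroup W] [NormedSpace ℝ W] (s : Finset α) (b : α → E → ℝ) (T : α → W)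
    {U : Set E} {n : WithTop ℕ∞} (hb : ∀ a, ContDiffOn ℝ n (b a) U) :
    ContDiffOn ℝ n (fun x => ∑ a ∈ s, b a x • T a) U :=
  ContDiffOn.sum fun a _ => (hb a).smul contDiffOn_const

lemma sum_fderiv_gen {E W α : Type*} [NormedAddCommGroup E] [NormedSpace ℝ E]
    [NormedAddCommGroup W] [NormedSpace ℝ W] (s : Finset α) (b : α → E → ℝ) (T : α → W)
    {x : E} (hb : ∀ a, DifferentiableAt ℝ (b a) x) (w : E) :
    fderiv ℝ (fun x => ∑ a ∈ s, b a x • T a) x w = ∑ a ∈ s, fderiv ℝ (b a) x w • T a := by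
  have h : HasFDerivAt (fun x => ∑ a ∈ s, b a x • T a)
      (∑ a ∈ s, (fderiv ℝ (b a) x).smulRight (T a)) x :=
    HasFDerivAt.fun_sum fun a _ => (hb a).hasFDerivAt.smul_const _
  rw [h.fderiv]
  simp

section G
variable {m : ℕ} {ι : Type} [Fintype ι] [DecidableEq ι]

/-- elementary constant tensor -/
def elT (k : Fin m) (i j : ι) : (Fin m → ℝ) →L[ℝ] (ι → ℝ) →L[ℝ] (ι → ℝ) :=
  (ContinuousLinearMap.proj (R := ℝ) (φ := fun _ : Fin m => ℝ) k).smulRight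
    ((ContinuousLinearMap.proj (R := ℝ) (φ := fun _ : ι => ℝ) i).smulRight (Pi.single j (1:ℝ)))

/-- the connection form -/
def omM (B : Fin m → (Fin m → ℝ) → Matrix ι ι ℝ) (x : Fin m → ℝ) :
    (Fin m → ℝ) →L[ℝ] (ι → ℝ) →L[ℝ] (ι → ℝ) :=
  ∑ k, ∑ i, ∑ j, (B k x i j) • elT k i j

lemma el_sum (A : Fin m → Matrix ι ι ℝ) (w : Fin m → ℝ) (v : ι → ℝ) :
    (∑ k, ∑ i, ∑ j, (A k i j) • elT k i j) w v = v ᵥ* ∑ k, w k • A k := by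
  ext j
  simp only [_root_.sum_apply, smul_apply, elT,
    ContinuousLinearMap.smulRight_apply, ContinuousLinearMap.proj_apply, Finset.sum_apply,
    Pi.smul_apply, smul_eq_mul, Pi.single_apply, mul_ite, mul_one, mul_zero,
    Finset.sum_ite_eq, Finset.mem_univ, if_true, Matrix.vecMul, dotProduct, Matrix.sum_apply,
    Matrix.smul_apply, Finset.mul_sum]
  rw [Finset.sum_comm]
  refine Finset.sum_congr rfl fun i _ => Finset.sum_congr rfl fun k _ => ?_
  ring

lemma om_apply (B : Fin m → (Fin m → ℝ) → Matrix ι ι ℝ) (x w : Fin m → ℝ) (v : ι → ℝ) :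
    omM B x w v = v ᵥ* ∑ k, w k • B k x := el_sum (fun k => B k x) w v

lemma om_eq (B : Fin m → (Fin m → ℝ) → Matrix ι ι ℝ) :
    omM B = fun x => ∑ a : Fin m × ι × ι, B a.1 x a.2.1 a.2.2 • elT a.1 a.2.1 a.2.2 := by
  funext x
  rw [omM, Fintype.sum_prod_type]
  simp only [Fintype.sum_prod_type]

lemma om_smooth {B : Fin m → (Fin m → ℝ) → Matrix ι ι ℝ} {U : Set (Fin m → ℝ)} {n : WithTop ℕ∞}
    (hB : ∀ k i j, ContDiffOn ℝ n (fun q => B k q i j) U) : ContDiffOn ℝ n (omM B) U := by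
  have := sum_smooth_gen Finset.univ (fun (a : Fin m × ι × ι) x => B a.1 x a.2.1 a.2.2)
    (fun a => elT a.1 a.2.1 a.2.2) (fun a => hB a.1 a.2.1 a.2.2)
  rw [← om_eq] at this
  exact this

lemma fd_expand (b : (Fin m → ℝ) → ℝ) (x w : Fin m → ℝ) :
    fderiv ℝ b x w = ∑ l, w l * pdr l b x := by
  conv_lhs => rw [pi_eq_sum_univ' w]
  rw [map_sum]
  refine Finset.sum_congr rfl fun l _ => ?_
  rw [map_smul]; rfl

lemma om_fderiv {B : Fin m → (Fin m → ℝ) → Matrix ι ι ℝ} {x : Fin m → ℝ}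
    (hB : ∀ k i j, DifferentiableAt ℝ (fun q => B k q i j) x) (w u : Fin m → ℝ) (v : ι → ℝ) :
    fderiv ℝ (omM B) x w u v = v ᵥ* ∑ k, u k • ∑ l, w l • 
      (Matrix.of fun i j => pdr l (fun q => B k q i j) x) := by
  have := sum_fderiv_gen Finset.univ (fun (a : Fin m × ι × ι) x => B a.1 x a.2.1 a.2.2)
    (fun a => elT a.1 a.2.1 a.2.2) (fun a => hB a.1 a.2.1 a.2.2) w
  rw [← om_eq] at this
  rw [this, ← el_sum, Fintype.sum_prod_type]
  simp only [Fintype.sum_prod_type]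
  simp only [fd_expand, Matrix.sum_apply, Matrix.smul_apply, Matrix.of_apply, smul_eq_mul]

lemma om_flat {B : Fin m → (Fin m → ℝ) → Matrix ι ι ℝ} {U : Set (Fin m → ℝ)}
    (hB : ∀ k i j, ∀ x ∈ U, DifferentiableAt ℝ (fun q => B k q i j) x)
    (hfl : ∀ k l, ∀ x ∈ U, ∀ i j, pdr k (fun q => B l q i j) x - pdr l (fun q => B k q i j) x
      = (B l x * B k x - B k x * B l x) i j) : FlatOn (omM B) U := by
  intro x hx w u v
  rw [om_fderiv (fun k i j => hB k i j x hx), om_fderiv (fun k i j => hB k i j x hx),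
    om_apply, om_apply, om_apply, om_apply, Matrix.vecMul_vecMul, Matrix.vecMul_vecMul,
    ← Matrix.vecMul_sub, ← Matrix.vecMul_sub]
  congr 1
  simp only [Finset.smul_sum, Finset.sum_mul_sum]
  rw [Finset.sum_comm (f := fun k l => w k • u l • _), Finset.sum_comm (f := fun k l => w k • B k x * u l • B l x),
    ← Finset.sum_sub_distrib, ← Finset.sum_sub_distrib]
  refine Finset.sum_congr rfl fun k _ => ?_
  rw [← Finset.sum_sub_distrib, ← Finset.sum_sub_distrib]
  refine Finset.sum_congr rfl fun l _ => ?_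
  have : (Matrix.of fun i j => pdr l (fun q => B k q i j) x) - (Matrix.of fun i j => pdr k (fun q => B l q i j) x)
     = B k x * B l x - B l x * B k x := by
    ext i j
    exact hfl l k x hx i j
  rw [smul_comm (w l) (u k), ← smul_sub, ← smul_sub, this]
  simp only [smul_sub, Matrix.smul_mul, Matrix.mul_smul]
  rw [smul_comm (w l) (u k)]

lemma matrix_exists {B : Fin m → (Fin m → ℝ) → Matrix ι ι ℝ} {U : Set (Fin m → ℝ)} (hU : IsOpen U)
    (hsc : SimplyConnectedSpace U)
    (hB : ∀ k i j, ContDiffOn ℝ (⊤ : ℕ∞) (fun q => B k q i j) U)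
    (hfl : ∀ k l, ∀ x ∈ U, ∀ i j, pdr k (fun q => B l q i j) x - pdr l (fun q => B k q i j) x
      = (B l x * B k x - B k x * B l x) i j) {x0 : Fin m → ℝ} (hx0 : x0 ∈ U) :
    ∃ Y : (Fin m → ℝ) → Matrix ι ι ℝ, Y x0 = 1 ∧
      (∀ i j, ContDiffOn ℝ (⊤ : ℕ∞) (fun q => Y q i j) U) ∧
      ∀ k, ∀ x ∈ U, ∀ i j, pdr k (fun q => Y q i j) x = (Y x * B k x) i j := by
  have hs := om_smooth hB
  have hf : FlatOn (omM B) U := om_flat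
    (fun k i j x hx => ((hB k i j).contDiffAt (hU.mem_nhds hx)).differentiableAt (by simp)) hfl
  choose y hy0 hy using fun i => global_exists hU hsc (hs.of_le (by simp)) hf hx0 ((1 : Matrix ι ι ℝ) i)
  refine ⟨fun x => Matrix.of fun i => y i x, ?_, ?_, ?_⟩
  · ext i j; simp [hy0]
  · intro i j
    exact contDiffOn_pi.1 (sol_smooth hU hs (hy i)) j
  · intro k x hx i j
    have h := hasFDerivAt_pi'.1 (hy i x hx) j
    have h' : HasFDerivAt (fun q => y i q j) _ x := h
    show fderiv ℝ (fun q => y i q j) x (Pi.single k 1) = _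
    rw [h'.fderiv]
    show omM B x (Pi.single k 1) (y i x) j = _
    rw [om_apply]
    have : ∑ l, (Pi.single k (1:ℝ) : Fin m → ℝ) l • B l x = B k x := by
      rw [Finset.sum_eq_single k] <;> simp +contextual
    rw [this]
    rfl
end G

section H
variable {m : ℕ}

lemma tA_cc (P : Matrix (Fin m) (Fin m) ℝ) (h : Fin m → ℝ) (i j : Fin m) :
    tildeA P h i.castSucc j.castSucc = P i j := by simp [tildeA]
lemma tA_cl (P : Matrix (Fin m) (Fin m) ℝ) (h : Fin m → ℝ) (i : Fin m) :
    tildeA P h i.castSucc (Fin.last m) = - h i := by simp [tildeA]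
lemma tA_lc (P : Matrix (Fin m) (Fin m) ℝ) (h : Fin m → ℝ) (j : Fin m) :
    tildeA P h (Fin.last m) j.castSucc = h j := by simp [tildeA]
lemma tA_ll (P : Matrix (Fin m) (Fin m) ℝ) (h : Fin m → ℝ) :
    tildeA P h (Fin.last m) (Fin.last m) = 0 := by simp [tildeA]
lemma hg_c (g : Fin m → ℝ) (i : Fin m) : hatg g i.castSucc = g i := by simp [hatg]
lemma hg_l (g : Fin m → ℝ) : hatg g (Fin.last m) = 0 := by simp [hatg]

lemma pdr_const (k : Fin m) (c : ℝ) (x : Fin m → ℝ) : pdr k (fun _ => c) x = 0 := by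
  simp [pdr]

lemma pdr_neg (k : Fin m) (b : (Fin m → ℝ) → ℝ) (x : Fin m → ℝ) :
    pdr k (fun q => - b q) x = - pdr k b x := by
  unfold pdr
  rw [fderiv_fun_neg]; rfl

lemma pdr_comp {N : ℕ} (k : Fin m) {b : (Fin m → ℝ) → (Fin N → ℝ)} {x : Fin m → ℝ}
    (hb : DifferentiableAt ℝ b x) (i : Fin N) : pdr k (fun q => b q i) x = pd k b x i := by
  unfold pdr pd
  have h := hasFDerivAt_pi'.1 hb.hasFDerivAt i
  have h' : HasFDerivAt (fun q => b q i) _ x := h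
  rw [h'.fderiv]; rfl

lemma pdr_mul_sum {α : Type*} (s : Finset α) (k : Fin m) {b c : α → (Fin m → ℝ) → ℝ} {x : Fin m → ℝ}
    (hb : ∀ a, DifferentiableAt ℝ (b a) x) (hc : ∀ a, DifferentiableAt ℝ (c a) x) :
    pdr k (fun q => ∑ a ∈ s, b a q * c a q) x
      = ∑ a ∈ s, (pdr k (b a) x * c a x + b a x * pdr k (c a) x) := by
  unfold pdr
  have h : HasFDerivAt (fun q => ∑ a ∈ s, b a q * c a q)
      (∑ a ∈ s, (b a x • fderiv ℝ (c a) x + c a x • fderiv ℝ (b a) x)) x :=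
    HasFDerivAt.fun_sum fun a _ => (hb a).hasFDerivAt.mul (hc a).hasFDerivAt
  rw [h.fderiv]
  simp only [_root_.sum_apply, add_apply, smul_apply, smul_eq_mul]
  exact Finset.sum_congr rfl fun a _ => by ring

lemma const_of_pdr {U : Set (Fin m → ℝ)} (hU : IsOpen U) (hc : IsPreconnected U)
    {b : (Fin m → ℝ) → ℝ} (hb : ∀ x ∈ U, DifferentiableAt ℝ b x)
    (h0 : ∀ k, ∀ x ∈ U, pdr k b x = 0) {x y : Fin m → ℝ} (hx : x ∈ U) (hy : y ∈ U) : b x = b y := by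
  refine hU.is_const_of_fderiv_eq_zero hc (fun x hx => (hb x hx).differentiableWithinAt) ?_ hx hy
  intro z hz
  ext w
  rw [fd_expand]
  simp [h0 _ z hz]

lemma tilde_skew {P : Matrix (Fin m) (Fin m) ℝ} (hP : Pᵀ = -P) (h : Fin m → ℝ) :
    (tildeA P h)ᵀ = - tildeA P h := by
  ext i j
  have : ∀ i j, P j i = - P i j := fun i j => congrFun (congrFun hP i) j
  refine Fin.lastCases ?_ (fun i => ?_) i <;> refine Fin.lastCases ?_ (fun j => ?_) j <;>
    simp [tA_cc, tA_cl, tA_lc, tA_ll]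
  exact this i j

lemma hatg_dot (a b : Fin m → ℝ) : hatg a ⬝ᵥ hatg b = a ⬝ᵥ b := by
  simp [dotProduct, Fin.sum_univ_castSucc, hg_c, hg_l]

lemma frame_exists
    (U : Set (Fin m → ℝ)) (hU : IsOpen U) (hsc : SimplyConnectedSpace U)
    (P : Fin m → (Fin m → ℝ) → Matrix (Fin m) (Fin m) ℝ)
    (g h : Fin m → (Fin m → ℝ) → (Fin m → ℝ))
    (hP : ∀ k i j, ContDiffOn ℝ (⊤ : ℕ∞) (fun q => P k q i j) U)
    (hg : ∀ k, ContDiffOn ℝ (⊤ : ℕ∞) (g k) U) (hh : ∀ k, ContDiffOn ℝ (⊤ : ℕ∞) (h k) U)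
    (hskew : ∀ k, ∀ q ∈ U, (P k q)ᵀ = -(P k q))
    (hcodazzig : ∀ k l, ∀ q ∈ U,
      pd k (g l) q - pd l (g k) q = P l q *ᵥ g k q - P k q *ᵥ g l q)
    (hcodazzih : ∀ k l, ∀ q ∈ U,
      pd k (h l) q - pd l (h k) q = P l q *ᵥ h k q - P k q *ᵥ h l q)
    (hcompat : ∀ k l, ∀ q ∈ U, g k q ⬝ᵥ h l q = g l q ⬝ᵥ h k q)
    (hgauss : ∀ k l, ∀ q ∈ U,
      pdM k (P l) q - pdM l (P k) q
        = P l q * P k q - P k q * P l q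
          + (Matrix.vecMulVec (h k q) (h l q) - Matrix.vecMulVec (h l q) (h k q)))
    {x0 : Fin m → ℝ} (hx0 : x0 ∈ U) :
    ∃ (F : (Fin m → ℝ) → Matrix (Fin (m + 1)) (Fin (m + 1)) ℝ)
      (f : (Fin m → ℝ) → (Fin (m + 1) → ℝ)), F x0 = 1 ∧
      (∀ i j, ContDiffOn ℝ (⊤ : ℕ∞) (fun q => F q i j) U) ∧
      ContDiffOn ℝ (⊤ : ℕ∞) f U ∧
      (∀ k, ∀ q ∈ U, pdM k F q = F q * tildeA (P k q) (h k q)) ∧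
      (∀ k, ∀ q ∈ U, pd k f q = F q *ᵥ hatg (g k q)) := by
  have dif : ∀ {N : ℕ} {b : (Fin m → ℝ) → (Fin N → ℝ)}, ContDiffOn ℝ (⊤ : ℕ∞) b U → ∀ x ∈ U,
      DifferentiableAt ℝ b x := fun hb x hx =>
    (hb.contDiffAt (hU.mem_nhds hx)).differentiableAt (by simp)
  obtain ⟨Y, hY0, hYs, hYd⟩ := matrix_exists (ι := Fin (m+1) ⊕ Unit)
    (B := fun k x => Matrix.fromBlocks (tildeA (P k x) (h k x))
      (Matrix.of fun i (_ : Unit) => hatg (g k x) i) 0 0) hU hsc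
    (by
      rintro k (i | i) (j | j)
      · simp only [Matrix.fromBlocks_apply₁₁]
        refine Fin.lastCases ?_ (fun i => ?_) i <;> refine Fin.lastCases ?_ (fun j => ?_) j
        · simp only [tA_ll]; exact contDiffOn_const
        · simp only [tA_lc]; exact contDiffOn_pi.1 (hh k) j
        · simp only [tA_cl]; exact (contDiffOn_pi.1 (hh k) i).neg
        · simp only [tA_cc]; exact hP k i j
      · simp only [Matrix.fromBlocks_apply₁₂, Matrix.of_apply]
        refine Fin.lastCases ?_ (fun i => ?_) i
        · simp only [hg_l]; exact contDiffOn_const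
        · simp only [hg_c]; exact contDiffOn_pi.1 (hg k) i
      · exact contDiffOn_const
      · exact contDiffOn_const)
    (by
      intro k l x hx
      simp only [Matrix.fromBlocks_multiply, Matrix.mul_zero, add_zero, Matrix.zero_mul]
      have sk : ∀ k i j, P k x j i = - P k x i j := fun k i j =>
        congrFun (congrFun (hskew k x hx) i) j
      rintro (i | i) (j | j)
      · simp only [Matrix.fromBlocks_apply₁₁, Matrix.sub_apply, Matrix.mul_apply, Fin.sum_univ_castSucc]
        refine Fin.lastCases ?_ (fun i => ?_) i <;> refine Fin.lastCases ?_ (fun j => ?_) j <;>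
          simp only [tA_cc, tA_cl, tA_lc, tA_ll, pdr_const, pdr_neg]
        · simp only [mul_zero, add_zero, sub_self, mul_neg, Finset.sum_neg_distrib]
          rw [Finset.sum_congr rfl fun a _ => mul_comm (h l x a) (h k x a)]
          ring
        · rw [pdr_comp k (dif (hh l) x hx), pdr_comp l (dif (hh k) x hx)]
          have := congrFun (hcodazzih k l x hx) j
          simp only [Pi.sub_apply, Matrix.mulVec, dotProduct] at this
          rw [this, Finset.sum_congr rfl fun a _ => show h l x a * P k x a j = - (P k x j a * h l x a) by
            rw [sk k j a]; ring, Finset.sum_congr rfl fun a _ => show h k x a * P l x a j = - (P l x j a * h k x a) by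
            rw [sk l j a]; ring]
          simp only [Finset.sum_neg_distrib]
          ring
        · rw [pdr_comp k (dif (hh l) x hx), pdr_comp l (dif (hh k) x hx)]
          have := congrFun (hcodazzih k l x hx) i
          simp only [Pi.sub_apply, Matrix.mulVec, dotProduct] at this
          simp only [mul_neg, Finset.sum_neg_distrib]
          linarith
        · have := congrFun (congrFun (hgauss k l x hx) i) j
          simp only [pdM, Matrix.sub_apply, Matrix.add_apply, Matrix.of_apply, Matrix.mul_apply,
            Matrix.vecMulVec_apply] at this
          linarith
      · simp only [Matrix.fromBlocks_apply₁₂, Matrix.sub_apply, Matrix.mul_apply, Fin.sum_univ_castSucc, Matrix.of_apply]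
        refine Fin.lastCases ?_ (fun i => ?_) i <;>
          simp only [tA_cc, tA_cl, tA_lc, tA_ll, hg_l, hg_c, pdr_const]
        · have := hcompat k l x hx
          simp only [dotProduct] at this
          rw [Finset.sum_congr rfl fun a _ => mul_comm (h l x a) (g k x a),
            Finset.sum_congr rfl fun a _ => mul_comm (h k x a) (g l x a), this]
          ring
        · rw [pdr_comp k (dif (hg l) x hx), pdr_comp l (dif (hg k) x hx)]
          have := congrFun (hcodazzig k l x hx) i
          simp only [Pi.sub_apply, Matrix.mulVec, dotProduct] at this
          linarith
      · simp [pdr_const]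
      · simp [pdr_const])
    hx0
  have hfs : ContDiffOn ℝ (⊤ : ℕ∞) (fun q i => Y q (Sum.inl i) (Sum.inr ())) U :=
    contDiffOn_pi.2 fun i => hYs _ _
  refine ⟨fun q => Matrix.of fun i j => Y q (Sum.inl i) (Sum.inl j),
    fun q i => Y q (Sum.inl i) (Sum.inr ()), ?_, ?_, hfs, ?_, ?_⟩
  · ext i j
    simp [hY0, Matrix.one_apply]
  · exact fun i j => hYs _ _
  · intro k q hq
    ext i j
    have := hYd k q hq (Sum.inl i) (Sum.inl j)
    simpa [pdM, Matrix.mul_apply] using this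
  · intro k q hq
    ext i
    rw [← pdr_comp k (dif hfs q hq)]
    have := hYd k q hq (Sum.inl i) (Sum.inr ())
    simpa [Matrix.mul_apply, Matrix.mulVec, dotProduct] using this

end H

end Helpers

/-- Realization of frontal bundles in the Euclidean case `c = 0`:
a frontal bundle over a simply connected domain, given in an adapted orthonormal frame by
connection matrices `P_k` and homomorphism components `g_k, h_k` satisfying the coherence,
compatibility and Gauss equations, is realized by a frontal `(f, ν)` in `ℝ^{m+1}`. -/
theorem realization_frontal_bundle_euclidean {m : ℕ}
    (U : Set (Fin m → ℝ)) (hU : IsOpen U)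
    (hconn : IsConnected U) (hsc : SimplyConnectedSpace U)
    (P : Fin m → (Fin m → ℝ) → Matrix (Fin m) (Fin m) ℝ)
    (g h : Fin m → (Fin m → ℝ) → (Fin m → ℝ))
    (hP : ∀ k i j, ContDiffOn ℝ (⊤ : ℕ∞) (fun q => P k q i j) U)
    (hg : ∀ k, ContDiffOn ℝ (⊤ : ℕ∞) (g k) U) (hh : ∀ k, ContDiffOn ℝ (⊤ : ℕ∞) (h k) U)
    (hskew : ∀ k, ∀ q ∈ U, (P k q)ᵀ = -(P k q))
    (hcodazzig : ∀ k l, ∀ q ∈ U,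
      pd k (g l) q - pd l (g k) q = P l q *ᵥ g k q - P k q *ᵥ g l q)
    (hcodazzih : ∀ k l, ∀ q ∈ U,
      pd k (h l) q - pd l (h k) q = P l q *ᵥ h k q - P k q *ᵥ h l q)
    (hcompat : ∀ k l, ∀ q ∈ U, g k q ⬝ᵥ h l q = g l q ⬝ᵥ h k q)
    (hgauss : ∀ k l, ∀ q ∈ U,
      pdM k (P l) q - pdM l (P k) q
        = P l q * P k q - P k q * P l q
          + (Matrix.vecMulVec (h k q) (h l q) - Matrix.vecMulVec (h l q) (h k q))) :
    ∃ (F : (Fin m → ℝ) → Matrix (Fin (m + 1)) (Fin (m + 1)) ℝ)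
      (f : (Fin m → ℝ) → (Fin (m + 1) → ℝ)),
      (∀ i j, ContDiffOn ℝ (⊤ : ℕ∞) (fun q => F q i j) U) ∧
      ContDiffOn ℝ (⊤ : ℕ∞) f U ∧
      (∀ q ∈ U, (F q)ᵀ * F q = 1 ∧ (F q).det = 1) ∧
      (∀ k, ∀ q ∈ U, pdM k F q = F q * tildeA (P k q) (h k q)) ∧
      (∀ k, ∀ q ∈ U, pd k f q = F q *ᵥ hatg (g k q)) ∧
      (∀ ν : (Fin m → ℝ) → (Fin (m + 1) → ℝ),
        (∀ q, ν q = fun i => F q i (Fin.last m)) →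
        (∀ q ∈ U, ν q ⬝ᵥ ν q = 1) ∧
        (∀ k, ∀ q ∈ U, pd k f q ⬝ᵥ ν q = 0) ∧
        (∀ k l, ∀ q ∈ U, pd k f q ⬝ᵥ pd l f q = g k q ⬝ᵥ g l q) ∧
        (∀ k l, ∀ q ∈ U, pd k f q ⬝ᵥ pd l ν q = -(g k q ⬝ᵥ h l q)) ∧
        (∀ k l, ∀ q ∈ U, pd k ν q ⬝ᵥ pd l ν q = h k q ⬝ᵥ h l q)) := by
  obtain ⟨x0, hx0⟩ := hconn.nonempty
  obtain ⟨F, f, hF0, hFs, hfs, hFd, hfd⟩ := frame_exists U hU hsc P g h hP hg hh hskew hcodazzig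
    hcodazzih hcompat hgauss hx0
  have hFdiff : ∀ i j, ∀ x ∈ U, DifferentiableAt ℝ (fun q => F q i j) x := fun i j x hx =>
    ((hFs i j).contDiffAt (hU.mem_nhds hx)).differentiableAt (by simp)
  have hFe : ∀ k, ∀ x ∈ U, ∀ i j, pdr k (fun q => F q i j) x
      = (F x * tildeA (P k x) (h k x)) i j := fun k x hx i j =>
    congrFun (congrFun (hFd k x hx) i) j
  have hFF : ∀ x ∈ U, F x * (F x)ᵀ = 1 := by
    intro x hx
    ext i j
    have hc : (F x * (F x)ᵀ) i j = (F x0 * (F x0)ᵀ) i j := by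
      refine const_of_pdr (b := fun q => (F q * (F q)ᵀ) i j) hU hconn.isPreconnected ?_ ?_ hx hx0
      · intro z hz
        simp only [Matrix.mul_apply, Matrix.transpose_apply]
        exact DifferentiableAt.fun_sum fun a _ => (hFdiff i a z hz).mul (hFdiff j a z hz)
      · intro k z hz
        simp only [Matrix.mul_apply, Matrix.transpose_apply]
        rw [pdr_mul_sum _ _ (fun a => hFdiff i a z hz) (fun a => hFdiff j a z hz)]
        simp only [hFe k z hz, Finset.sum_add_distrib]
        have e : F z * tildeA (P k z) (h k z) * (F z)ᵀ
            + F z * (F z * tildeA (P k z) (h k z))ᵀ = 0 := by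
          rw [Matrix.transpose_mul, tilde_skew (hskew k z hz), Matrix.neg_mul, Matrix.mul_neg,
            Matrix.mul_assoc, add_neg_cancel]
        exact congrFun (congrFun e i) j
    rw [hc, hF0]
    simp
  have hFF' : ∀ x ∈ U, (F x)ᵀ * F x = 1 := fun x hx => mul_eq_one_comm.1 (hFF x hx)
  have hdet : ∀ x ∈ U, (F x).det = 1 := by
    have hcont : ContinuousOn (fun x => (F x).det) U := by
      have : ContinuousOn F U := continuousOn_pi.2 fun i => continuousOn_pi.2 fun j =>
        (hFs i j).continuousOn
      exact continuous_id.matrix_det.comp_continuousOn this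
    have hsq : Set.EqOn ((fun x => (F x).det) ^ 2) 1 U := by
      intro x hx
      have := congrArg Matrix.det (hFF x hx)
      rw [Matrix.det_mul, Matrix.det_transpose, Matrix.det_one] at this
      simpa [sq] using this
    rcases hconn.isPreconnected.eq_one_or_eq_neg_one_of_sq_eq hcont hsq with h1 | h1
    · exact fun x hx => h1 hx
    · have := h1 hx0
      simp only [hF0, Matrix.det_one, Pi.neg_apply, Pi.one_apply] at this
      norm_num at this
  have hdot : ∀ x ∈ U, ∀ a b, (F x *ᵥ a) ⬝ᵥ (F x *ᵥ b) = a ⬝ᵥ b := by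
    intro x hx a b
    rw [Matrix.dotProduct_mulVec, ← Matrix.mulVec_transpose, Matrix.mulVec_mulVec, hFF' x hx,
      Matrix.one_mulVec]
  refine ⟨F, f, hFs, hfs, fun q hq => ⟨hFF' q hq, hdet q hq⟩, hFd, hfd, ?_⟩
  intro ν hν
  have hν' : ν = fun q i => F q i (Fin.last m) := funext hν
  have hνd : ∀ x ∈ U, DifferentiableAt ℝ ν x := by
    intro x hx
    rw [hν']
    exact differentiableAt_pi.2 fun i => hFdiff i _ x hx
  have hνe : ∀ x, ν x = F x *ᵥ Pi.single (Fin.last m) 1 := by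
    intro x
    rw [hν x]
    ext i
    simp
  have hpν : ∀ k, ∀ x ∈ U, pd k ν x = F x *ᵥ hatg (- h k x) := by
    intro k x hx
    ext i
    rw [← pdr_comp k (hνd x hx), hν']
    rw [hFe k x hx]
    simp only [Matrix.mul_apply, Matrix.mulVec, dotProduct, Fin.sum_univ_castSucc, tA_cl, tA_ll,
      hg_c, hg_l, Pi.neg_apply]
  refine ⟨?_, ?_, ?_, ?_, ?_⟩
  · intro q hq
    rw [hνe, hdot q hq]
    simp
  · intro k q hq
    rw [hfd k q hq, hνe, hdot q hq]
    simp [hg_l]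
  · intro k l q hq
    rw [hfd k q hq, hfd l q hq, hdot q hq, hatg_dot]
  · intro k l q hq
    rw [hfd k q hq, hpν l q hq, hdot q hq, hatg_dot, dotProduct_neg]
  · intro k l q hq
    rw [hpν k q hq, hpν l q hq, hdot q hq, hatg_dot, neg_dotProduct, dotProduct_neg, neg_neg]
end
end

section
/- Let U ⊆ ℝ^m be a connected and simply connected open set. Let P_1,…,P_m : U → ℝ^{m×m} be smooth with each P_k(q) skew-symmetric, and let g_1,…,g_m : U → ℝ^m be smooth, satisfying on U for all k, l ∈ {1,…,m}: (i) ∂_k g_l − ∂_l g_k = P_l g_k − P_k g_l (the coherence condition), and (ii) ∂_k P_l − ∂_l P_k = P_l P_k − P_k P_l (flatness of the connection, i.e. the curvature condition R^D = 0 corresponding to c = 0). Then there exist smooth maps F : U → SO(m) and f : U → ℝ^m with ∂_k F = F P_k and ∂_k f = F g_k on U for all k. In particular, every flat coherent tangent bundle over a simply connected domain is realized by a smooth map f into ℝ^m whose induced coherent tangent bundle has first fundamental form ⟨∂_k f, ∂_l f⟩ = ⟨g_k, g_l⟩. -/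
open scoped Matrix

noncomputable section

open Set Metric Filter Topology

theorem taylor_bounds {E W : Type*} [NormedAddCommGroup E] [NormedSpace ℝ E]
    [NormedAddCommGroup W] [NormedSpace ℝ W] (ω : E → W) (p : E) (hω : ContDiffAt ℝ 2 ω p) :
    ∃ r > 0, ∃ M > 0, (∀ x ∈ ball p r, HasFDerivAt ω (fderiv ℝ ω x) x ∧ ‖ω x‖ ≤ M ∧
      ‖fderiv ℝ ω x‖ ≤ M) ∧
      ∀ x ∈ ball p r, ∀ y ∈ ball p r, ‖ω y - ω x - fderiv ℝ ω x (y - x)‖ ≤ M * ‖y - x‖ ^ 2 := by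
  have h1 : ContDiffAt ℝ 1 (fderiv ℝ ω) p := hω.fderiv_right (by norm_num)
  obtain ⟨K, s, hs, hK⟩ := h1.exists_lipschitzOnWith
  have e1 : ∀ᶠ x in 𝓝 p, DifferentiableAt ℝ ω x := by
    filter_upwards [hω.eventually (by simp)] with x hx using hx.differentiableAt (by simp)
  have e2 : ∀ᶠ x in 𝓝 p, ‖ω x‖ < ‖ω p‖ + 1 :=
    hω.continuousAt.norm.eventually (gt_mem_nhds (by linarith))
  have e3 : ∀ᶠ x in 𝓝 p, ‖fderiv ℝ ω x‖ < ‖fderiv ℝ ω p‖ + 1 :=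
    h1.continuousAt.norm.eventually (gt_mem_nhds (by linarith))
  obtain ⟨r, hr, H⟩ := Metric.eventually_nhds_iff_ball.1 (e1.and (e2.and (e3.and hs)))
  refine ⟨r, hr, ‖ω p‖ + 1 + (‖fderiv ℝ ω p‖ + 1) + K, by positivity, ?_, ?_⟩
  · intro x hx
    obtain ⟨a, b, c, -⟩ := H x hx
    have := norm_nonneg (ω p)
    have := norm_nonneg (fderiv ℝ ω p)
    have := K.2
    exact ⟨a.hasFDerivAt, by linarith [K.coe_nonneg], by linarith [K.coe_nonneg]⟩
  · intro x hx y hy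
    have hseg : segment ℝ x y ⊆ ball p r := (convex_ball p r).segment_subset hx hy
    have := (convex_segment x y).norm_image_sub_le_of_norm_hasFDerivWithin_le' (f := ω)
      (f' := fderiv ℝ ω) (φ := fderiv ℝ ω x) (C := K * ‖y - x‖)
      (fun z hz => ((H z (hseg hz)).1.hasFDerivAt).hasFDerivWithinAt) ?_
      (left_mem_segment ℝ x y) (right_mem_segment ℝ x y)
    · refine this.trans ?_
      have := norm_nonneg (ω p)
      have := norm_nonneg (fderiv ℝ ω p)
      have := sq_nonneg ‖y - x‖
      nlinarith
    · intro z hz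
      refine (hK.norm_sub_le (H z (hseg hz)).2.2.2 (H x hx).2.2.2).trans ?_
      gcongr
      obtain ⟨t, ht, rfl⟩ := (segment_eq_image' ℝ x y ▸ hz : z ∈ _)
      simp only [add_sub_cancel_left, norm_smul, Real.norm_eq_abs, abs_of_nonneg ht.1]
      exact mul_le_of_le_one_left (norm_nonneg _) ht.2

variable {𝔸 : Type*} [NormedRing 𝔸] [NormedAlgebra ℝ 𝔸]

theorem lin_ode [CompleteSpace 𝔸] (Ω : ℝ → 𝔸) (hΩ : ContinuousOn Ω (Icc 0 1))
    (κ : ℝ) (hκ : κ * (‖(1:𝔸)‖ + 1) ≤ 1) (hb : ∀ t ∈ Icc (0:ℝ) 1, ‖Ω t‖ ≤ κ) :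
    ∃ y : ℝ → 𝔸, y 0 = 1 ∧ ∀ t ∈ Icc (0:ℝ) 1, HasDerivWithinAt y (y t * Ω t) (Icc 0 1) t := by
  have hκ0 : 0 ≤ κ := (norm_nonneg _).trans (hb 0 (by simp))
  have : IsPicardLindelof (fun t y => y * Ω t) (tmin := 0) (tmax := 1) ⟨0, by simp⟩ (1:𝔸)
      1 0 1 ⟨κ, hκ0⟩ := by
    constructor
    · intro t ht
      refine LipschitzOnWith.of_dist_le_mul fun x _ y _ => ?_
      rw [dist_eq_norm, dist_eq_norm, ← sub_mul, mul_comm]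
      refine (norm_mul_le _ _).trans ?_
      gcongr
      exact hb t ht
    · intro x _
      fun_prop
    · intro t ht x hx
      refine (norm_mul_le _ _).trans ?_
      have h1 : ‖x‖ ≤ ‖(1:𝔸)‖ + 1 := by
        have : ‖x - 1‖ ≤ 1 := by simpa [dist_eq_norm] using hx
        calc ‖x‖ = ‖1 + (x - 1)‖ := by simp
          _ ≤ _ := (norm_add_le _ _).trans (by gcongr)
      calc ‖x‖ * ‖Ω t‖ ≤ (‖(1:𝔸)‖ + 1) * κ := by gcongr; exact hb t ht
        _ ≤ 1 := by linarith
    · simp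
  simpa using this.exists_eq_forall_mem_Icc_hasDerivWithinAt₀

/-- Gronwall for a linear equation on `[0,1]` with `‖Ω‖ ≤ 1`. -/
theorem lin_gronwall (u Ω e : ℝ → 𝔸) (ε : ℝ)
    (hu : ∀ t ∈ Icc (0:ℝ) 1, HasDerivWithinAt u (u t * Ω t + e t) (Icc 0 1) t)
    (hΩ : ∀ t ∈ Icc (0:ℝ) 1, ‖Ω t‖ ≤ 1) (he : ∀ t ∈ Icc (0:ℝ) 1, ‖e t‖ ≤ ε) :
    ∀ t ∈ Icc (0:ℝ) 1, ‖u t‖ ≤ (‖u 0‖ + ε) * Real.exp 1 := by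
  intro t ht
  have hε : 0 ≤ ε := (norm_nonneg _).trans (he 0 (by simp))
  have := norm_le_gronwallBound_of_norm_deriv_right_le (f := u)
    (f' := fun t => u t * Ω t + e t) (δ := ‖u 0‖) (K := 1) (ε := ε) (a := 0) (b := 1)
    (fun t ht => (hu t ht).continuousWithinAt)
    (fun t ht => ((hu t ⟨ht.1, ht.2.le⟩).mono_of_mem_nhdsWithin (Icc_mem_nhdsGE_of_mem ht)))
    le_rfl ?_ t ht
  · refine this.trans ?_
    rw [gronwallBound_of_K_ne_0 one_ne_zero]
    have h1 : Real.exp t ≤ Real.exp 1 := Real.exp_le_exp.2 ht.2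
    have := norm_nonneg (u 0)
    simp only [one_mul, sub_zero, div_one]
    nlinarith
  · intro t ht
    have ht' : t ∈ Icc (0:ℝ) 1 := ⟨ht.1, ht.2.le⟩
    refine (norm_add_le _ _).trans (add_le_add ((norm_mul_le _ _).trans ?_) (he t ht'))
    rw [mul_comm]
    gcongr
    exact hΩ t ht'

theorem err_identity (y A B D1 D2 Q : 𝔸) (t : ℝ) (hfl : D2 - D1 = B * A - A * B) :
    y * A * (1 + t • B) + y * (B + t • D2) - y * (1 + t • B) * (A + B + t • D1 + Q)
      = y * (-(t • (B * B)) - (t • B) * (t • D1) - (1 + t • B) * Q) := by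
  obtain rfl : D2 = D1 + (B * A - A * B) := by rw [← hfl]; abel
  have : t • (D1 + (B * A - A * B)) = t • D1 + (t • B) * A - A * (t • B) := by
    simp [smul_sub, add_sub_assoc]
  rw [this]
  have h2 : t • (B * B) = (t • B) * B := by simp
  rw [h2]
  generalize t • B = B'
  generalize t • D1 = D1'
  noncomm_ring

theorem local_frobenius [CompleteSpace 𝔸] {E : Type*} [NormedAddCommGroup E] [NormedSpace ℝ E]
    (ω : E → E →L[ℝ] 𝔸) (p : E) (hω : ContDiffAt ℝ 2 ω p)
    (hflat : ∀ᶠ x in 𝓝 p, ∀ u v, fderiv ℝ ω x u v - fderiv ℝ ω x v u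
      = ω x v * ω x u - ω x u * ω x v) :
    ∃ r > 0, ∃ G : E → 𝔸, G p = 1 ∧ ∀ x ∈ ball p r,
      HasFDerivAt G ((ContinuousLinearMap.mul ℝ 𝔸 (G x)).comp (ω x)) x := by
  obtain ⟨r0, hr0, M, hM, hb, hT⟩ := taylor_bounds ω p hω
  obtain ⟨r1, hr1, hfl⟩ := Metric.eventually_nhds_iff_ball.1 hflat
  set N : ℝ := ‖(1:𝔸)‖ + 1 with hN
  have hN1 : 1 ≤ N := by have := norm_nonneg (1:𝔸); linarith
  obtain ⟨r, hr, hrr0, hrr1, hrM, hr1'⟩ : ∃ r > 0, r ≤ r0 ∧ r ≤ r1 ∧ M * r * N ≤ 1 ∧ r ≤ 1 := by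
    refine ⟨min (min r0 r1) (min 1 (1 / (M * N))), by positivity, by simp, by simp, ?_, by simp⟩
    have : min (min r0 r1) (min 1 (1 / (M * N))) ≤ 1 / (M * N) := by simp
    calc _ ≤ M * (1 / (M * N)) * N := by gcongr
      _ = 1 := by field_simp
  have hmem : ∀ v : E, ‖v‖ < r → ∀ t ∈ Icc (0:ℝ) 1, p + t • v ∈ ball p r := by
    intro v hv t ht
    rw [mem_ball, dist_eq_norm, add_sub_cancel_left, norm_smul, Real.norm_eq_abs,
      abs_of_nonneg ht.1]
    exact (mul_le_of_le_one_left (norm_nonneg _) ht.2).trans_lt hv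
  have hb0 := fun x (hx : x ∈ ball p r) => hb x (ball_subset_ball hrr0 hx)
  have hpath : ∀ v : E, ∀ t : ℝ, HasDerivAt (fun t : ℝ => p + t • v) v t := by
    intro v t
    simpa using ((hasDerivAt_id t).smul_const v).const_add p
  have hωt : ∀ v : E, ‖v‖ < r → ∀ t ∈ Icc (0:ℝ) 1,
      HasDerivAt (fun t : ℝ => ω (p + t • v)) (fderiv ℝ ω (p + t • v) v) t := by
    intro v hv t ht
    exact (hb0 _ (hmem v hv t ht)).1.comp_hasDerivAt t (hpath v t)
  have hκ : ∀ v : E, ‖v‖ < r → ∀ t ∈ Icc (0:ℝ) 1, ‖ω (p + t • v) v‖ ≤ M * r := by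
    intro v hv t ht
    refine ((ω _).le_opNorm _).trans ?_
    gcongr
    exact (hb0 _ (hmem v hv t ht)).2.1
  have hMr1 : M * r ≤ 1 := by
    refine le_trans ?_ hrM
    exact le_mul_of_one_le_right (by positivity) hN1
  have hex : ∀ v : E, ∃ y : ℝ → 𝔸, ‖v‖ < r → y 0 = 1 ∧ ∀ t ∈ Icc (0:ℝ) 1,
      HasDerivWithinAt y (y t * ω (p + t • v) v) (Icc 0 1) t := by
    intro v
    by_cases hv : ‖v‖ < r
    · obtain ⟨y, hy⟩ := lin_ode (fun t => ω (p + t • v) v)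
        (fun t ht => (((hωt v hv t ht).clm_apply
          (hasDerivAt_const t v)).continuousAt).continuousWithinAt)
        (M * r) hrM (hκ v hv)
      exact ⟨y, fun _ => hy⟩
    · exact ⟨0, fun h => absurd h hv⟩
  choose Y hY using hex
  have hYb : ∀ v : E, ‖v‖ < r → ∀ t ∈ Icc (0:ℝ) 1, ‖Y v t‖ ≤ N * Real.exp 1 := by
    intro v hv t ht
    have := lin_gronwall (Y v) (fun t => ω (p + t • v) v) (fun _ => 0) 0
      (by simpa using (hY v hv).2) (fun t ht => (hκ v hv t ht).trans hMr1) (by simp) t ht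
    rw [(hY v hv).1] at this
    refine this.trans ?_
    gcongr
    linarith
  refine ⟨r, hr, fun x => Y (x - p) 1, ?_, ?_⟩
  ·
    have h0 : ‖(0:E)‖ < r := by simpa using hr
    have := lin_gronwall (fun t => Y 0 t - 1) (fun t => 0) (fun _ => 0) 0
      (fun t ht => by simpa using ((hY 0 h0).2 t ht).sub_const 1) (by simp) (by simp) 1 (by simp)
    simpa [(hY 0 h0).1, sub_eq_zero] using this
  intro x hx
  set v := x - p with hv
  have hvr : ‖v‖ < r := by simpa [hv, dist_eq_norm] using hx
  have hv1 : ‖v‖ ≤ 1 := hvr.le.trans hr1'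
  set C : ℝ := N * Real.exp 1 * (M * M + M * M + (N + M) * (3 * M)) * Real.exp 1 with hC
  have key : ∀ h : E, ‖v + h‖ < r → ‖h‖ ≤ 1 →
      ‖Y (v + h) 1 - Y v 1 * (1 + ω (p + v) h)‖ ≤ C * ‖h‖ ^ 2 := by
    intro h hvh hh
    have main := lin_gronwall (fun t => Y (v + h) t - Y v t * (1 + t • ω (p + t • v) h))
      (fun t => ω (p + t • (v + h)) (v + h))
      (fun t => Y v t * (1 + t • ω (p + t • v) h) * ω (p + t • (v + h)) (v + h) -
        (Y v t * ω (p + t • v) v * (1 + t • ω (p + t • v) h) +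
          Y v t * (ω (p + t • v) h + t • fderiv ℝ ω (p + t • v) v h)))
      (N * Real.exp 1 * (M * M + M * M + (N + M) * (3 * M)) * ‖h‖ ^ 2)
      ?_ (fun t ht => (hκ _ hvh t ht).trans hMr1) ?_ 1 (by simp)
    · simp only [(hY _ hvh).1, (hY _ hvr).1, zero_smul, add_zero, mul_one, sub_self, norm_zero,
        zero_add, one_smul] at main
      refine main.trans (le_of_eq ?_)
      rw [hC]; ring
    · intro t ht
      have d1 := (hY _ hvh).2 t ht
      have d2 := (hY _ hvr).2 t ht
      have d3 : HasDerivAt (fun t : ℝ => ω (p + t • v) h) (fderiv ℝ ω (p + t • v) v h) t := by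
        simpa using (hωt v hvr t ht).clm_apply (hasDerivAt_const t h)
      have d4 : HasDerivAt (fun t : ℝ => 1 + t • ω (p + t • v) h)
          (ω (p + t • v) h + t • fderiv ℝ ω (p + t • v) v h) t := by
        have := ((hasDerivAt_id t).smul d3).const_add 1
        simpa [add_comm] using this
      have d5 := d1.sub (d2.mul d4.hasDerivWithinAt)
      refine d5.congr_deriv ?_
      simp only [sub_mul]
      abel
    · intro t ht
      set a := p + t • v with ha
      have ham : a ∈ ball p r := hmem v hvr t ht
      have ham' : p + t • (v + h) ∈ ball p r := hmem _ hvh t ht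
      obtain ⟨-, hωa, hDa⟩ := hb0 a ham
      set R : E →L[ℝ] 𝔸 := ω (p + t • (v + h)) - ω a - fderiv ℝ ω a (t • h) with hR
      have hRb : ‖R‖ ≤ M * ‖h‖ ^ 2 := by
        have := hT a (ball_subset_ball hrr0 ham) _ (ball_subset_ball hrr0 ham')
        have e : p + t • (v + h) - a = t • h := by rw [ha, smul_add]; abel
        rw [e] at this
        refine this.trans ?_
        gcongr
        rw [norm_smul, Real.norm_eq_abs, abs_of_nonneg ht.1]
        exact mul_le_of_le_one_left (norm_nonneg _) ht.2
      have hexp : ω (p + t • (v + h)) (v + h) =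
          ω a v + ω a h + t • fderiv ℝ ω a h v + (t • fderiv ℝ ω a h h + R (v + h)) := by
        have : ω (p + t • (v + h)) = ω a + t • fderiv ℝ ω a h + R := by
          rw [hR, map_smul]; abel
        rw [this]
        simp only [add_apply, map_add, smul_apply]
        abel
      rw [hexp, ← norm_neg, neg_sub, err_identity _ _ _ _ _ _ _
        (hfl a (ball_subset_ball hrr1 ham) v h)]
      have ht1 : ‖t‖ ≤ 1 := by rw [Real.norm_eq_abs, abs_of_nonneg ht.1]; exact ht.2
      have hB : ‖ω a h‖ ≤ M * ‖h‖ := (ω a).le_of_opNorm_le hωa h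
      have htn : ∀ z : 𝔸, ‖t • z‖ ≤ ‖z‖ := fun z => by
        rw [norm_smul]; exact mul_le_of_le_one_left (norm_nonneg _) ht1
      have hD : ∀ k l : E, ‖fderiv ℝ ω a k l‖ ≤ M * ‖k‖ * ‖l‖ := fun k l =>
        (fderiv ℝ ω a k).le_of_opNorm_le ((fderiv ℝ ω a).le_of_opNorm_le hDa k) l
      have hh0 := norm_nonneg h
      have hD1 : ‖fderiv ℝ ω a h v‖ ≤ M * ‖h‖ := (hD h v).trans
        (mul_le_of_le_one_right (by positivity) hv1)
      have hQ : ‖t • fderiv ℝ ω a h h + R (v + h)‖ ≤ 3 * M * ‖h‖ ^ 2 := by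
        refine (norm_add_le _ _).trans ?_
        have q1 : ‖t • fderiv ℝ ω a h h‖ ≤ M * ‖h‖ * ‖h‖ := (htn _).trans (hD h h)
        have q2 : ‖R (v + h)‖ ≤ M * ‖h‖ ^ 2 * 2 := by
          refine (R.le_of_opNorm_le hRb _).trans ?_
          gcongr
          exact (norm_add_le _ _).trans (by linarith)
        nlinarith
      have t1 : ‖t • (ω a h * ω a h)‖ ≤ M * M * ‖h‖ ^ 2 :=
        (htn _).trans ((norm_mul_le _ _).trans
          ((mul_le_mul hB hB (norm_nonneg _) (by positivity)).trans (le_of_eq (by ring))))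
      have t2 : ‖(t • ω a h) * (t • fderiv ℝ ω a h v)‖ ≤ M * M * ‖h‖ ^ 2 :=
        (norm_mul_le _ _).trans
          ((mul_le_mul ((htn _).trans hB) ((htn _).trans hD1) (norm_nonneg _)
            (by positivity)).trans (le_of_eq (by ring)))
      have t3 : ‖1 + t • ω a h‖ ≤ N + M := by
        refine (norm_add_le _ _).trans ?_
        have := (htn _).trans hB
        have : M * ‖h‖ ≤ M := mul_le_of_le_one_right hM.le hh
        linarith
      have t4 := (norm_mul_le (1 + t • ω a h) (t • fderiv ℝ ω a h h + R (v + h))).trans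
        (mul_le_mul t3 hQ (norm_nonneg _) (by positivity))
      refine (norm_mul_le _ _).trans ?_
      rw [mul_assoc (N * Real.exp 1)]
      refine mul_le_mul (hYb v hvr t ht) ?_ (norm_nonneg _) (by positivity)
      refine (norm_sub_le _ _).trans ?_
      have := norm_sub_le (-(t • (ω a h * ω a h))) ((t • ω a h) * (t • fderiv ℝ ω a h v))
      rw [norm_neg] at this
      nlinarith
  rw [hasFDerivAt_iff_isLittleO_nhds_zero]
  have hbig : (fun h : E => Y (x + h - p) 1 - Y v 1 -
      ((ContinuousLinearMap.mul ℝ 𝔸 (Y v 1)).comp (ω x)) h) =O[𝓝 0] fun h => ‖h‖ ^ 2 := by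
    refine Asymptotics.IsBigO.of_bound C ?_
    have c1 : ∀ᶠ h : E in 𝓝 0, ‖v + h‖ < r := by
      have : ContinuousAt (fun h : E => ‖v + h‖) 0 := by fun_prop
      exact this.eventually (gt_mem_nhds (by simpa using hvr))
    have c2 : ∀ᶠ h : E in 𝓝 0, ‖h‖ < 1 := by
      have : ContinuousAt (fun h : E => ‖h‖) 0 := by fun_prop
      exact this.eventually (gt_mem_nhds (by simp))
    filter_upwards [c1, c2] with h h1 h2
    have := key h h1 h2.le
    have e1 : x + h - p = v + h := by rw [hv]; abel
    have e2 : p + v = x := by rw [hv]; abel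
    rw [e2] at this
    rw [e1]
    simpa [mul_add, sub_sub] using this
  refine hbig.trans_isLittleO ?_
  exact Asymptotics.isLittleO_norm_pow_id one_lt_two

/-- Local solutions glue to a global one over a simply connected base: abstract version. -/
theorem glue_sections {B X : Type*} [TopologicalSpace B] [SimplyConnectedSpace B]
    [LocallyPathConnectedSpace B] (S : B → Set B) (hS : ∀ i, IsOpen (S i)) (hmem : ∀ i, i ∈ S i)
    (c : B → B → B → X → X) (cself : ∀ i, ∀ x ∈ S i, ∀ v, c i i x v = v)
    (cconst : ∀ i j, ∀ x ∈ S i ∩ S j, ∀ y ∈ S i ∩ S j, c i j x = c i j y)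
    (ccomp : ∀ i j k, ∀ x ∈ S i ∩ S j ∩ S k, ∀ v, c j k x (c i j x v) = c i k x v)
    (b : B) (x0 : X) :
    ∃ s : B → X, s b = x0 ∧ ∀ p, ∃ v, ∀ᶠ x in 𝓝 p, c x p x (s x) = v := by
  let _ : TopologicalSpace X := ⊥
  have : DiscreteTopology X := ⟨rfl⟩
  let Z : FiberBundleCore B B X :=
    { baseSet := S
      isOpen_baseSet := hS
      indexAt := id
      mem_baseSet_at := hmem
      coordChange := c
      coordChange_self := cself
      continuousOn_coordChange := by
        intro i j
        by_cases hne : (S i ∩ S j).Nonempty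
        · obtain ⟨y, hy⟩ := hne
          have hc : Continuous (fun q : B × X => (c i j y q.2 : X)) :=
            (continuous_of_discreteTopology (f := (c i j y : X → X))).comp
              continuous_snd
          refine hc.continuousOn.congr ?_
          rintro ⟨x, v⟩ ⟨hx, -⟩
          exact congrFun (cconst i j x hx y hy) v
        · rw [Set.not_nonempty_iff_eq_empty.1 hne]
          simp [continuousOn_empty]
      coordChange_comp := ccomp }
  have hcov : IsCoveringMap Z.proj := FiberBundle.isCoveringMap (F := X) (E := Z.Fiber)
  obtain ⟨F, ⟨hF0, hF⟩, -⟩ := hcov.existsUnique_continuousMap_lifts (ContinuousMap.id B) b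
    (⟨b, x0⟩ : Z.TotalSpace) rfl
  have hF1 : ∀ x, (F x).1 = x := fun x => congrFun hF x
  let d : Z.TotalSpace → X := fun z => z.2
  refine ⟨fun x => d (F x), ?_, ?_⟩
  · simp only [hF0]
    rfl
  intro p
  have hsrc : F p ∈ (Z.localTriv p).source := by
    rw [Z.mem_localTriv_source]
    change (F p).1 ∈ S p
    rw [hF1]; exact hmem p
  have hc : ContinuousAt (fun x => ((Z.localTriv p) (F x)).2) p :=
    continuous_snd.continuousAt.comp
      (((Z.localTriv p).continuousAt hsrc).comp F.continuous.continuousAt)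
  have := hc.eventually (mem_nhds_discrete.2 (Set.mem_singleton ((Z.localTriv p) (F p)).2))
  refine ⟨((Z.localTriv p) (F p)).2, this.mono fun x hx => ?_⟩
  have h2 : ((Z.localTriv p) (F x)).2 = c (F x).1 p (F x).1 (d (F x)) := rfl
  rw [← (show _ = _ from hx), h2, hF1]

theorem ratio_const [CompleteSpace 𝔸] {E : Type*} [NormedAddCommGroup E] [NormedSpace ℝ E]
    (ω : E → E →L[ℝ] 𝔸) (G H : E → 𝔸) (s : Set E) (hs : IsOpen s) (hc : IsPreconnected s)
    (hG : ∀ x ∈ s, HasFDerivAt G ((ContinuousLinearMap.mul ℝ 𝔸 (G x)).comp (ω x)) x)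
    (hH : ∀ x ∈ s, HasFDerivAt H ((ContinuousLinearMap.mul ℝ 𝔸 (H x)).comp (ω x)) x)
    (hu : ∀ x ∈ s, IsUnit (H x)) {x y : E} (hx : x ∈ s) (hy : y ∈ s) :
    G x * Ring.inverse (H x) = G y * Ring.inverse (H y) := by
  have main : ∀ z ∈ s, HasFDerivAt (fun z => G z * Ring.inverse (H z)) (0 : E →L[ℝ] 𝔸) z := by
    intro z hz
    obtain ⟨a, ha⟩ := hu z hz
    have h1 := hasFDerivAt_ringInverse (𝕜 := ℝ) a
    rw [ha] at h1
    have h2 := (hG z hz).mul' (h1.comp z (hH z hz))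
    refine h2.congr_fderiv ?_
    ext w
    simp [← ha, mul_assoc]
  exact hs.is_const_of_fderiv_eq_zero (𝕜 := ℝ) hc
    (fun z hz => (main z hz).differentiableAt.differentiableWithinAt)
    (fun z hz => (main z hz).fderiv) hx hy

theorem global_frobenius [CompleteSpace 𝔸] {E : Type*} [NormedAddCommGroup E] [NormedSpace ℝ E]
    (U : Set E) (hU : IsOpen U) (hsc : SimplyConnectedSpace U) (q0 : E) (hq0 : q0 ∈ U)
    (ω : E → E →L[ℝ] 𝔸) (hω : ∀ x ∈ U, ContDiffAt ℝ 2 ω x)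
    (hflat : ∀ x ∈ U, ∀ u v, fderiv ℝ ω x u v - fderiv ℝ ω x v u
      = ω x v * ω x u - ω x u * ω x v) :
    ∃ H : E → 𝔸, H q0 = 1 ∧ ∀ x ∈ U,
      HasFDerivAt H ((ContinuousLinearMap.mul ℝ 𝔸 (H x)).comp (ω x)) x := by
  have hloc : ∀ p : U, ∃ r > 0, ∃ G : E → 𝔸, G p = 1 ∧ ∀ x ∈ ball (p : E) r,
      HasFDerivAt G ((ContinuousLinearMap.mul ℝ 𝔸 (G x)).comp (ω x)) x ∧ IsUnit (G x) := by
    intro p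
    obtain ⟨r, hr, G, hG1, hG⟩ := local_frobenius ω p (hω p p.2)
      (Filter.eventually_of_mem (hU.mem_nhds p.2) hflat)
    have hunit : ∀ᶠ x in 𝓝 (p : E), IsUnit (G x) := by
      have h1 : ContinuousAt G p := (hG p (mem_ball_self hr)).continuousAt
      refine h1.eventually (Units.isOpen.mem_nhds ?_)
      rw [hG1]; exact isUnit_one
    obtain ⟨r', hr', h'⟩ := Metric.eventually_nhds_iff_ball.1 hunit
    exact ⟨min r r', lt_min hr hr', G, hG1, fun x hx =>
      ⟨hG x (ball_subset_ball (min_le_left _ _) hx), h' x (ball_subset_ball (min_le_right _ _) hx)⟩⟩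
  choose r hr G hG1 hG using hloc
  have : LocallyPathConnectedSpace U := hU.locallyPathConnectedSpace
  obtain ⟨s, hs0, hs⟩ := glue_sections (B := U) (X := 𝔸)
    (fun i => Subtype.val ⁻¹' ball (i : E) (r i))
    (fun i => isOpen_ball.preimage continuous_subtype_val)
    (fun i => mem_ball_self (hr i))
    (fun i j x v => v * (G i x * Ring.inverse (G j x)))
    (fun i x hx v => by simp [Ring.mul_inverse_cancel _ (hG i x hx).2])
    (fun i j x hx y hy => by
      funext v
      congr 1
      refine ratio_const ω (G i) (G j) (ball (i : E) (r i) ∩ ball (j : E) (r j))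
        (isOpen_ball.inter isOpen_ball)
        ((convex_ball _ _).inter (convex_ball _ _)).isPreconnected
        (fun z hz => (hG i z hz.1).1) (fun z hz => (hG j z hz.2).1)
        (fun z hz => (hG j z hz.2).2) hx hy)
    (fun i j k x hx v => by
      have := Ring.inverse_mul_cancel _ (hG j x hx.1.2).2
      calc _ = v * G i x * (Ring.inverse (G j x) * G j x) * Ring.inverse (G k x) := by
            simp only [mul_assoc]
        _ = _ := by rw [this]; simp only [mul_assoc, one_mul])
    ⟨q0, hq0⟩ 1
  classical
  let H : E → 𝔸 := fun x => if h : x ∈ U then s ⟨x, h⟩ else 0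
  refine ⟨H, by simp [H, hq0, hs0], ?_⟩
  intro p hp
  obtain ⟨v, hv⟩ := hs ⟨p, hp⟩
  set P : U := ⟨p, hp⟩ with hP
  have hev : ∀ᶠ x in 𝓝 p, H x = v * G P x := by
    have h1 : ∀ᶠ x in 𝓝 p, ∀ h : x ∈ U,
        s ⟨x, h⟩ * (G ⟨x, h⟩ x * Ring.inverse (G P x)) = v := by
      rw [← hU.nhdsWithin_eq hp, nhdsWithin_eq_map_subtype_coe hp] 
      exact Filter.eventually_map.2 (hv.mono fun x hx h => hx)
    filter_upwards [h1, hU.mem_nhds hp, isOpen_ball.mem_nhds (mem_ball_self (hr P) :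
      (P : E) ∈ ball (P : E) (r P))] with x hx hxU hxb
    have := hx hxU
    have e1 : G ⟨x, hxU⟩ x = 1 := hG1 ⟨x, hxU⟩
    rw [e1, one_mul] at this
    simp only [H, hxU, dite_true]
    rw [← this, mul_assoc, Ring.inverse_mul_cancel _ (hG P x hxb).2, mul_one]
  have hd := ((hG P p (mem_ball_self (hr P))).1).const_mul v
  have hd2 := hd.congr_of_eventuallyEq hev
  refine hd2.congr_fderiv ?_
  ext w
  simp [hev.self_of_nhds, mul_assoc]

theorem smooth_of_frobenius {E : Type*} [NormedAddCommGroup E] [NormedSpace ℝ E]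
    (U : Set E) (hU : IsOpen U) (ω : E → E →L[ℝ] 𝔸) (hω : ContDiffOn ℝ (⊤ : ℕ∞) ω U) (H : E → 𝔸)
    (hH : ∀ x ∈ U, HasFDerivAt H ((ContinuousLinearMap.mul ℝ 𝔸 (H x)).comp (ω x)) x) :
    ContDiffOn ℝ (⊤ : ℕ∞) H U := by
  refine contDiffOn_infty.2 fun n => ?_
  induction n with
  | zero => exact contDiffOn_zero.2 fun x hx => (hH x hx).continuousAt.continuousWithinAt
  | succ n ih =>
    push_cast
    rw [contDiffOn_succ_iff_fderiv_of_isOpen hU]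
    refine ⟨fun x hx => (hH x hx).differentiableAt.differentiableWithinAt, by simp, ?_⟩
    refine ContDiffOn.congr (f := fun x => (ContinuousLinearMap.mul ℝ 𝔸 (H x)).comp (ω x)) ?_
      (fun x hx => (hH x hx).fderiv)
    refine ContDiffOn.clm_comp ?_ (contDiffOn_infty.1 hω n)
    exact (ContinuousLinearMap.mul ℝ 𝔸).contDiff.comp_contDiffOn ih

theorem matrix_frobenius_aux [FiniteDimensional ℝ 𝔸] {m : ℕ} {ι : Type*} [Fintype ι] [DecidableEq ι]
    (e : Matrix ι ι ℝ ≃ₐ[ℝ] 𝔸)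
    (U : Set (Fin m → ℝ)) (hU : IsOpen U) (hsc : SimplyConnectedSpace U)
    (q0 : Fin m → ℝ) (hq0 : q0 ∈ U)
    (A : Fin m → (Fin m → ℝ) → Matrix ι ι ℝ)
    (hA : ∀ k i j, ContDiffOn ℝ (⊤ : ℕ∞) (fun q => A k q i j) U)
    (hflat : ∀ k l, ∀ q ∈ U, ∀ i j,
      pdr k (fun q => A l q i j) q - pdr l (fun q => A k q i j) q
        = (A l q * A k q - A k q * A l q) i j) :
    ∃ H : (Fin m → ℝ) → Matrix ι ι ℝ, H q0 = 1 ∧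
      (∀ i j, ContDiffOn ℝ (⊤ : ℕ∞) (fun q => H q i j) U) ∧
      ∀ q ∈ U, ∀ i j w, fderiv ℝ (fun q => H q i j) q w = (H q * ∑ k, w k • A k q) i j := by
  have : CompleteSpace 𝔸 := FiniteDimensional.complete ℝ _
  let ent : ι → ι → 𝔸 →L[ℝ] ℝ := fun i j =>
    LinearMap.toContinuousLinearMap ((Matrix.entryLinearMap ℝ ℝ i j) ∘ₗ e.symm.toLinearMap)
  have hent : ∀ i j M, ent i j M = e.symm M i j := fun i j M => rfl
  let A' : Fin m → (Fin m → ℝ) → 𝔸 := fun k q => e (A k q)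
  have hAs : ∀ k, ContDiffOn ℝ (⊤ : ℕ∞) (A' k) U := by
    intro k
    have : A' k = fun q => ∑ i, ∑ j, (A k q i j) • e (Matrix.single i j (1:ℝ)) := by
      funext q
      simp only [A']
      conv_lhs => rw [Matrix.matrix_eq_sum_single (A k q)]
      simp only [map_sum]
      refine Finset.sum_congr rfl fun i _ => Finset.sum_congr rfl fun j _ => ?_
      rw [← map_smul]
      simp
    rw [this]
    exact ContDiffOn.sum fun i _ => ContDiffOn.sum fun j _ => (hA k i j).smul contDiffOn_const
  let ω : (Fin m → ℝ) → (Fin m → ℝ) →L[ℝ] 𝔸 := fun q =>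
    ∑ k, ContinuousLinearMap.smulRightL ℝ (Fin m → ℝ) (𝔸)
      (ContinuousLinearMap.proj k) (A' k q)
  have hωapp : ∀ q w, ω q w = ∑ k, w k • A' k q := by
    intro q w
    simp [ω, sum_apply]
  have hωs : ContDiffOn ℝ (⊤ : ℕ∞) ω U :=
    ContDiffOn.sum fun k _ => (ContinuousLinearMap.contDiff _).comp_contDiffOn (hAs k)
  have hdiffA : ∀ k, ∀ x ∈ U, DifferentiableAt ℝ (A' k) x := fun k x hx =>
    ((hAs k).contDiffAt (hU.mem_nhds hx)).differentiableAt (by simp)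
  have hpd : ∀ k l, ∀ x ∈ U, ∀ i j,
      pdr l (fun q => A k q i j) x = e.symm (fderiv ℝ (A' k) x (Pi.single l 1)) i j := by
    intro k l x hx i j
    have := ((ent i j).hasFDerivAt.comp x (hdiffA k x hx).hasFDerivAt).fderiv
    simp only [pdr]
    have e1 : (fun q => A k q i j) = (ent i j) ∘ A' k := by
      funext q
      simp [hent, A']
    rw [e1, this]
    rfl
  have hfl : ∀ k l, ∀ x ∈ U, fderiv ℝ (A' l) x (Pi.single k 1) - fderiv ℝ (A' k) x (Pi.single l 1)
      = A' l x * A' k x - A' k x * A' l x := by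
    intro k l x hx
    apply e.symm.injective
    ext i j
    have := hflat k l x hx i j
    rw [hpd _ _ x hx, hpd _ _ x hx] at this
    simpa [A'] using this
  have hlin : ∀ (L : (Fin m → ℝ) →L[ℝ] 𝔸) (u : Fin m → ℝ),
      L u = ∑ l, u l • L (Pi.single l 1) := by
    intro L u
    conv_lhs => rw [pi_eq_sum_univ' u]
    simp [map_sum]
  have hfω : ∀ x ∈ U, ∀ u v, fderiv ℝ ω x u v =
      ∑ k, ∑ l, (v k * u l) • fderiv ℝ (A' k) x (Pi.single l 1) := by
    intro x hx u v
    have h1 : HasFDerivAt ω (∑ k, (ContinuousLinearMap.smulRightL ℝ (Fin m → ℝ) (𝔸)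
      (ContinuousLinearMap.proj k)).comp (fderiv ℝ (A' k) x)) x :=
      HasFDerivAt.fun_sum fun k _ =>
        (ContinuousLinearMap.hasFDerivAt _).comp x (hdiffA k x hx).hasFDerivAt
    rw [h1.fderiv]
    simp only [sum_apply, ContinuousLinearMap.comp_apply,
      ContinuousLinearMap.smulRightL_apply_apply]
    refine Finset.sum_congr rfl fun k _ => ?_
    rw [hlin (fderiv ℝ (A' k) x) u, ContinuousLinearMap.smulRight_apply,
      ContinuousLinearMap.proj_apply, Finset.smul_sum]
    simp [mul_smul]
  obtain ⟨H, hH0, hH⟩ := global_frobenius U hU hsc q0 hq0 ω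
    (fun x hx => (hωs.contDiffAt (hU.mem_nhds hx)).of_le (by
      exact WithTop.coe_le_coe.2 (le_top : (2 : ℕ∞) ≤ ⊤))) (by
      intro x hx u v
      rw [hfω x hx, hfω x hx, hωapp, hωapp]
      have e1 : ∑ k, ∑ l, (u k * v l) • fderiv ℝ (A' k) x (Pi.single l 1) =
          ∑ k, ∑ l, (v k * u l) • fderiv ℝ (A' l) x (Pi.single k 1) := by
        rw [Finset.sum_comm]
        simp only [mul_comm]
      have e2 : (∑ k, u k • A' k x) * ∑ k, v k • A' k x =
          ∑ k, ∑ l, (v k * u l) • (A' l x * A' k x) := by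
        rw [Finset.sum_mul_sum, Finset.sum_comm]
        simp [smul_smul]
      have e3 : (∑ k, v k • A' k x) * ∑ k, u k • A' k x =
          ∑ k, ∑ l, (v k * u l) • (A' k x * A' l x) := by
        rw [Finset.sum_mul_sum]
        simp [smul_smul, mul_comm]
      rw [e1, e2, e3]
      simp only [← Finset.sum_sub_distrib, ← smul_sub]
      refine Finset.sum_congr rfl fun k _ => Finset.sum_congr rfl fun l _ => ?_
      rw [hfl l k x hx])
  refine ⟨fun q => e.symm (H q), by simp [hH0], fun i j => ?_, fun q hq i j w => ?_⟩
  · exact (ent i j).contDiff.comp_contDiffOn (smooth_of_frobenius U hU ω hωs H hH)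
  · have e1 : (fun q => e.symm (H q) i j) = (ent i j) ∘ H := rfl
    rw [e1, ((ent i j).hasFDerivAt.comp q (hH q hq)).fderiv]
    simp only [ContinuousLinearMap.comp_apply, hωapp, hent]
    simp [A', map_sum, map_smul, Finset.mul_sum]

theorem matrix_frobenius {m : ℕ} {ι : Type*} [Fintype ι] [DecidableEq ι]
    (U : Set (Fin m → ℝ)) (hU : IsOpen U) (hsc : SimplyConnectedSpace U)
    (q0 : Fin m → ℝ) (hq0 : q0 ∈ U)
    (A : Fin m → (Fin m → ℝ) → Matrix ι ι ℝ)
    (hA : ∀ k i j, ContDiffOn ℝ (⊤ : ℕ∞) (fun q => A k q i j) U)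
    (hflat : ∀ k l, ∀ q ∈ U, ∀ i j,
      pdr k (fun q => A l q i j) q - pdr l (fun q => A k q i j) q
        = (A l q * A k q - A k q * A l q) i j) :
    ∃ H : (Fin m → ℝ) → Matrix ι ι ℝ, H q0 = 1 ∧
      (∀ i j, ContDiffOn ℝ (⊤ : ℕ∞) (fun q => H q i j) U) ∧
      ∀ q ∈ U, ∀ i j w, fderiv ℝ (fun q => H q i j) q w = (H q * ∑ k, w k • A k q) i j := by
  exact matrix_frobenius_aux (𝔸 := EuclideanSpace ℝ ι →L[ℝ] EuclideanSpace ℝ ι)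
    (Matrix.toEuclideanCLM (n := ι) (𝕜 := ℝ)).toAlgEquiv U hU hsc q0 hq0 A hA hflat

/-- Realization of a flat coherent tangent bundle over a simply connected domain as a
smooth map `f : U → ℝ^m`: given the connection matrices `P_k` and the components `g_k`
of the bundle homomorphism `φ` in an orthonormal frame, satisfying the coherence condition
and the flatness (curvature `c = 0`) condition, there are smooth `F : U → SO(m)` and
`f : U → ℝ^m` with `∂_k F = F P_k`, `∂_k f = F g_k`; in particular the induced first
fundamental form of `f` is the prescribed one. -/
theorem realization_coherent_tangent_bundle_flat {m : ℕ}
    (U : Set (Fin m → ℝ)) (hU : IsOpen U)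
    (hconn : IsConnected U) (hsc : SimplyConnectedSpace U)
    (P : Fin m → (Fin m → ℝ) → Matrix (Fin m) (Fin m) ℝ)
    (g : Fin m → (Fin m → ℝ) → (Fin m → ℝ))
    (hP : ∀ k i j, ContDiffOn ℝ (⊤ : ℕ∞) (fun q => P k q i j) U)
    (hg : ∀ k, ContDiffOn ℝ (⊤ : ℕ∞) (g k) U)
    (hskew : ∀ k, ∀ q ∈ U, (P k q)ᵀ = -(P k q))
    (hcodazzi : ∀ k l, ∀ q ∈ U,
      pd k (g l) q - pd l (g k) q = P l q *ᵥ g k q - P k q *ᵥ g l q)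
    (hflat : ∀ k l, ∀ q ∈ U,
      pdM k (P l) q - pdM l (P k) q = P l q * P k q - P k q * P l q) :
    ∃ (F : (Fin m → ℝ) → Matrix (Fin m) (Fin m) ℝ)
      (f : (Fin m → ℝ) → (Fin m → ℝ)),
      (∀ i j, ContDiffOn ℝ (⊤ : ℕ∞) (fun q => F q i j) U) ∧
      ContDiffOn ℝ (⊤ : ℕ∞) f U ∧
      (∀ q ∈ U, (F q)ᵀ * F q = 1 ∧ (F q).det = 1) ∧
      (∀ k, ∀ q ∈ U, pdM k F q = F q * P k q) ∧
      (∀ k, ∀ q ∈ U, pd k f q = F q *ᵥ g k q) ∧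
      (∀ k l, ∀ q ∈ U, pd k f q ⬝ᵥ pd l f q = g k q ⬝ᵥ g l q) := by
  obtain ⟨q0, hq0⟩ := hconn.nonempty
  let A : Fin m → (Fin m → ℝ) → Matrix (Fin m ⊕ Unit) (Fin m ⊕ Unit) ℝ := fun k q =>
    Matrix.fromBlocks (P k q) (Matrix.of fun i _ => g k q i) 0 0
  have hpdg : ∀ k l, ∀ q ∈ U, ∀ i, pdr k (fun q => g l q i) q = pd k (g l) q i := by
    intro k l q hq i
    have hd : DifferentiableAt ℝ (g l) q :=
      ((hg l).contDiffAt (hU.mem_nhds hq)).differentiableAt (by simp)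
    have := (hasFDerivAt_pi'.1 hd.hasFDerivAt i).fderiv
    simp only [pdr, pd]
    rw [this]
    rfl
  have h0 : ∀ k q, pdr k (fun _ : Fin m → ℝ => (0:ℝ)) q = 0 := by
    intro k q
    simp [pdr]
  obtain ⟨H, hH0, hHs, hH⟩ := matrix_frobenius U hU hsc q0 hq0 A
    (by
      rintro k (i | i) (j | j)
      · exact hP k i j
      · exact contDiffOn_pi.1 (hg k) i
      · exact contDiffOn_const
      · exact contDiffOn_const)
    (by
      intro k l q hq i j
      simp only [A, Matrix.fromBlocks_multiply]
      rcases i with i | i <;> rcases j with j | j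
      · have := congrFun (congrFun (hflat k l q hq) i) j
        simpa [pdM] using this
      · have := congrFun (hcodazzi k l q hq) i
        simp only [Matrix.fromBlocks_apply₁₂, Matrix.of_apply, hpdg _ _ q hq, Matrix.sub_apply]
        simpa [Matrix.mul_apply, Matrix.mulVec, dotProduct] using this
      · simp [h0]
      · simp [h0])
  have hHdiff : ∀ q ∈ U, ∀ i j, DifferentiableAt ℝ (fun q => H q i j) q := fun q hq i j =>
    ((hHs i j).contDiffAt (hU.mem_nhds hq)).differentiableAt (by simp)
  let F : (Fin m → ℝ) → Matrix (Fin m) (Fin m) ℝ := fun q => (H q).toBlocks₁₁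
  let f : (Fin m → ℝ) → (Fin m → ℝ) := fun q i => H q (Sum.inl i) (Sum.inr ())
  have hFd : ∀ q ∈ U, ∀ i j w, fderiv ℝ (fun q => F q i j) q w = (F q * ∑ k, w k • P k q) i j := by
    intro q hq i j w
    have := hH q hq (Sum.inl i) (Sum.inl j) w
    simpa [A, F, Matrix.mul_apply, Matrix.sum_apply, Matrix.toBlocks₁₁] using this
  have hFdiff : ∀ q ∈ U, ∀ i j, DifferentiableAt ℝ (fun q => F q i j) q := fun q hq i j =>
    hHdiff q hq (Sum.inl i) (Sum.inl j)
  have hfs : ContDiffOn ℝ (⊤ : ℕ∞) f U := contDiffOn_pi.2 fun i => hHs _ _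
  have hFs : ∀ i j, ContDiffOn ℝ (⊤ : ℕ∞) (fun q => F q i j) U := fun i j => hHs _ _
  have hsum : ∀ (k : Fin m) (B : Fin m → Matrix (Fin m) (Fin m) ℝ),
      ∑ l, (Pi.single k 1 : Fin m → ℝ) l • B l = B k := by
    intro k B
    rw [Finset.sum_eq_single k] <;> simp +contextual
  have hpdF : ∀ k, ∀ q ∈ U, pdM k F q = F q * P k q := by
    intro k q hq
    ext i j
    have := hFd q hq i j (Pi.single k 1)
    rw [hsum] at this
    exact this
  have hpdf : ∀ k, ∀ q ∈ U, pd k f q = F q *ᵥ g k q := by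
    intro k q hq
    funext i
    have hd : DifferentiableAt ℝ f q := (hfs.contDiffAt (hU.mem_nhds hq)).differentiableAt (by simp)
    have h1 := (hasFDerivAt_pi'.1 hd.hasFDerivAt i).fderiv
    have h2 := hH q hq (Sum.inl i) (Sum.inr ()) (Pi.single k 1)
    have h3 : ∑ l, (Pi.single k 1 : Fin m → ℝ) l • A l q = A k q := by
      rw [Finset.sum_eq_single k] <;> simp +contextual
    rw [h3] at h2
    have h4 : pd k f q i = fderiv ℝ (fun q => f q i) q (Pi.single k 1) := by
      rw [h1]; rfl
    rw [h4]
    refine h2.trans ?_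
    simp [A, F, Matrix.mul_apply, Matrix.mulVec, dotProduct, Matrix.toBlocks₁₁]
  have hF0 : F q0 = 1 := by
    ext i j
    simp [F, hH0, Matrix.toBlocks₁₁, Matrix.one_apply]
  have horth' : ∀ q ∈ U, F q * (F q)ᵀ = 1 := by
    intro q hq
    ext i j
    have key : ∀ x ∈ U, HasFDerivAt (fun x => (F x * (F x)ᵀ) i j) (0 : (Fin m → ℝ) →L[ℝ] ℝ) x := by
      intro x hx
      have h1 : HasFDerivAt (fun x => ∑ l, F x i l * F x j l) _ x :=
        HasFDerivAt.fun_sum (u := Finset.univ) fun l _ =>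
          (hFdiff x hx i l).hasFDerivAt.mul (hFdiff x hx j l).hasFDerivAt
      have e : (fun x => (F x * (F x)ᵀ) i j) = fun x => ∑ l, F x i l * F x j l := by
        funext x
        simp [Matrix.mul_apply]
      rw [e]
      refine h1.congr_fderiv ?_
      ext1 w
      simp only [sum_apply, add_apply, smul_apply, hFd x hx, smul_eq_mul]
      set Ω := ∑ k, w k • P k x with hΩ
      have hsk : Ωᵀ = -Ω := by
        rw [hΩ, Matrix.transpose_sum, ← Finset.sum_neg_distrib]
        refine Finset.sum_congr rfl fun k _ => ?_
        rw [Matrix.transpose_smul, hskew k x hx, smul_neg]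
      have hz : F x * (F x * Ω)ᵀ + F x * Ω * (F x)ᵀ = 0 := by
        rw [Matrix.transpose_mul, hsk, Matrix.neg_mul, Matrix.mul_neg, Matrix.mul_assoc]
        simp
      have := congrFun (congrFun hz i) j
      simp only [Matrix.add_apply, Matrix.mul_apply (M := F x) (N := (F x * Ω)ᵀ),
        Matrix.mul_apply (M := F x * Ω) (N := (F x)ᵀ), Matrix.transpose_apply] at this
      rw [← Finset.sum_add_distrib] at this
      simpa [mul_comm] using this
    have := hU.is_const_of_fderiv_eq_zero (𝕜 := ℝ) hconn.isPreconnected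
      (fun z hz => (key z hz).differentiableAt.differentiableWithinAt)
      (fun z hz => (key z hz).fderiv) hq hq0
    simpa [hF0] using this
  have horth : ∀ q ∈ U, (F q)ᵀ * F q = 1 := fun q hq => mul_eq_one_comm.1 (horth' q hq)
  have hdet : ∀ q ∈ U, (F q).det = 1 := by
    have hc : ContinuousOn (fun q => (F q).det) U := by
      have : ContinuousOn F U := continuousOn_pi.2 fun i => continuousOn_pi.2 fun j =>
        (hFs i j).continuousOn
      exact (Continuous.matrix_det continuous_id).comp_continuousOn this
    have hsq : EqOn ((fun q => (F q).det) ^ 2) 1 U := by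
      intro q hq
      have := congrArg Matrix.det (horth q hq)
      simpa [Matrix.det_mul, sq] using this
    rcases hconn.isPreconnected.eq_one_or_eq_neg_one_of_sq_eq hc hsq with h | h
    · exact h
    · have := h hq0
      simp only [hF0, Matrix.det_one, Pi.neg_apply, Pi.one_apply] at this
      norm_num at this
  refine ⟨F, f, hFs, hfs, fun q hq => ⟨horth q hq, hdet q hq⟩, hpdF, hpdf, fun k l q hq => ?_⟩
  rw [hpdf k q hq, hpdf l q hq, Matrix.dotProduct_mulVec, Matrix.vecMul_mulVec, horth q hq,
    Matrix.vecMul_one]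
end
end

section
/- Let U ⊆ ℝ² be a connected and simply connected open set with coordinates (u, v), and let θ : U → ℝ be a smooth function satisfying θ_{uv} = 0. Then there exists a front (f, ν) on U in the unit sphere S³ ⊂ ℝ⁴, i.e. smooth maps f, ν : U → ℝ⁴ with ⟨f, f⟩ = 1, ⟨ν, ν⟩ = 1, ⟨f, ν⟩ = 0, ⟨f_u, ν⟩ = ⟨f_v, ν⟩ = 0, and with X ↦ (df_q(X), dν_q(X)) injective for every q ∈ U, whose fundamental forms are: ⟨f_u, f_u⟩ = 1, ⟨f_u, f_v⟩ = cos θ, ⟨f_v, f_v⟩ = 1; ⟨f_u, ν_u⟩ = 0, ⟨f_u, ν_v⟩ = ⟨f_v, ν_u⟩ = −sin θ, ⟨f_v, ν_v⟩ = 0; ⟨ν_u, ν_u⟩ = 1, ⟨ν_u, ν_v⟩ = −cos θ, ⟨ν_v, ν_v⟩ = 1. The singular set of f is Σ = {q : θ(q) ≡ 0 (mod π)}, and at every point of U∖Σ one has (II(∂_u,∂_u)II(∂_v,∂_v) − II(∂_u,∂_v)²)/(I(∂_u,∂_u)I(∂_v,∂_v) − I(∂_u,∂_v)²) = −1, i.e.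 by the Gauss equation in S³ the Gaussian curvature of the induced metric is identically 0 (f is a flat front in S³). -/
open scoped Matrix

noncomputable section

section Helpers

open Topology Set

lemma glue {X : Type*} [TopologicalSpace X] [SimplyConnectedSpace X] [LocallyPathConnectedSpace X]
    {G : Type*} [Group G] (R : X → Set X) (hR : ∀ i, IsOpen (R i)) (mem : ∀ i, i ∈ R i)
    (Φ : X → X → G)
    (h : ∀ i j, ∀ x ∈ R i ∩ R j, ∀ᶠ y in 𝓝 x, Φ i y * (Φ j y)⁻¹ = Φ i x * (Φ j x)⁻¹) :
    ∃ Ψ : X → G, ∀ i, ∀ x ∈ R i, ∀ᶠ y in 𝓝 x, Ψ y * (Φ i y)⁻¹ = Ψ x * (Φ i x)⁻¹ := by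
  let _ : TopologicalSpace G := ⊥
  have _ : DiscreteTopology G := ⟨rfl⟩
  let Z : FiberBundleCore X X G :=
    { baseSet := R
      isOpen_baseSet := hR
      indexAt := id
      mem_baseSet_at := mem
      coordChange := fun i j x g => g * (Φ i x * (Φ j x)⁻¹)
      coordChange_self := by intro i x _ v; simp
      continuousOn_coordChange := by
        rintro i j ⟨x, g⟩ ⟨hx, -⟩
        apply ContinuousAt.continuousWithinAt
        refine (continuousAt_const (y := g * (Φ i x * (Φ j x)⁻¹))).congr ?_
        rw [nhds_prod_eq, nhds_discrete G]
        have := (h i j x hx).prod_mk (show ∀ᶠ g' in pure g, g' = g from rfl)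
        filter_upwards [this] with p hp
        rw [hp.1, hp.2]
      coordChange_comp := by intro i j k x _ v; group }
  have cov : IsCoveringMap Z.proj := 
    IsCoveringMap.mk Z.proj (fun _ => G) (fun x => Z.localTriv x) mem
  obtain ⟨x0⟩ : Nonempty X := inferInstance
  obtain ⟨s, ⟨-, hs⟩, -⟩ := cov.existsUnique_continuousMap_lifts (ContinuousMap.id X) x0
    (⟨x0, (1 : G)⟩ : Z.TotalSpace) rfl
  have hs' : ∀ x, (s x).1 = x := fun x => congrFun hs x
  refine ⟨fun x => (Z.localTriv (s x).1 (s x)).2 * Φ x x, fun i x hx => ?_⟩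
  have key : ∀ y, (Z.localTriv (s y).1 (s y)).2 * Φ y y * (Φ i y)⁻¹ = (Z.localTriv i (s y)).2 := by
    intro y
    rw [FiberBundleCore.localTriv_apply, FiberBundleCore.localTriv_apply]
    have e : ∀ g : G, g * (Φ y y * (Φ y y)⁻¹) * Φ y y * (Φ i y)⁻¹ = g * (Φ y y * (Φ i y)⁻¹) := by
      intro g; group
    simp only [Z, hs', id]
    exact e _
  simp only [key]
  have hc : ContinuousAt (fun y => (Z.localTriv i (s y)).2) x := by
    have h1 : ContinuousAt (Z.localTriv i) (s x) := by
      apply (Z.localTriv i).continuousAt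
      rw [FiberBundleCore.mem_localTriv_source, hs']
      exact hx
    exact continuousAt_snd.comp (ContinuousAt.comp (f := s) h1 s.continuous.continuousAt)
  have := hc.eventually (show ∀ᶠ g in 𝓝 ((Z.localTriv i (s x)).2), g = (Z.localTriv i (s x)).2 by
    rw [nhds_discrete]; rfl)
  exact this

open Filter in
lemma ev_const {E F : Type*} [NormedAddCommGroup E] [NormedSpace ℝ E] [NormedAddCommGroup F]
    [NormedSpace ℝ F] {D : E → F} {x : E} (h : ∀ᶠ y in 𝓝 x, HasFDerivAt D (0 : E →L[ℝ] F) y) :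
    ∀ᶠ y in 𝓝 x, D y = D x := by
  obtain ⟨r, hr, hb⟩ := Metric.eventually_nhds_iff_ball.1 h
  filter_upwards [Metric.ball_mem_nhds x hr] with y hy
  refine (convex_ball x r).is_const_of_fderivWithin_eq_zero (𝕜 := ℝ) (f := D)
    (fun z hz => (hb z hz).differentiableAt.differentiableWithinAt) (fun z hz => ?_) hy
    (Metric.mem_ball_self hr)
  rw [fderivWithin_of_isOpen Metric.isOpen_ball hz, (hb z hz).fderiv]

lemma frame_local {𝔸 : Type*} [NormedDivisionRing 𝔸] [NormedAlgebra ℝ 𝔸] [CompleteSpace 𝔸]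
    (U : Set (Fin 2 → ℝ)) (hU : IsOpen U) (k j : Fin 2) (hjk : j ≠ k)
    (h : (Fin 2 → ℝ) → 𝔸) (hh : ContDiffOn ℝ (⊤ : ℕ∞) h U)
    (h0 : ∀ q ∈ U, fderiv ℝ h q (Pi.single j 1) = 0) (p : Fin 2 → ℝ) (hp : p ∈ U) :
    ∃ r > 0, ∃ Φ : (Fin 2 → ℝ) → 𝔸, ∀ x ∈ Metric.ball p r, Φ x ≠ 0 ∧
      HasFDerivAt Φ ((ContinuousLinearMap.proj (R := ℝ) (φ := fun _ : Fin 2 => ℝ) k).smulRight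
        (Φ x * h x)) x := by
  have hvec : ContDiffAt ℝ 1 (fun z : ℝ × 𝔸 => ((1 : ℝ), z.2 * h (Function.update p k z.1)))
      (p k, 1) := by
    have h1 : ContDiffAt ℝ 1 h p :=
      ((hh.contDiffAt (hU.mem_nhds hp)).of_le (by exact_mod_cast le_top))
    have h2 : ContDiff ℝ 1 (fun z : ℝ × 𝔸 => Function.update p k z.1) := 
      (contDiff_update 1 p k).comp contDiff_fst
    have h3 : ContDiffAt ℝ 1 (fun z : ℝ × 𝔸 => h (Function.update p k z.1)) (p k, 1) := by
      refine ContDiffAt.comp (p k, (1 : 𝔸)) (g := h) ?_ h2.contDiffAt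
      simpa using h1
    exact contDiffAt_const.prodMk (contDiffAt_snd.mul h3)
  obtain ⟨α, hα0, ε, hε, hα⟩ :=
    hvec.exists_forall_mem_closedBall_exists_eq_forall_mem_Ioo_hasDerivAt₀ (p k)
  have hfst : ∀ t ∈ Ioo (p k - ε) (p k + ε), (α t).1 = t := by
    have hd : ∀ t ∈ Ioo (p k - ε) (p k + ε), HasDerivAt (fun t => (α t).1 - t) 0 t := by
      intro t ht
      have e : HasDerivAt (fun t => (α t).1) 1 t :=
        (ContinuousLinearMap.fst ℝ ℝ 𝔸).hasFDerivAt.comp_hasDerivAt t (hα t ht)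
      simpa using e.fun_sub (hasDerivAt_id' t)
    intro t ht
    have := (convex_Ioo (p k - ε) (p k + ε)).is_const_of_fderivWithin_eq_zero (𝕜 := ℝ)
      (f := fun t => (α t).1 - t)
      (fun z hz => (hd z hz).differentiableAt.differentiableWithinAt) (fun z hz => by
        rw [fderivWithin_of_isOpen isOpen_Ioo hz, (hd z hz).hasFDerivAt.fderiv]
        ext; simp) ht (show p k ∈ _ by constructor <;> linarith)
    simp only [hα0, sub_self] at this
    linarith
  have hne : ∀ᶠ t in 𝓝 (p k), (α t).2 ≠ 0 := by
    have hc : ContinuousAt (fun t => (α t).2) (p k) :=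
      continuousAt_snd.comp (hα (p k) (by constructor <;> linarith)).continuousAt
    exact hc.eventually_ne (by simp [hα0])
  obtain ⟨r1, hr1, hb1⟩ := Metric.eventually_nhds_iff_ball.1 hne
  obtain ⟨r2, hr2, hb2⟩ := Metric.isOpen_iff.1 hU p hp
  refine ⟨min ε (min r1 r2), by positivity, fun x => (α (x k)).2, fun x hx => ?_⟩
  rw [Metric.mem_ball, lt_min_iff, lt_min_iff] at hx
  obtain ⟨hxε, hx1, hx2⟩ := hx
  have hk := dist_le_pi_dist x p k
  refine ⟨hb1 _ (by rw [Metric.mem_ball]; linarith), ?_⟩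
  have hmem : x k ∈ Ioo (p k - ε) (p k + ε) := by
    rw [← Real.ball_eq_Ioo, Metric.mem_ball]; linarith
  have hhx : h (Function.update p k (x k)) = h x := by
    have hd : ∀ t ∈ Metric.ball (p j) r2, HasDerivAt (fun t => h (Function.update x j t)) 0 t := by
      intro t ht
      have hin : Function.update x j t ∈ U := by
        apply hb2
        rw [Metric.mem_ball, dist_pi_lt_iff hr2]
        intro b
        by_cases hb : b = j
        · subst hb; simpa using ht
        · rw [Function.update_of_ne hb]
          exact (dist_le_pi_dist x p b).trans_lt hx2
      have e1 := ((hh.contDiffAt (hU.mem_nhds hin)).differentiableAt (by simp)).hasFDerivAt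
      have e2 := e1.comp_hasDerivAt t (hasDerivAt_update x j t)
      rwa [h0 _ hin] at e2
    have := (convex_ball (p j) r2).is_const_of_fderivWithin_eq_zero (𝕜 := ℝ)
      (f := fun t => h (Function.update x j t))
      (fun z hz => (hd z hz).differentiableAt.differentiableWithinAt) (fun z hz => by
        rw [fderivWithin_of_isOpen Metric.isOpen_ball hz, (hd z hz).hasFDerivAt.fderiv]
        ext; simp) (Metric.mem_ball_self hr2)
        (show x j ∈ _ from (dist_le_pi_dist x p j).trans_lt hx2)
    simp only [Function.update_eq_self] at this
    rw [← this]
    congr 1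
    ext b
    by_cases hb : b = k
    · subst hb; simp [hjk.symm]
    · have : b = j := by omega
      subst this; simp [hjk]
  have hd : HasDerivAt (fun t => (α t).2)
      ((α (x k)).2 * h (Function.update p k (α (x k)).1)) (x k) :=
    (ContinuousLinearMap.snd ℝ ℝ 𝔸).hasFDerivAt.comp_hasDerivAt (x k) (hα _ hmem)
  simp only [hfst _ hmem, hhx] at hd
  have := hd.hasFDerivAt.comp x (ContinuousLinearMap.proj (R := ℝ) (φ := fun _ : Fin 2 => ℝ) k).hasFDerivAt
  refine this.congr_fderiv ?_
  ext v
  simp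

lemma frame_global {𝔸 : Type*} [NormedDivisionRing 𝔸] [NormedAlgebra ℝ 𝔸] [CompleteSpace 𝔸]
    (U : Set (Fin 2 → ℝ)) (hU : IsOpen U) (hsc : SimplyConnectedSpace U)
    (k j : Fin 2) (hjk : j ≠ k)
    (h : (Fin 2 → ℝ) → 𝔸) (hh : ContDiffOn ℝ (⊤ : ℕ∞) h U)
    (h0 : ∀ q ∈ U, fderiv ℝ h q (Pi.single j 1) = 0) :
    ∃ a : (Fin 2 → ℝ) → 𝔸, ∀ x ∈ U, a x ≠ 0 ∧
      HasFDerivAt a ((ContinuousLinearMap.proj (R := ℝ) (φ := fun _ : Fin 2 => ℝ) k).smulRight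
        (a x * h x)) x := by
  classical
  have : LocallyPathConnectedSpace U := hU.locallyPathConnectedSpace
  choose r hr Φ hΦ using fun p : U => frame_local U hU k j hjk h hh h0 p p.2
  let R : U → Set U := fun i => Subtype.val ⁻¹' Metric.ball (i : Fin 2 → ℝ) (r i)
  let Φ' : U → U → 𝔸ˣ := fun i x =>
    if hx : Φ i x ≠ 0 then Units.mk0 (Φ i x) hx else 1
  have hΦ' : ∀ i x, x ∈ R i → (Φ' i x : 𝔸) = Φ i x := by
    intro i x hx
    simp only [Φ', dif_pos (hΦ i x hx).1, Units.val_mk0]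
  have hRo : ∀ i, IsOpen (R i) := fun i => Metric.isOpen_ball.preimage continuous_subtype_val
  obtain ⟨Ψ, hΨ⟩ := glue R hRo
    (fun i => Metric.mem_ball_self (hr i)) Φ' (by
      rintro i j x ⟨hxi, hxj⟩
      have hD : ∀ᶠ y in 𝓝 (x : Fin 2 → ℝ),
          HasFDerivAt (fun y => Φ i y * (Φ j y)⁻¹) (0 : (Fin 2 → ℝ) →L[ℝ] 𝔸) y := by
        filter_upwards [Metric.isOpen_ball.mem_nhds hxi, Metric.isOpen_ball.mem_nhds hxj]
          with y hyi hyj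
        obtain ⟨ni, di⟩ := hΦ i y hyi
        obtain ⟨nj, dj⟩ := hΦ j y hyj
        have := di.mul' ((hasFDerivAt_inv' (𝕜 := ℝ) nj).comp y dj)
        refine this.congr_fderiv ?_
        ext v
        simp [mul_assoc, nj]
      have hc := ev_const hD
      have hc' := (continuous_subtype_val (p := (· ∈ U))).continuousAt.eventually hc
      filter_upwards [hc', (hRo i).mem_nhds hxi, (hRo j).mem_nhds hxj] with y hy hyi hyj
      ext
      simp only [Units.val_mul, Units.val_inv_eq_inv_val]
      rw [hΦ' i y hyi, hΦ' j y hyj, hΦ' i x hxi, hΦ' j x hxj]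
      exact hy)
  refine ⟨fun q => if hq : q ∈ U then (Ψ ⟨q, hq⟩ : 𝔸) else 0, fun x hx => ?_⟩
  refine ⟨by simp [hx], ?_⟩
  let i : U := ⟨x, hx⟩
  have hi : i ∈ R i := Metric.mem_ball_self (hr i)
  have hev := hΨ i i hi
  have hev2 : ∀ᶠ q in 𝓝 x, (fun q => if hq : q ∈ U then (Ψ ⟨q, hq⟩ : 𝔸) else 0) q =
      ((Ψ i * (Φ' i i)⁻¹ : 𝔸ˣ) : 𝔸) * Φ i q := by
    have hmap : 𝓝 x = Filter.map Subtype.val (𝓝 i) :=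
      (hU.isOpenEmbedding_subtypeVal.map_nhds_eq i).symm
    rw [hmap, Filter.eventually_map]
    filter_upwards [hev, (hRo i).mem_nhds hi] with y hy hyi
    rw [← hy, ← hΦ' i y hyi]
    simp
  have hd := ((hΦ i x hi).2.const_mul ((Ψ i * (Φ' i i)⁻¹ : 𝔸ˣ) : 𝔸))
  refine (hd.congr_of_eventuallyEq hev2).congr_fderiv ?_
  have hx' := hev2.self_of_nhds
  rw [hx']
  ext v
  simp [mul_assoc]

lemma frame_smooth {𝔸 : Type*} [NormedDivisionRing 𝔸] [NormedAlgebra ℝ 𝔸]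
    (U : Set (Fin 2 → ℝ)) (hU : IsOpen U) (k : Fin 2)
    (h : (Fin 2 → ℝ) → 𝔸) (hh : ContDiffOn ℝ (⊤ : ℕ∞) h U) (a : (Fin 2 → ℝ) → 𝔸)
    (ha : ∀ x ∈ U,
      HasFDerivAt a ((ContinuousLinearMap.proj (R := ℝ) (φ := fun _ : Fin 2 => ℝ) k).smulRight
        (a x * h x)) x) : ContDiffOn ℝ (⊤ : ℕ∞) a U := by
  rw [contDiffOn_infty]
  intro n
  induction n with
  | zero =>
    exact contDiffOn_zero.2 fun x hx => (ha x hx).continuousAt.continuousWithinAt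
  | succ n ih =>
    push_cast
    rw [contDiffOn_succ_iff_fderiv_of_isOpen hU]
    refine ⟨fun x hx => (ha x hx).differentiableAt.differentiableWithinAt, by simp, ?_⟩
    have h1 : ContDiffOn ℝ n (fun x => a x * h x) U :=
      ih.mul (hh.of_le (by exact_mod_cast le_top))
    have h2 := (((ContinuousLinearMap.smulRightL ℝ (Fin 2 → ℝ) 𝔸)
      (ContinuousLinearMap.proj (R := ℝ) (φ := fun _ : Fin 2 => ℝ) k)).contDiff (n := n)).comp_contDiffOn h1
    refine h2.congr fun x hx => ?_
    rw [(ha x hx).fderiv]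
    rfl

open scoped Quaternion

/-- Coordinates of a quaternion, as a continuous linear map. -/
def qL : ℍ[ℝ] →L[ℝ] (Fin 4 → ℝ) :=
  LinearMap.toContinuousLinearMap
    { toFun := fun x => ![x.re, x.imI, x.imJ, x.imK]
      map_add' := by intro x y; ext i; fin_cases i <;> simp
      map_smul' := by intro c x; ext i; fin_cases i <;> simp }

/-- Quaternion conjugation, as a continuous linear map. -/
def qS : ℍ[ℝ] →L[ℝ] ℍ[ℝ] :=
  LinearMap.toContinuousLinearMap
    { toFun := fun x => star x
      map_add' := by intro x y; exact star_add x y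
      map_smul' := by intro c x; exact Quaternion.star_smul c x }

lemma qS_apply (x : ℍ[ℝ]) : qS x = star x := rfl

lemma qL_dot (a s t b : ℍ[ℝ]) (ha : a * star a = 1) (hb : star b * b = 1) :
    qL (a * s * b) ⬝ᵥ qL (a * t * b) =
      s.re * t.re + s.imI * t.imI + s.imJ * t.imJ + s.imK * t.imK := by
  have ha' := congrArg (fun z : ℍ[ℝ] => z.re) ha
  have hb' := congrArg (fun z : ℍ[ℝ] => z.re) hb
  have h1 : ∀ x y : ℍ[ℝ], qL x ⬝ᵥ qL y = (x * star y).re := by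
    intro x y
    change ![x.re, x.imI, x.imJ, x.imK] ⬝ᵥ ![y.re, y.imI, y.imJ, y.imK] = _
    simp [dotProduct, Fin.sum_univ_four]
  have hb2 : b * star b = 1 := by
    rw [Quaternion.self_mul_star, ← Quaternion.star_mul_self, hb]
  rw [h1]
  have h2 : a * s * b * star (a * t * b) = a * (s * star t) * star a := by
    have : a * s * b * star (a * t * b) = a * s * (b * star b) * star t * star a := by
      simp [mul_assoc]
    rw [this, hb2]; simp [mul_assoc]
  have h3 : ∀ m : ℍ[ℝ], (a * m * star a).re = m.re * (a * star a).re := by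
    intro m; simp; ring
  rw [h2, h3, ha]
  simp

lemma frame_unit (U : Set (Fin 2 → ℝ)) (hU : IsOpen U) (hconn : IsConnected U)
    (hsc : SimplyConnectedSpace U) (k j : Fin 2) (hjk : j ≠ k)
    (h : (Fin 2 → ℝ) → ℍ[ℝ]) (hh : ContDiffOn ℝ (⊤ : ℕ∞) h U)
    (h0 : ∀ q ∈ U, fderiv ℝ h q (Pi.single j 1) = 0) (him : ∀ q, star (h q) = - h q) :
    ∃ a : (Fin 2 → ℝ) → ℍ[ℝ], ContDiffOn ℝ (⊤ : ℕ∞) a U ∧ ∀ x ∈ U, a x * star (a x) = 1 ∧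
      HasFDerivAt a ((ContinuousLinearMap.proj (R := ℝ) (φ := fun _ : Fin 2 => ℝ) k).smulRight
        (a x * h x)) x := by
  obtain ⟨a, ha⟩ := frame_global U hU hsc k j hjk h hh h0
  obtain ⟨p, hp⟩ := hconn.nonempty
  have hd : ∀ x ∈ U, HasFDerivAt (fun x => a x * star (a x)) (0 : (Fin 2 → ℝ) →L[ℝ] ℍ[ℝ]) x := by
    intro x hx
    have d1 := (ha x hx).2
    have d2 : HasFDerivAt (fun x => star (a x)) _ x :=
      (qS.hasFDerivAt).comp x d1
    refine (d1.mul' d2).congr_fderiv ?_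
    ext1 v
    simp [him, mul_assoc, qS_apply]
  have hconst : ∀ x ∈ U, a x * star (a x) = a p * star (a p) := fun x hx =>
    hU.is_const_of_fderiv_eq_zero (𝕜 := ℝ) (f := fun x => a x * star (a x)) hconn.isPreconnected
      (fun y hy => (hd y hy).differentiableAt.differentiableWithinAt)
      (fun y hy => (hd y hy).fderiv) hx hp
  have hpos : 0 < ‖a p‖ := norm_pos_iff.2 (ha p hp).1
  have hD : ∀ x ∈ U, HasFDerivAt (fun x => ‖a p‖⁻¹ • a x)
      ((ContinuousLinearMap.proj (R := ℝ) (φ := fun _ : Fin 2 => ℝ) k).smulRight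
        ((‖a p‖⁻¹ • a x) * h x)) x := by
    intro x hx
    refine ((ha x hx).2.const_smul ‖a p‖⁻¹).congr_fderiv ?_
    ext1 v
    simp
    rw [smul_comm]
  refine ⟨fun x => ‖a p‖⁻¹ • a x, frame_smooth U hU k h hh _ hD, fun x hx => ⟨?_, hD x hx⟩⟩
  have e : a x * star (a x) = ((‖a p‖ * ‖a p‖ : ℝ) : ℍ[ℝ]) := by
    rw [hconst x hx, Quaternion.self_mul_star, Quaternion.normSq_eq_norm_mul_self]
  simp only [Quaternion.star_smul, smul_mul_smul_comm, e]
  rw [← Quaternion.coe_smul, smul_eq_mul]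
  have : ‖a p‖⁻¹ * ‖a p‖⁻¹ * (‖a p‖ * ‖a p‖) = 1 := by field_simp
  rw [this]; rfl

lemma split_theta (U : Set (Fin 2 → ℝ)) (hU : IsOpen U) (hsc : SimplyConnectedSpace U)
    (θ : (Fin 2 → ℝ) → ℝ) (hθ : ContDiffOn ℝ (⊤ : ℕ∞) θ U)
    (hlinear : ∀ q ∈ U, pdr 0 (pdr 1 θ) q = 0) :
    ∃ A B : (Fin 2 → ℝ) → ℝ, ContDiffOn ℝ (⊤ : ℕ∞) A U ∧ ContDiffOn ℝ (⊤ : ℕ∞) B U ∧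
      (∀ q ∈ U, fderiv ℝ A q (Pi.single 1 1) = 0) ∧ (∀ q ∈ U, fderiv ℝ B q (Pi.single 0 1) = 0) ∧
      ∀ q, A q + B q = θ q := by
  have hsm : ContDiffOn ℝ (⊤ : ℕ∞) (pdr 1 θ) U := by
    have := hθ.fderiv_of_isOpen (m := (⊤ : ℕ∞)) hU (by simp)
    exact this.clm_apply contDiffOn_const
  obtain ⟨b, hb⟩ := frame_global U hU hsc 1 0 (by simp) (pdr 1 θ) hsm hlinear
  have hbs := frame_smooth U hU 1 _ hsm b fun x hx => (hb x hx).2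
  have hB : ContDiffOn ℝ (⊤ : ℕ∞) (fun q => Real.log (b q)) U := hbs.log fun x hx => (hb x hx).1
  have hdB : ∀ q ∈ U, HasFDerivAt (fun q => Real.log (b q))
      ((ContinuousLinearMap.proj (R := ℝ) (φ := fun _ : Fin 2 => ℝ) 1).smulRight (pdr 1 θ q)) q := by
    intro q hq
    have hn := (hb q hq).1
    refine ((hb q hq).2.log hn).congr_fderiv ?_
    ext1 v
    simp
    field_simp
  refine ⟨fun q => θ q - Real.log (b q), fun q => Real.log (b q), hθ.sub hB, hB, ?_, ?_, ?_⟩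
  · intro q hq
    have hdθ := ((hθ.contDiffAt (hU.mem_nhds hq)).differentiableAt (by simp)).hasFDerivAt
    rw [(hdθ.fun_sub (hdB q hq)).fderiv]
    simp [pdr]
  · intro q hq
    rw [(hdB q hq).fderiv]
    simp
  · intro q; ring

/-- the horizontal unit imaginary quaternion of angle `t`. -/
def qe (t : ℝ) : ℍ[ℝ] := Real.cos t • (⟨0, 1, 0, 0⟩ : ℍ[ℝ]) + Real.sin t • (⟨0, 0, 1, 0⟩ : ℍ[ℝ])

/-- minus the third imaginary unit. -/
def qk : ℍ[ℝ] := ⟨0, 0, 0, -1⟩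

lemma qe_re (t : ℝ) : (qe t).re = 0 := by simp [qe]
lemma qe_imI (t : ℝ) : (qe t).imI = Real.cos t := by simp [qe]
lemma qe_imJ (t : ℝ) : (qe t).imJ = Real.sin t := by simp [qe]
lemma qe_imK (t : ℝ) : (qe t).imK = 0 := by simp [qe]
lemma qk_re : qk.re = 0 := rfl
lemma qk_imI : qk.imI = 0 := rfl
lemma qk_imJ : qk.imJ = 0 := rfl
lemma qk_imK : qk.imK = -1 := rfl

lemma qe_contDiff : ContDiff ℝ (⊤ : ℕ∞) qe :=
  (Real.contDiff_cos.smul contDiff_const).add (Real.contDiff_sin.smul contDiff_const)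

lemma qe_star (t : ℝ) : star (qe t) = - qe t := by
  ext <;> simp [qe_re, qe_imI, qe_imJ, qe_imK]

lemma qe_unit_frame (U : Set (Fin 2 → ℝ)) (hU : IsOpen U) (hconn : IsConnected U)
    (hsc : SimplyConnectedSpace U) (k j : Fin 2) (hjk : j ≠ k)
    (A : (Fin 2 → ℝ) → ℝ) (hA : ContDiffOn ℝ (⊤ : ℕ∞) A U)
    (h0 : ∀ q ∈ U, fderiv ℝ A q (Pi.single j 1) = 0) :
    ∃ a : (Fin 2 → ℝ) → ℍ[ℝ], ContDiffOn ℝ (⊤ : ℕ∞) a U ∧ ∀ x ∈ U, a x * star (a x) = 1 ∧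
      HasFDerivAt a ((ContinuousLinearMap.proj (R := ℝ) (φ := fun _ : Fin 2 => ℝ) k).smulRight
        (a x * qe (A x))) x := by
  refine frame_unit U hU hconn hsc k j hjk (fun q => qe (A q)) (qe_contDiff.comp_contDiffOn hA)
    (fun q hq => ?_) fun q => qe_star _
  have hdA := ((hA.contDiffAt (hU.mem_nhds hq)).differentiableAt (by simp)).hasFDerivAt
  have hde := (qe_contDiff.contDiffAt (x := A q)).differentiableAt (by simp) |>.hasFDerivAt
  have := (hde.comp q hdA).fderiv
  change fderiv ℝ (qe ∘ A) q _ = 0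
  rw [this]
  simp [h0 q hq]

end Helpers

/-- Realization of flat fronts in `S³ ⊂ ℝ⁴` from solutions of `θ_{uv} = 0`:
there is a front `(f, ν)` in the unit sphere with
`I = du² + 2 cos θ du dv + dv²`, `II = 2 sin θ du dv`, `III = du² − 2 cos θ du dv + dv²`;
its singular set is `{θ ≡ 0 (mod π)}` and its extrinsic curvature is `−1` at regular
points, i.e. the Gaussian curvature of the induced metric is identically `0`. -/
theorem flat_front_sphere_realization (U : Set (Fin 2 → ℝ)) (hU : IsOpen U)
    (hconn : IsConnected U) (hsc : SimplyConnectedSpace U)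
    (θ : (Fin 2 → ℝ) → ℝ) (hθ : ContDiffOn ℝ (⊤ : ℕ∞) θ U)
    (hlinear : ∀ q ∈ U, pdr 0 (pdr 1 θ) q = 0) :
    ∃ f ν : (Fin 2 → ℝ) → (Fin 4 → ℝ),
      ContDiffOn ℝ (⊤ : ℕ∞) f U ∧ ContDiffOn ℝ (⊤ : ℕ∞) ν U ∧
      (∀ q ∈ U, f q ⬝ᵥ f q = 1) ∧
      (∀ q ∈ U, ν q ⬝ᵥ ν q = 1) ∧
      (∀ q ∈ U, f q ⬝ᵥ ν q = 0) ∧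
      (∀ q ∈ U, ∀ k : Fin 2, pd k f q ⬝ᵥ ν q = 0) ∧
      (∀ q ∈ U, ∀ X : Fin 2 → ℝ, fderiv ℝ f q X = 0 → fderiv ℝ ν q X = 0 → X = 0) ∧
      (∀ q ∈ U,
        pd 0 f q ⬝ᵥ pd 0 f q = 1 ∧
        pd 0 f q ⬝ᵥ pd 1 f q = Real.cos (θ q) ∧
        pd 1 f q ⬝ᵥ pd 1 f q = 1 ∧
        pd 0 f q ⬝ᵥ pd 0 ν q = 0 ∧
        pd 0 f q ⬝ᵥ pd 1 ν q = -Real.sin (θ q) ∧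
        pd 1 f q ⬝ᵥ pd 0 ν q = -Real.sin (θ q) ∧
        pd 1 f q ⬝ᵥ pd 1 ν q = 0 ∧
        pd 0 ν q ⬝ᵥ pd 0 ν q = 1 ∧
        pd 0 ν q ⬝ᵥ pd 1 ν q = -Real.cos (θ q) ∧
        pd 1 ν q ⬝ᵥ pd 1 ν q = 1) ∧
      (∀ q ∈ U,
        ((∃ X : Fin 2 → ℝ, X ≠ 0 ∧ fderiv ℝ f q X = 0) ↔ ∃ n : ℤ, θ q = n * Real.pi)) ∧
      (∀ q ∈ U, (∀ n : ℤ, θ q ≠ n * Real.pi) →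
        ((-(pd 0 f q ⬝ᵥ pd 0 ν q)) * (-(pd 1 f q ⬝ᵥ pd 1 ν q))
            - (-(pd 0 f q ⬝ᵥ pd 1 ν q)) ^ 2) /
          ((pd 0 f q ⬝ᵥ pd 0 f q) * (pd 1 f q ⬝ᵥ pd 1 f q)
            - (pd 0 f q ⬝ᵥ pd 1 f q) ^ 2) = -1) := by
  obtain ⟨A, B, hA, hB, hA0, hB0, hAB⟩ := split_theta U hU hsc θ hθ hlinear
  obtain ⟨a, has, ha⟩ := qe_unit_frame U hU hconn hsc 0 1 (by simp) A hA hA0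
  obtain ⟨c, hcs, hc⟩ := qe_unit_frame U hU hconn hsc 1 0 (by simp)
    (fun q => Real.pi - B q) (contDiffOn_const.sub hB) (fun q hq => by
      rw [fderiv_const_sub]; simp [hB0 q hq])
  have hstar : ContDiff ℝ (⊤ : ℕ∞) (fun x : Quaternion ℝ => star x) :=
    qS.contDiff
  have hbs : ContDiffOn ℝ (⊤ : ℕ∞) (fun q => star (c q)) U := hstar.comp_contDiffOn hcs
  -- the derivative of `a m b` for constant `m`
  have hder : ∀ m : Quaternion ℝ, ∀ q ∈ U, ∀ X : Fin 2 → ℝ,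
      fderiv ℝ (fun q => qL (a q * m * star (c q))) q X =
        X 0 • qL (a q * (qe (A q) * m) * star (c q)) +
        X 1 • qL (a q * (m * star (qe (Real.pi - B q))) * star (c q)) := by
    intro m q hq X
    have d1 := (ha q hq).2
    have d2 : HasFDerivAt (fun x => star (c x)) _ q :=
      (qS.hasFDerivAt).comp q (hc q hq).2
    have d3 := qL.hasFDerivAt.comp q ((d1.mul_const' m).mul' d2)
    have d4 : HasFDerivAt (fun q => qL (a q * m * star (c q))) _ q := d3
    rw [d4.fderiv]
    simp [mul_assoc, add_comm, qS_apply]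
  have hsm : ∀ m : Quaternion ℝ, ContDiffOn ℝ (⊤ : ℕ∞) (fun q => qL (a q * m * star (c q))) U :=
    fun m => qL.contDiff.comp_contDiffOn ((has.mul contDiffOn_const).mul hbs)
  obtain ⟨f, hf⟩ : ∃ f, f = fun q => qL (a q * 1 * star (c q)) := ⟨_, rfl⟩
  obtain ⟨ν, hν⟩ : ∃ ν, ν = fun q => qL (a q * qk * star (c q)) := ⟨_, rfl⟩
  have hlin : ∀ g : (Fin 2 → ℝ) → (Fin 4 → ℝ), ∀ q, ∀ X : Fin 2 → ℝ,
      fderiv ℝ g q X = X 0 • pd 0 g q + X 1 • pd 1 g q := by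
    intro g q X
    have : X = X 0 • Pi.single 0 1 + X 1 • Pi.single 1 1 := by
      ext i; fin_cases i <;> simp
    conv_lhs => rw [this]
    rw [map_add, map_smul, map_smul]; rfl
  have hdot : ∀ q ∈ U, ∀ s t : Quaternion ℝ, qL (a q * s * star (c q)) ⬝ᵥ qL (a q * t * star (c q)) =
      s.re * t.re + s.imI * t.imI + s.imJ * t.imJ + s.imK * t.imK := by
    intro q hq s t
    exact qL_dot _ _ _ _ (ha q hq).1 (by rw [star_star]; exact (hc q hq).1)
  have hf0 : ∀ q ∈ U, pd 0 f q = qL (a q * (qe (A q) * 1) * star (c q)) := by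
    intro q hq; rw [hf, pd, hder _ q hq]; simp
  have hf1 : ∀ q ∈ U, pd 1 f q = qL (a q * (1 * star (qe (Real.pi - B q))) * star (c q)) := by
    intro q hq; rw [hf, pd, hder _ q hq]; simp
  have hν0 : ∀ q ∈ U, pd 0 ν q = qL (a q * (qe (A q) * qk) * star (c q)) := by
    intro q hq; rw [hν, pd, hder _ q hq]; simp
  have hν1 : ∀ q ∈ U, pd 1 ν q =
      qL (a q * (qk * star (qe (Real.pi - B q))) * star (c q)) := by
    intro q hq; rw [hν, pd, hder _ q hq]; simp
  have table : ∀ q ∈ U,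
        pd 0 f q ⬝ᵥ pd 0 f q = 1 ∧
        pd 0 f q ⬝ᵥ pd 1 f q = Real.cos (θ q) ∧
        pd 1 f q ⬝ᵥ pd 1 f q = 1 ∧
        pd 0 f q ⬝ᵥ pd 0 ν q = 0 ∧
        pd 0 f q ⬝ᵥ pd 1 ν q = -Real.sin (θ q) ∧
        pd 1 f q ⬝ᵥ pd 0 ν q = -Real.sin (θ q) ∧
        pd 1 f q ⬝ᵥ pd 1 ν q = 0 ∧
        pd 0 ν q ⬝ᵥ pd 0 ν q = 1 ∧
        pd 0 ν q ⬝ᵥ pd 1 ν q = -Real.cos (θ q) ∧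
        pd 1 ν q ⬝ᵥ pd 1 ν q = 1 := by
    intro q hq
    have cA := Real.sin_sq_add_cos_sq (A q)
    have cB := Real.sin_sq_add_cos_sq (B q)
    rw [hf0 q hq, hf1 q hq, hν0 q hq, hν1 q hq, ← hAB q, Real.cos_add, Real.sin_add]
    simp only [hdot q hq]
    refine ⟨?_, ?_, ?_, ?_, ?_, ?_, ?_, ?_, ?_, ?_⟩ <;>
      simp [qe_re, qe_imI, qe_imJ, qe_imK, qk_re, qk_imI, qk_imJ, qk_imK, Real.cos_pi_sub, Real.sin_pi_sub] <;> linarith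
  have hdotν : ∀ q ∈ U, ∀ k : Fin 2, pd k f q ⬝ᵥ ν q = 0 := by
    intro q hq k
    fin_cases k
    · change pd 0 f q ⬝ᵥ ν q = 0
      rw [hf0 q hq, hν, hdot q hq]; simp [qe_re, qe_imI, qe_imJ, qe_imK, qk_re, qk_imI, qk_imJ, qk_imK]
    · change pd 1 f q ⬝ᵥ ν q = 0
      rw [hf1 q hq, hν, hdot q hq]; simp [qe_re, qe_imI, qe_imJ, qe_imK, qk_re, qk_imI, qk_imJ, qk_imK]
  have o1 : (1 : Quaternion ℝ).re = 1 := rfl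
  have o2 : (1 : Quaternion ℝ).imI = 0 := rfl
  have o3 : (1 : Quaternion ℝ).imJ = 0 := rfl
  have o4 : (1 : Quaternion ℝ).imK = 0 := rfl
  refine ⟨f, ν, hf ▸ hsm _, hν ▸ hsm _, ?_, ?_, ?_, hdotν, ?_, table, ?_, ?_⟩
  · intro q hq
    have e := hdot q hq 1 1
    rw [o1, o2, o3, o4] at e
    rw [hf]; simpa using e
  · intro q hq; rw [hν, hdot q hq]; simp [qe_re, qe_imI, qe_imJ, qe_imK, qk_re, qk_imI, qk_imJ, qk_imK]
  · intro q hq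
    have e := hdot q hq 1 qk
    rw [o1, o2, o3, o4, qk_re] at e
    rw [hf, hν]; simpa using e
  · intro q hq X h1 h2
    obtain ⟨t1, t2, t3, -, -, -, -, t8, t9, t10⟩ := table q hq
    rw [hlin] at h1 h2
    have e1 := congrArg (fun z => z ⬝ᵥ z) h1
    have e2 := congrArg (fun z => z ⬝ᵥ z) h2
    simp only [add_dotProduct, dotProduct_add, smul_dotProduct, dotProduct_smul,
      dotProduct_comm (pd 1 f q) (pd 0 f q), dotProduct_comm (pd 1 ν q) (pd 0 ν q),
      t1, t2, t3, t8, t9, t10, smul_eq_mul, zero_dotProduct] at e1 e2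
    have x0 : X 0 = 0 := by nlinarith [sq_nonneg (X 0), sq_nonneg (X 1)]
    have x1 : X 1 = 0 := by nlinarith [sq_nonneg (X 0), sq_nonneg (X 1)]
    ext i; fin_cases i
    · exact x0
    · exact x1
  · intro q hq
    obtain ⟨t1, t2, t3, -⟩ := table q hq
    have hcs := Real.sin_sq_add_cos_sq (θ q)
    constructor
    · rintro ⟨X, hX, h1⟩
      rw [hlin] at h1
      have e1 := congrArg (fun z => pd 0 f q ⬝ᵥ z) h1
      have e2 := congrArg (fun z => pd 1 f q ⬝ᵥ z) h1
      simp only [dotProduct_add, dotProduct_smul,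
        dotProduct_comm (pd 1 f q) (pd 0 f q), t1, t2, t3, smul_eq_mul, dotProduct_zero,
        mul_one] at e1 e2
      have hs : Real.sin (θ q) = 0 := by
        by_contra hs
        apply hX
        have hs2 : Real.sin (θ q) ^ 2 ≠ 0 := pow_ne_zero 2 hs
        have x0 : X 0 = 0 := by
          have : Real.sin (θ q) ^ 2 * X 0 = 0 := by
            linear_combination e1 - Real.cos (θ q) * e2 + X 0 * hcs
          exact (mul_eq_zero.1 this).resolve_left hs2
        have x1 : X 1 = 0 := by
          have : Real.sin (θ q) ^ 2 * X 1 = 0 := by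
            linear_combination e2 - Real.cos (θ q) * e1 + X 1 * hcs
          exact (mul_eq_zero.1 this).resolve_left hs2
        ext i; fin_cases i
        · exact x0
        · exact x1
      obtain ⟨n, hn⟩ := Real.sin_eq_zero_iff.1 hs
      exact ⟨n, hn.symm⟩
    · rintro ⟨n, hn⟩
      have hs : Real.sin (θ q) = 0 := Real.sin_eq_zero_iff.2 ⟨n, hn.symm⟩
      refine ⟨![-Real.cos (θ q), 1], fun h => by simpa using congrFun h 1, ?_⟩
      rw [hlin, ← dotProduct_self_eq_zero]
      simp only [add_dotProduct, dotProduct_add, smul_dotProduct, dotProduct_smul,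
        dotProduct_comm (pd 1 f q) (pd 0 f q), t1, t2, t3, smul_eq_mul]
      simp
      rw [hs] at hcs
      linarith
  · intro q hq hn
    obtain ⟨t1, t2, t3, t4, t5, t6, t7, -⟩ := table q hq
    rw [t1, t2, t3, t4, t5, t7]
    have hs : Real.sin (θ q) ≠ 0 := by
      intro hs
      obtain ⟨n, h⟩ := Real.sin_eq_zero_iff.1 hs
      exact hn n h.symm
    have hcs := Real.sin_sq_add_cos_sq (θ q)
    have e : 1 * 1 - Real.cos (θ q) ^ 2 = Real.sin (θ q) ^ 2 := by linarith
    rw [e]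
    field_simp
    ring
end
end
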